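/- arXiv:0910.1575 — 2 statements merged into one kernel-verified Lean document; each statement's English description precedes it below -/
import Mathlib

section
/- Every finite simple graph with exactly 9 vertices and at most 20 edges is 2-apex. -/
/-- `H` is a minor of `G`: there are pairwise disjoint nonempty connected branch sets
in `G`, one for each vertex of `H`, with an edge of `G` between the branch sets of
any two vertices adjacent in `H`. -/
def SimpleGraph.IsMinor {W V : Type*} (H : SimpleGraph W) (G : SimpleGraph V) : Prop :=
  ∃ f : W → Set V,
    (∀ w, (f w).Nonempty) ∧
    (∀ w, (G.induce (f w)).Connected) ∧
    (Pairwise fun w₁ w₂ => Disjoint (f w₁) (f w₂)) ∧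
    ∀ ⦃w₁ w₂⦄, H.Adj w₁ w₂ → ∃ v₁ ∈ f w₁, ∃ v₂ ∈ f w₂, G.Adj v₁ v₂

/-- A graph is planar iff it has no `K₅` minor and no `K₃,₃` minor (Kuratowski–Wagner). -/
def SimpleGraph.IsPlanar {V : Type*} (G : SimpleGraph V) : Prop :=
  ¬ (⊤ : SimpleGraph (Fin 5)).IsMinor G ∧
  ¬ (completeBipartiteGraph (Fin 3) (Fin 3)).IsMinor G

/-- A graph is 2-apex if it becomes planar after deleting at most two vertices. -/
def SimpleGraph.TwoApex {V : Type*} (G : SimpleGraph V) : Prop :=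
  ∃ s : Set V, s.ncard ≤ 2 ∧ (G.induce sᶜ).IsPlanar

/-!
Adding edges, we may assume that there are exactly 20 of them. Each branch set of a `K₃,₃` minor
contains a vertex of degree at least three, and each branch set of a `K₅` minor contains either a
vertex of degree at least four or two vertices of degree three. So a graph with at most five
vertices of degree at least three and at most four of degree at least four is planar, and we look
for two vertices whose deletion leaves such a graph. If some vertex has degree at least six,
deleting it leaves 8 vertices and at most 14 edges. A vertex of degree at most three loses so many
of its edges when two of its neighbours are deleted that few vertices of large degree survive.
Otherwise five vertices have degree 4 and four have degree 5. Counting common neighbours, two of the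
five have two common neighbours, and we delete two vertices on or near the resulting 4-cycle.
-/

open Finset SimpleGraph

theorem card_add_card_add_card_le {α : Type*} [DecidableEq α] (s t r : Finset α) :
    #s + #t + #r ≤ #(s ∪ t ∪ r) + #(s ∩ t) + #(s ∩ r) + #(t ∩ r) := by
  have := card_union_add_card_inter (s ∪ t) r
  have := card_union_add_card_inter s t
  have := card_union_le (s ∩ r) (t ∩ r)
  rw [union_inter_distrib_right] at *
  omega

section NeighborCount

variable {V : Type*} [Fintype V] {G : SimpleGraph V} [DecidableRel G.Adj]

theorem card_degree_eq_four_add (hge : ∀ v, 3 ≤ G.degree v) (hle : ∀ v, G.degree v ≤ 5) :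
    #{v | G.degree v = 4} + 2 * #{v | G.degree v = 3} + ∑ v, G.degree v = 5 * Fintype.card V := by
  rw [card_filter, card_filter, mul_sum, ← sum_add_distrib, ← sum_add_distrib, mul_comm,
    ← smul_eq_mul, ← card_univ, ← sum_const]
  refine sum_congr rfl fun v _ ↦ ?_
  have := hge v
  have := hle v
  split_ifs <;> omega

theorem card_degree_eq_four (hV : Fintype.card V = 9) (hsum : ∑ v, G.degree v = 40)
    (hfour : ∀ v, 4 ≤ G.degree v) (hle : ∀ v, G.degree v ≤ 5) : #{v | G.degree v = 4} = 5 := by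
  have hcard := card_degree_eq_four_add (fun v ↦ (Nat.le_succ 3).trans (hfour v)) hle
  have hthree : ({v | G.degree v = 3} : Finset V) = ∅ :=
    filter_false_of_mem fun v _ ↦ ((Nat.lt_succ_self 3).trans_le (hfour v)).ne'
  rw [hthree, card_empty, hsum, hV] at hcard
  omega

theorem card_degree_eq_five (hV : Fintype.card V = 9) (hsum : ∑ v, G.degree v = 40)
    (hfour : ∀ v, 4 ≤ G.degree v) (hle : ∀ v, G.degree v ≤ 5) : #{v | G.degree v = 5} = 4 := by
  classical
  have hcompl : ({v | G.degree v = 4} : Finset V)ᶜ = ({v | G.degree v = 5} : Finset V) := by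
    ext v
    have := hfour v
    have := hle v
    simp only [mem_compl, mem_filter_univ]
    omega
  rw [← hcompl, card_compl, hV, card_degree_eq_four hV hsum hfour hle]

theorem card_neighborFinset_inter [DecidableEq V] (v : V) (s : Finset V) :
    #(G.neighborFinset v ∩ s) = ∑ x ∈ s, if G.Adj v x then 1 else 0 := by
  have : G.neighborFinset v ∩ s = s.filter (G.Adj v) := by
    ext x
    simp [and_comm]
  rw [this, card_filter]

theorem sum_card_neighborFinset_inter_comm [DecidableEq V] (s t : Finset V) :
    ∑ v ∈ s, #(G.neighborFinset v ∩ t) = ∑ v ∈ t, #(G.neighborFinset v ∩ s) := by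
  simp only [card_neighborFinset_inter]
  rw [sum_comm]
  simp only [G.adj_comm]

theorem sum_card_neighborFinset_inter [DecidableEq V] (s : Finset V) :
    ∑ v, #(G.neighborFinset v ∩ s) = ∑ u ∈ s, G.degree u := by
  simp only [sum_card_neighborFinset_inter_comm univ s, inter_univ, card_neighborFinset_eq_degree]

theorem card_neighborFinset_inter_compl_add_sum [DecidableEq V] (v : V) {l : List V}
    (hl : l.Nodup) :
    #(G.neighborFinset v ∩ l.toFinsetᶜ) + (l.map fun x ↦ if G.Adj v x then 1 else 0).sum =
      G.degree v := by
  rw [← List.sum_toFinset _ hl, ← card_neighborFinset_inter, ← sdiff_eq_inter_compl,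
    card_sdiff_add_card_inter, card_neighborFinset_eq_degree]

theorem sum_map_adj_eq_degree (v : V) {l : List V} (hl : l.Nodup) (hV : Fintype.card V = l.length) :
    (l.map fun x ↦ if G.Adj v x then 1 else 0).sum = G.degree v := by
  classical
  have huniv : l.toFinset = univ := by
    rw [← card_eq_iff_eq_univ, List.toFinset_card_of_nodup hl, hV]
  rw [← card_neighborFinset_inter_compl_add_sum v hl, huniv, compl_univ, inter_empty, card_empty,
    zero_add]

theorem sum_card_neighborFinset_inter_neighborFinset [DecidableEq V] (s : Finset V) :
    ∑ z ∈ s.offDiag, #(G.neighborFinset z.1 ∩ G.neighborFinset z.2) =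
      ∑ v, #(G.neighborFinset v ∩ s).offDiag := by
  simp only [card_eq_sum_ones]
  rw [sum_comm' (t' := univ) (s' := fun v ↦ (G.neighborFinset v ∩ s).offDiag)]
  simp only [mem_offDiag, mem_inter, mem_neighborFinset, mem_univ, G.adj_comm]
  grind [SimpleGraph.adj_comm]

theorem exists_one_lt_card_inter [DecidableEq V] {s : Finset V}
    (hs : #s.offDiag + 6 * Fintype.card V < 4 * ∑ w ∈ s, G.degree w) :
    ∃ p ∈ s, ∃ q ∈ s, p ≠ q ∧ 1 < #(G.neighborFinset p ∩ G.neighborFinset q) := by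
  by_contra! h
  have hle : ∑ z ∈ s.offDiag, #(G.neighborFinset z.1 ∩ G.neighborFinset z.2) ≤ #s.offDiag := by
    rw [card_eq_sum_ones]
    refine sum_le_sum fun z hz ↦ ?_
    obtain ⟨hz₁, hz₂, hz⟩ := mem_offDiag.1 hz
    exact h _ hz₁ _ hz₂ hz
  -- `n (n - 1) ≥ 4 n - 6` because `(n - 2) (n - 3) ≥ 0` for every natural number `n`.
  have hoffDiag (t : Finset V) : 4 * #t ≤ #t.offDiag + 6 := by
    have : 5 * #t ≤ #t * #t + 6 := by
      obtain ht | ht := le_total #t 2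
      · interval_cases #t <;> norm_num
      · obtain ⟨k, hk⟩ := Nat.exists_eq_add_of_le ht
        rw [hk]
        have := Nat.le_mul_self k
        linarith
    rw [offDiag_card]
    omega
  have hsum : ∑ v, 4 * #(G.neighborFinset v ∩ s) ≤ ∑ v, (#(G.neighborFinset v ∩ s).offDiag + 6) :=
    sum_le_sum fun v _ ↦ hoffDiag _
  rw [← mul_sum, sum_card_neighborFinset_inter, sum_add_distrib,
    ← sum_card_neighborFinset_inter_neighborFinset, sum_const, card_univ, smul_eq_mul] at hsum
  omega

theorem isClique_of_card_neighborFinset_inter [DecidableEq V] {s : Finset V}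
    (h : ∀ v ∈ s, #s ≤ #(G.neighborFinset v ∩ s) + 1) : G.IsClique s := by
  intro v hv w hw hvw
  have hsub : G.neighborFinset v ∩ s ⊆ s.erase v := fun x hx ↦ by
    rw [mem_inter, mem_neighborFinset] at hx
    exact mem_erase.2 ⟨hx.1.ne', hx.2⟩
  have heq := eq_of_subset_of_card_le hsub (by rw [card_erase_of_mem hv]; have := h v hv; omega)
  have hw' : w ∈ G.neighborFinset v ∩ s := heq ▸ mem_erase.2 ⟨hvw.symm, hw⟩
  exact (mem_neighborFinset _ _ _).1 (mem_inter.1 hw').1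

theorem isClique_of_forall_card_inter_le_one [DecidableEq V] {s t : Finset V} (hst : #(s ∪ t)ᶜ ≤ 1)
    (hcard : #t ≤ #s) (hdeg : ∀ z ∈ s, #s + 1 ≤ G.degree z)
    (hone : ∀ w ∈ t, #(G.neighborFinset w ∩ s) ≤ 1) : G.IsClique s := by
  have hsplit {z} (hz : z ∈ s) :
      #s ≤ #(G.neighborFinset z ∩ s) + #(G.neighborFinset z ∩ t) := by
    have hcompl : #(G.neighborFinset z \ (s ∪ t)) ≤ 1 :=
      (card_le_card fun x hx ↦ mem_compl.2 (mem_sdiff.1 hx).2).trans hst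
    have hunion := card_union_le (G.neighborFinset z ∩ s) (G.neighborFinset z ∩ t)
    rw [← inter_union_distrib_left] at hunion
    have := card_inter_add_card_sdiff (G.neighborFinset z) (s ∪ t)
    rw [card_neighborFinset_eq_degree] at this
    have := hdeg z hz
    omega
  have hpos {z} (hz : z ∈ s) : 1 ≤ #(G.neighborFinset z ∩ t) := by
    have hsub : G.neighborFinset z ∩ s ⊂ s :=
      ⟨inter_subset_right, fun h ↦ by simpa using h hz⟩
    have := card_lt_card hsub
    have := hsplit hz
    omega
  have hsum : ∑ z ∈ s, #(G.neighborFinset z ∩ t) ≤ ∑ z ∈ s, 1 := by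
    rw [sum_card_neighborFinset_inter_comm, sum_const, smul_eq_mul, mul_one]
    exact (sum_le_card_nsmul _ _ _ hone).trans (by simpa using hcard)
  have heq := (sum_eq_sum_iff_of_le fun z hz ↦ hpos hz).1
    ((sum_le_sum fun z hz ↦ hpos hz).antisymm hsum)
  refine isClique_of_card_neighborFinset_inter fun z hz ↦ ?_
  rw [heq z hz]
  exact hsplit hz

end NeighborCount

section Minor

variable {W V V' : Type*} {H : SimpleGraph W} {G : SimpleGraph V} {G' : SimpleGraph V'}

theorem isMinor_of_injective_hom (φ : G →g G') (hφ : Function.Injective φ) (h : H.IsMinor G) :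
    H.IsMinor G' := by
  obtain ⟨f, hne, hconn, hdisj, hadj⟩ := h
  refine ⟨fun w ↦ φ '' f w, fun w ↦ (hne w).image φ, fun w ↦ ?_,
    fun a b hab ↦ (Set.disjoint_image_iff hφ).2 (hdisj hab), fun a b hab ↦ ?_⟩
  · let ψ : G.induce (f w) →g G'.induce (φ '' f w) :=
      { toFun := fun x ↦ ⟨φ x, x, x.2, rfl⟩
        map_rel' := fun h ↦ φ.map_adj h }
    refine (hconn w).map ψ ?_
    rintro ⟨_, x, hx, rfl⟩
    exact ⟨⟨x, hx⟩, rfl⟩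
  · obtain ⟨x, hx, y, hy, hxy⟩ := hadj hab
    exact ⟨φ x, ⟨x, hx, rfl⟩, φ y, ⟨y, hy, rfl⟩, φ.map_adj hxy⟩

theorem isPlanar_of_injective_hom (φ : G →g G') (hφ : Function.Injective φ) (h : G'.IsPlanar) :
    G.IsPlanar :=
  ⟨fun hm ↦ h.1 (isMinor_of_injective_hom φ hφ hm), fun hm ↦ h.2 (isMinor_of_injective_hom φ hφ hm)⟩

theorem twoApex_of_le {K L : SimpleGraph V} (hle : K ≤ L) (h : L.TwoApex) : K.TwoApex := by
  obtain ⟨s, hs, hplanar⟩ := h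
  exact ⟨s, hs, isPlanar_of_injective_hom (induceHom (.ofLE hle) fun _ h ↦ h)
    (fun _ _ h ↦ Subtype.ext (congrArg Subtype.val h)) hplanar⟩

end Minor

section DegreeCriterion

variable {W V : Type*} [Fintype W] [Fintype V]
  {H : SimpleGraph W} [DecidableRel H.Adj] {G : SimpleGraph V} [DecidableRel G.Adj]

theorem sum_degree_le_two_mul_card_add (s : Finset V) (hs : ∀ v ∈ s, G.degree v ≤ 3) :
    ∑ v ∈ s, G.degree v ≤ 2 * #s + #{v ∈ s | 3 ≤ G.degree v} := by
  rw [card_filter, card_eq_sum_ones, mul_sum, ← sum_add_distrib]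
  refine sum_le_sum fun v hv ↦ ?_
  have := hs v hv
  split_ifs <;> omega

theorem exists_three_le_degree {s : Finset V} {k : ℕ} (hk : 3 ≤ k)
    (hs : 2 * #s + k ≤ ∑ v ∈ s, G.degree v + 2) : ∃ v ∈ s, 3 ≤ G.degree v := by
  by_contra! h
  have := sum_degree_le_two_mul_card_add s fun v hv ↦ (h v hv).le
  rw [filter_false_of_mem fun v hv ↦ (h v hv).not_ge, card_empty] at this
  omega

theorem two_le_card_three_le_degree_add {s : Finset V} {k : ℕ} (hk : 4 ≤ k)
    (hs : 2 * #s + k ≤ ∑ v ∈ s, G.degree v + 2) :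
    2 ≤ #{v ∈ s | 3 ≤ G.degree v} + #{v ∈ s | 4 ≤ G.degree v} := by
  by_cases h : ∀ v ∈ s, G.degree v ≤ 3
  · have := sum_degree_le_two_mul_card_add s h
    omega
  · push Not at h
    obtain ⟨v, hv, hdv⟩ := h
    have h₃ : 0 < #{v ∈ s | 3 ≤ G.degree v} := card_pos.2 ⟨v, mem_filter.2 ⟨hv, by omega⟩⟩
    have h₄ : 0 < #{v ∈ s | 4 ≤ G.degree v} := card_pos.2 ⟨v, mem_filter.2 ⟨hv, by omega⟩⟩
    omega

theorem two_mul_card_le_sum_card_neighborFinset_inter [DecidableEq V] {s : Finset V}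
    (hs : (G.induce (s : Set V)).Connected) :
    2 * #s ≤ ∑ v ∈ s, #(G.neighborFinset v ∩ s) + 2 := by
  have hdegree (v : (s : Set V)) :
      (G.induce (s : Set V)).degree v = #(G.neighborFinset v ∩ s) := by
    have h := congrArg card (map_neighborFinset_induce (G := G) v)
    rw [card_map, card_neighborFinset_eq_degree, toFinset_coe] at h
    convert h
  have hsum : ∑ v ∈ s, #(G.neighborFinset v ∩ s) = 2 * #(G.induce (s : Set V)).edgeFinset := by
    rw [← sum_degrees_eq_twice_card_edges, ← sum_coe_sort s]
    exact sum_congr rfl fun v _ ↦ (hdegree v).symm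
  have hcard := hs.card_vert_le_card_edgeSet_add_one
  rw [Nat.card_eq_fintype_card, Nat.card_eq_fintype_card, ← edgeFinset_card] at hcard
  simp only [coe_sort_coe, Fintype.card_coe] at hcard
  omega

theorem degree_le_sum_card_neighborFinset_sdiff [DecidableEq V] {f : W → Finset V}
    (hdisj : Pairwise fun w₁ w₂ ↦ Disjoint (f w₁) (f w₂))
    (hadj : ∀ ⦃w₁ w₂⦄, H.Adj w₁ w₂ → ∃ v₁ ∈ f w₁, ∃ v₂ ∈ f w₂, G.Adj v₁ v₂) (w : W) :
    H.degree w ≤ ∑ v ∈ f w, #(G.neighborFinset v \ f w) := by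
  have hcard : #(H.neighborFinset w) ≤ #((f w).biUnion fun v ↦ G.neighborFinset v \ f w) := by
    refine card_le_card_of_forall_subsingleton (fun w' y ↦ y ∈ f w') (fun w' hw' ↦ ?_)
      fun y _ w₁ hw₁ w₂ hw₂ ↦ ?_
    · have hw := (mem_neighborFinset _ _ _).1 hw'
      obtain ⟨x, hx, y, hy, hxy⟩ := hadj hw
      refine ⟨y, mem_biUnion.2 ⟨x, hx, mem_sdiff.2 ⟨by simpa using hxy, ?_⟩⟩, hy⟩
      exact disjoint_right.1 (hdisj hw.ne) hy
    · by_contra hne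
      exact disjoint_left.1 (hdisj hne) hw₁.2 hw₂.2
  exact card_neighborFinset_eq_degree H w ▸ hcard.trans card_biUnion_le

theorem exists_branchSets (h : H.IsMinor G) :
    ∃ f : W → Finset V, (Pairwise fun w₁ w₂ ↦ Disjoint (f w₁) (f w₂)) ∧
      (∀ ⦃w₁ w₂⦄, H.Adj w₁ w₂ → ∃ v₁ ∈ f w₁, ∃ v₂ ∈ f w₂, G.Adj v₁ v₂) ∧
      (∀ w, (G.induce (f w : Set V)).Connected) ∧
      ∀ w, 2 * #(f w) + H.degree w ≤ ∑ v ∈ f w, G.degree v + 2 := by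
  classical
  obtain ⟨f, -, hconn, hdisj, hadj⟩ := h
  have hdisj' : Pairwise fun w₁ w₂ ↦ Disjoint (f w₁).toFinset (f w₂).toFinset :=
    fun w₁ w₂ hw ↦ Set.disjoint_toFinset.2 (hdisj hw)
  have hadj' : ∀ ⦃w₁ w₂⦄, H.Adj w₁ w₂ →
      ∃ v₁ ∈ (f w₁).toFinset, ∃ v₂ ∈ (f w₂).toFinset, G.Adj v₁ v₂ := by
    simpa only [Set.mem_toFinset] using hadj
  have hconn' (w) : (G.induce ((f w).toFinset : Set V)).Connected := by
    rw [Set.coe_toFinset]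
    exact hconn w
  refine ⟨fun w ↦ (f w).toFinset, hdisj', hadj', hconn', fun w ↦ ?_⟩
  have hinside := two_mul_card_le_sum_card_neighborFinset_inter (hconn' w)
  have houtside := degree_le_sum_card_neighborFinset_sdiff hdisj' hadj' w
  have hsplit : ∑ v ∈ (f w).toFinset, G.degree v =
      ∑ v ∈ (f w).toFinset, #(G.neighborFinset v ∩ (f w).toFinset) +
        ∑ v ∈ (f w).toFinset, #(G.neighborFinset v \ (f w).toFinset) := by
    rw [← sum_add_distrib]
    exact sum_congr rfl fun v _ ↦ by rw [card_inter_add_card_sdiff, card_neighborFinset_eq_degree]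
  dsimp only
  omega

theorem card_mul_le_sum_of_pairwise_disjoint {f : W → Finset V}
    (hdisj : Pairwise fun w₁ w₂ ↦ Disjoint (f w₁) (f w₂)) {g : V → ℕ} {c : ℕ}
    (hc : ∀ w, c ≤ ∑ v ∈ f w, g v) : Fintype.card W * c ≤ ∑ v, g v := by
  classical
  exact calc Fintype.card W * c = ∑ _w : W, c := by simp
      _ ≤ ∑ w, ∑ v ∈ f w, g v := sum_le_sum fun w _ ↦ hc w
      _ = ∑ v ∈ univ.biUnion f, g v := (sum_biUnion fun _ _ _ _ h ↦ hdisj h).symm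
      _ ≤ ∑ v, g v := sum_le_sum_of_subset (subset_univ _)

instance : DecidableRel (completeBipartiteGraph (Fin 3) (Fin 3)).Adj :=
  fun _ _ ↦ inferInstanceAs (Decidable (_ ∨ _))

theorem degree_completeBipartiteGraph_three (w : Fin 3 ⊕ Fin 3) :
    (completeBipartiteGraph (Fin 3) (Fin 3)).degree w = 3 := by
  revert w
  decide

theorem six_le_card_three_le_degree
    (h : (completeBipartiteGraph (Fin 3) (Fin 3)).IsMinor G) : 6 ≤ #{v | 3 ≤ G.degree v} := by
  classical
  obtain ⟨f, hdisj, -, -, hexcess⟩ := exists_branchSets h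
  rw [card_filter]
  refine card_mul_le_sum_of_pairwise_disjoint hdisj (c := 1) fun w ↦ ?_
  obtain ⟨v, hv, hdv⟩ :=
    exists_three_le_degree (degree_completeBipartiteGraph_three w).ge (hexcess w)
  rw [← card_filter]
  exact card_pos.2 ⟨v, mem_filter.2 ⟨hv, hdv⟩⟩

theorem ten_le_card_three_le_degree_add (h : (⊤ : SimpleGraph (Fin 5)).IsMinor G) :
    10 ≤ #{v | 3 ≤ G.degree v} + #{v | 4 ≤ G.degree v} := by
  classical
  obtain ⟨f, hdisj, -, -, hexcess⟩ := exists_branchSets h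
  rw [card_filter, card_filter, ← sum_add_distrib]
  refine card_mul_le_sum_of_pairwise_disjoint hdisj (c := 2) fun w ↦ ?_
  rw [sum_add_distrib, ← card_filter, ← card_filter]
  exact two_le_card_three_le_degree_add (by simp) (hexcess w)

theorem isPlanar_of_card_degree_le (h₃ : #{v | 3 ≤ G.degree v} ≤ 5)
    (h₄ : #{v | 4 ≤ G.degree v} ≤ 4) : G.IsPlanar := by
  classical
  exact ⟨fun h ↦ by have := ten_le_card_three_le_degree_add h; omega,
      fun h ↦ by have := six_le_card_three_le_degree h; omega⟩

theorem card_mul_le_sum_degree {k : ℕ} {T : Finset V} (hT : ∀ v ∉ T, G.degree v < k) :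
    k * #{v | k ≤ G.degree v} ≤ ∑ v ∈ T, G.degree v := by
  classical
  have hsub : ({v | k ≤ G.degree v} : Finset V) ⊆ T := fun v hv ↦ by
    by_contra h
    exact (hT v h).not_ge (mem_filter.1 hv).2
  rw [mul_comm]
  exact (card_nsmul_le_sum _ _ _ fun v hv ↦ (mem_filter.1 hv).2).trans (sum_le_sum_of_subset hsub)

theorem mul_card_le_sum_degree_add {k d : ℕ} (hle : ∀ v, G.degree v ≤ k)
    (hsum : k * Fintype.card V ≤ ∑ v, G.degree v + d) (T : Finset V) :
    k * #T ≤ ∑ v ∈ T, G.degree v + d := by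
  classical
  have hcompl : ∑ v ∈ Tᶜ, G.degree v ≤ #Tᶜ * k := sum_le_card_nsmul _ _ _ fun v _ ↦ hle v
  have := sum_add_sum_compl T fun v ↦ G.degree v
  rw [← card_add_card_compl T, mul_add] at hsum
  linarith

theorem isPlanar_of_sum_degree_lt {T : Finset V} (hT : #T ≤ 5) (hlow : ∀ v ∉ T, G.degree v ≤ 2)
    (hsum : ∑ v ∈ T, G.degree v < 20) : G.IsPlanar := by
  classical
  refine isPlanar_of_card_degree_le ?_ ?_
  · refine (card_le_card fun v hv ↦ ?_).trans hT
    by_contra h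
    have := hlow v h
    have := (mem_filter.1 hv).2
    omega
  · have := card_mul_le_sum_degree (k := 4) fun v hv ↦ (hlow v hv).trans_lt (by norm_num)
    omega

theorem isPlanar_of_sum_degree_le (hsum : ∑ v, G.degree v ≤ 17) : G.IsPlanar := by
  classical
  have h₃ := card_mul_le_sum_degree (G := G) (k := 3) (T := univ) (by simp)
  have h₄ := card_mul_le_sum_degree (G := G) (k := 4) (T := univ) (by simp)
  exact isPlanar_of_card_degree_le (by omega) (by omega)

end DegreeCriterion

section IndependentTriple

variable {W V : Type*} [Fintype W] [Fintype V]
  {H : SimpleGraph W} [DecidableRel H.Adj] {G : SimpleGraph V} [DecidableRel G.Adj]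

theorem degree_lt_degree_of_injective_hom (φ : H →g G) (hφ : Function.Injective φ) {w w' : W}
    (hH : ¬ H.Adj w w') (hG : G.Adj (φ w) (φ w')) : H.degree w < G.degree (φ w) := by
  classical
  have hnotMem : φ w' ∉ (H.neighborFinset w).map ⟨φ, hφ⟩ := fun h ↦ by
    obtain ⟨x, hx, hxw⟩ := mem_map.1 h
    exact hH (hφ hxw ▸ (mem_neighborFinset _ _ _).1 hx)
  have hsub : insert (φ w') ((H.neighborFinset w).map ⟨φ, hφ⟩) ⊆ G.neighborFinset (φ w) := by
    refine insert_subset (by simpa using hG) fun y hy ↦ ?_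
    obtain ⟨x, hx, rfl⟩ := mem_map.1 hy
    simpa using φ.map_adj ((mem_neighborFinset _ _ _).1 hx)
  have := card_le_card hsub
  rwa [card_insert_of_notMem hnotMem, card_map, card_neighborFinset_eq_degree,
    card_neighborFinset_eq_degree] at this

-- Six branch sets share six vertices of degree at least three, and no other vertex has a neighbour.
theorem exists_injective_hom_of_isMinor (hcard : #{v | 3 ≤ G.degree v} ≤ 6)
    (hdegree : ∀ v, G.degree v ≠ 0 → 3 ≤ G.degree v)
    (h : (completeBipartiteGraph (Fin 3) (Fin 3)).IsMinor G) :
    ∃ φ : completeBipartiteGraph (Fin 3) (Fin 3) →g G, Function.Injective φ := by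
  classical
  obtain ⟨f, hdisj, hadj, -, hexcess⟩ := exists_branchSets h
  have hmem (w) : ∃ v ∈ f w, 3 ≤ G.degree v :=
    exists_three_le_degree (degree_completeBipartiteGraph_three w).ge (hexcess w)
  choose b hb hdb using hmem
  have hunique {w w' x} (hx : x ∈ f w) (hx' : x ∈ f w') : w = w' := by
    by_contra hne
    exact disjoint_left.1 (hdisj hne) hx hx'
  have hinj : Function.Injective b := fun w w' hw ↦ hunique (hb w) (hw ▸ hb w')
  have himage : univ.image b = ({v | 3 ≤ G.degree v} : Finset V) := by
    refine eq_of_subset_of_card_le (fun v hv ↦ ?_) ?_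
    · obtain ⟨w, -, rfl⟩ := mem_image.1 hv
      exact mem_filter.2 ⟨mem_univ _, hdb w⟩
    · rw [card_image_of_injective _ hinj]
      exact hcard
  have heq {w x y} (hx : x ∈ f w) (hxy : G.Adj x y) : x = b w := by
    have hdx := hdegree x ((G.degree_pos_iff_exists_adj x).2 ⟨y, hxy⟩).ne'
    obtain ⟨w', -, rfl⟩ := mem_image.1 (himage ▸ mem_filter.2 ⟨mem_univ x, hdx⟩)
    rw [hunique hx (hb w')]
  refine ⟨⟨b, fun {w w'} hw ↦ ?_⟩, hinj⟩
  obtain ⟨x, hx, y, hy, hxy⟩ := hadj hw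
  rwa [← heq hx hxy, ← heq hy hxy.symm]

theorem exists_isIndepSet_of_not_isPlanar (h₃ : #{v | 3 ≤ G.degree v} ≤ 6)
    (h₄ : #{v | 4 ≤ G.degree v} ≤ 3) (hdegree : ∀ v, G.degree v ≠ 0 → 3 ≤ G.degree v)
    (h : ¬ G.IsPlanar) :
    ∃ A : Finset V, #A = 3 ∧ G.IsIndepSet (A : Set V) ∧ ∀ v ∈ A, G.degree v ≠ 0 := by
  classical
  have hK₅ : ¬ (⊤ : SimpleGraph (Fin 5)).IsMinor G := fun hm ↦ by
    have := ten_le_card_three_le_degree_add hm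
    omega
  obtain ⟨φ, hφ⟩ := exists_injective_hom_of_isMinor h₃ hdegree
    (by_contra fun hm ↦ h ⟨hK₅, hm⟩)
  have hfour {w w'} (hH : ¬ (completeBipartiteGraph (Fin 3) (Fin 3)).Adj w w')
      (hG : G.Adj (φ w) (φ w')) : φ w ∈ ({v | 4 ≤ G.degree v} : Finset V) :=
    mem_filter.2 ⟨mem_univ _, (degree_completeBipartiteGraph_three w).symm.trans_lt
      (degree_lt_degree_of_injective_hom φ hφ hH hG)⟩
  have hpos (w) : G.degree (φ w) ≠ 0 := by
    obtain ⟨w', hw'⟩ := ((completeBipartiteGraph (Fin 3) (Fin 3)).degree_pos_iff_exists_adj w).1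
      (by rw [degree_completeBipartiteGraph_three]; norm_num)
    exact ((G.degree_pos_iff_exists_adj _).2 ⟨_, φ.map_adj hw'⟩).ne'
  by_contra! hA
  have hedge (g : Fin 3 ↪ Fin 3 ⊕ Fin 3) : ∃ i j, i ≠ j ∧ G.Adj (φ (g i)) (φ (g j)) := by
    by_contra! hg
    obtain ⟨v, hv, hdv⟩ := hA (univ.map (g.trans ⟨φ, hφ⟩)) (by simp) <| by
      intro x hx y hy hxy
      obtain ⟨i, -, rfl⟩ := mem_map.1 hx
      obtain ⟨j, -, rfl⟩ := mem_map.1 hy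
      exact hg i j fun hij ↦ hxy (hij ▸ rfl)
    obtain ⟨i, -, rfl⟩ := mem_map.1 hv
    exact hpos _ hdv
  obtain ⟨i, j, hij, hadj⟩ := hedge .inl
  obtain ⟨k, l, hkl, hadj'⟩ := hedge .inr
  have hsub : ({.inl i, .inl j, .inr k, .inr l} : Finset (Fin 3 ⊕ Fin 3)).image φ ⊆
      ({v | 4 ≤ G.degree v} : Finset V) := by
    simp only [image_insert, image_singleton, insert_subset_iff, singleton_subset_iff]
    exact ⟨hfour (by simp) hadj, hfour (by simp) hadj.symm, hfour (by simp) hadj',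
      hfour (by simp) hadj'.symm⟩
  have hcard := card_le_card hsub
  rw [card_image_of_injective _ hφ] at hcard
  simp [hij, hkl] at hcard
  omega

end IndependentTriple

/-- The graph obtained from `G` by deleting all edges at the vertices of `s`. It stands for the
deletion of `s`, with the vertices of `s` kept as isolated vertices so that the vertex type does
not change. -/
def isolate {V : Type*} (G : SimpleGraph V) (s : Finset V) : SimpleGraph V where
  Adj u v := G.Adj u v ∧ u ∉ s ∧ v ∉ s
  symm := ⟨fun _ _ h ↦ ⟨h.1.symm, h.2.2, h.2.1⟩⟩
  loopless := ⟨fun _ h ↦ h.1.ne rfl⟩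

section Isolate

variable {V : Type*} {G : SimpleGraph V} {s : Finset V}

theorem isolate_adj {u v : V} : (isolate G s).Adj u v ↔ G.Adj u v ∧ u ∉ s ∧ v ∉ s :=
  Iff.rfl

theorem isPlanar_induce_compl_of_isolate (h : (isolate G s).IsPlanar) :
    (G.induce (s : Set V)ᶜ).IsPlanar :=
  isPlanar_of_injective_hom (G' := isolate G s) ⟨Subtype.val, fun {u v} huv ↦ ⟨huv, u.2, v.2⟩⟩
    Subtype.val_injective h

theorem twoApex_of_isPlanar_isolate (hs : #s ≤ 2) (h : (isolate G s).IsPlanar) : G.TwoApex :=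
  ⟨s, by rwa [Set.ncard_coe_finset], isPlanar_induce_compl_of_isolate h⟩

theorem connected_of_surjective {U : Type*} {K : SimpleGraph U} (hG : G.Connected) {φ : V → U}
    (hφ : Function.Surjective φ) (h : ∀ x y, G.Adj x y → K.Reachable (φ x) (φ y)) :
    K.Connected := by
  have := hG.nonempty
  refine { preconnected := fun u u' ↦ ?_, nonempty := ‹Nonempty V›.map φ }
  obtain ⟨x, rfl⟩ := hφ u
  obtain ⟨y, rfl⟩ := hφ u'
  simp only [reachable_iff_reflTransGen] at h ⊢
  exact ((reachable_iff_reflTransGen x y).1 (hG.preconnected x y)).lift' φ h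

theorem connected_induce_isolate_erase [DecidableEq V] {t : Finset V} {v y : V}
    (hv : G.IsClique (G.neighborSet v)) (ht : (G.induce (t : Set V)).Connected) (hy : y ∈ t)
    (hyv : y ≠ v) (hadj : v ∈ t → G.Adj v y) :
    ((isolate G {v}).induce (t.erase v : Set V)).Connected := by
  have hmem (x : (t : Set V)) : (if x.1 = v then y else x.1) ∈ (t.erase v : Set V) := by
    split_ifs with h
    · exact mem_coe.2 (mem_erase.2 ⟨hyv, hy⟩)
    · exact mem_coe.2 (mem_erase.2 ⟨h, x.2⟩)
  refine connected_of_surjective ht (φ := fun x ↦ ⟨_, hmem x⟩) (fun ⟨x, hx⟩ ↦ ?_) ?_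
  · obtain ⟨hxv, hxt⟩ := mem_erase.1 (mem_coe.1 hx)
    exact ⟨⟨x, hxt⟩, Subtype.ext (if_neg hxv)⟩
  have hreach {x z} (hx : x ∈ t) (hz : z ∈ t) (hxz : G.Adj x z) (hzv : z ≠ v) :
      ((isolate G {v}).induce (t.erase v : Set V)).Reachable ⟨_, hmem ⟨x, hx⟩⟩
        ⟨_, hmem ⟨z, hz⟩⟩ := by
    by_cases heq : (if x = v then y else x) = if z = v then y else z
    · simp only [heq, Reachable.refl]
    refine Adj.reachable ?_
    simp only [comap_adj, Function.Embedding.subtype_apply, isolate_adj, mem_singleton]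
    simp only [if_neg hzv] at heq ⊢
    split_ifs at heq ⊢ with hxv
    · subst hxv
      exact ⟨hv (hadj hx) hxz heq, hyv, hzv⟩
    · exact ⟨hxz, hxv, hzv⟩
  rintro ⟨x, hx⟩ ⟨z, hz⟩ (hxz : G.Adj x z)
  by_cases hzv : z = v
  · exact (hreach hz hx hxz.symm (hzv ▸ hxz.ne)).symm
  · exact hreach hx hz hxz hzv

instance [DecidableEq V] [DecidableRel G.Adj] : DecidableRel (isolate G s).Adj :=
  fun _ _ ↦ inferInstanceAs (Decidable (_ ∧ _))

variable [Fintype V] [DecidableRel G.Adj]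

theorem isMinor_isolate_of_isClique_neighborSet {W : Type*} [Fintype W] {H : SimpleGraph W}
    [DecidableRel H.Adj] {v : V} (hv : G.IsClique (G.neighborSet v)) (hdv : G.degree v ≤ 2)
    (hH : ∀ w, 3 ≤ H.degree w) (h : H.IsMinor G) : H.IsMinor (isolate G {v}) := by
  classical
  obtain ⟨f, hdisj, hadj, hconn, hexcess⟩ := exists_branchSets h
  have hretract (w) : ∃ y ∈ f w, y ≠ v ∧ (v ∈ f w → G.Adj v y) := by
    obtain ⟨x, hx, hdx⟩ := exists_three_le_degree (hH w) (hexcess w)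
    have hxv : x ≠ v := by
      rintro rfl
      omega
    by_cases hvw : v ∈ f w
    · have : Nontrivial (f w : Set V) := ⟨⟨x, hx⟩, ⟨v, hvw⟩, by simpa using hxv⟩
      obtain ⟨⟨y, hy⟩, hvy⟩ := (hconn w).preconnected.exists_adj_of_nontrivial ⟨v, hvw⟩
      exact ⟨y, hy, (G.ne_of_adj hvy).symm, fun _ ↦ hvy⟩
    · exact ⟨x, hx, hxv, fun h ↦ absurd h hvw⟩
  choose y hy hyv hvy using hretract
  have hcontact {w₁ w₂ x₁ x₂} (hw : w₁ ≠ w₂) (hx₁ : x₁ ∈ f w₁) (hx₂ : x₂ ∈ f w₂)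
      (hx : G.Adj x₁ x₂) (hne : x₂ ≠ v) :
      ∃ x ∈ (f w₁).erase v, ∃ z ∈ (f w₂).erase v, (isolate G {v}).Adj x z := by
    by_cases hx₁v : x₁ = v
    · subst hx₁v
      have hyx : y w₁ ≠ x₂ := fun h ↦ disjoint_left.1 (hdisj hw) (hy w₁) (h ▸ hx₂)
      exact ⟨y w₁, mem_erase.2 ⟨hyv w₁, hy w₁⟩, x₂, mem_erase.2 ⟨hne, hx₂⟩,
        hv (hvy w₁ hx₁) hx hyx, by simpa using hyv w₁, by simpa using hne⟩
    · exact ⟨x₁, mem_erase.2 ⟨hx₁v, hx₁⟩, x₂, mem_erase.2 ⟨hne, hx₂⟩, hx, by simpa using hx₁v,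
        by simpa using hne⟩
  refine ⟨fun w ↦ (f w).erase v, fun w ↦ ⟨y w, by simpa using ⟨hy w, hyv w⟩⟩,
    fun w ↦ connected_induce_isolate_erase hv (hconn w) (hy w) (hyv w) (hvy w),
    fun w₁ w₂ hw ↦ disjoint_coe.2 ((hdisj hw).mono (erase_subset _ _) (erase_subset _ _)),
    fun w₁ w₂ hw ↦ ?_⟩
  obtain ⟨x₁, hx₁, x₂, hx₂, hx⟩ := hadj hw
  by_cases hne : x₂ = v
  · obtain ⟨x, hx, z, hz, hxz⟩ := hcontact hw.ne' hx₂ hx₁ hx.symm (hne ▸ hx.ne)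
    exact ⟨z, hz, x, hx, hxz.symm⟩
  · exact hcontact hw.ne hx₁ hx₂ hx hne

theorem isPlanar_of_isPlanar_isolate {v : V} (hv : G.IsClique (G.neighborSet v))
    (hdv : G.degree v ≤ 2) (h : (isolate G {v}).IsPlanar) : G.IsPlanar := by
  classical
  exact ⟨fun hm ↦ h.1 (isMinor_isolate_of_isClique_neighborSet hv hdv (by simp) hm),
      fun hm ↦ h.2 (isMinor_isolate_of_isClique_neighborSet hv hdv
        (fun w ↦ (degree_completeBipartiteGraph_three w).ge) hm)⟩

theorem neighborFinset_isolate_of_notMem [DecidableEq V] {v : V} (hv : v ∉ s) :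
    (isolate G s).neighborFinset v = G.neighborFinset v \ s := by
  ext u
  simp [isolate_adj, hv]

theorem degree_isolate_of_mem [DecidableEq V] {v : V} (hv : v ∈ s) :
    (isolate G s).degree v = 0 := by
  rw [← card_neighborFinset_eq_degree, card_eq_zero]
  ext u
  simp [isolate_adj, hv]

theorem degree_isolate_add_card_inter [DecidableEq V] {v : V} (hv : v ∉ s) :
    (isolate G s).degree v + #(G.neighborFinset v ∩ s) = G.degree v := by
  rw [← card_neighborFinset_eq_degree, neighborFinset_isolate_of_notMem hv,
    card_sdiff_add_card_inter, card_neighborFinset_eq_degree]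

theorem sum_degree_isolate_add [DecidableEq V] :
    ∑ v, (isolate G s).degree v + 2 * ∑ u ∈ s, G.degree u =
      ∑ v, G.degree v + ∑ u ∈ s, #(G.neighborFinset u ∩ s) := by
  have houtside : ∑ v ∈ sᶜ, (isolate G s).degree v + ∑ v ∈ sᶜ, #(G.neighborFinset v ∩ s) =
      ∑ v ∈ sᶜ, G.degree v := by
    rw [← sum_add_distrib]
    exact sum_congr rfl fun v hv ↦ degree_isolate_add_card_inter (mem_compl.1 hv)
  have hinside : ∑ v ∈ s, (isolate G s).degree v = 0 := sum_eq_zero fun v ↦ degree_isolate_of_mem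
  have h₁ := sum_add_sum_compl s fun v ↦ (isolate G s).degree v
  have h₂ := sum_add_sum_compl s fun v ↦ G.degree v
  have h₃ := sum_add_sum_compl s fun v ↦ #(G.neighborFinset v ∩ s)
  have h₄ := sum_card_neighborFinset_inter (G := G) s
  omega

end Isolate

section SevenVertices

variable {V : Type*} [Fintype V] {G : SimpleGraph V} [DecidableRel G.Adj]
  {s : Finset V}

theorem card_compl_union_pair [DecidableEq V] {p q : V} (hV : Fintype.card V = #s + 7)
    (hp : p ∉ s) (hq : q ∉ s) (hpq : p ≠ q) : #(s ∪ {p, q})ᶜ = 5 := by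
  have hdisj : Disjoint s {p, q} := by simp [hp, hq]
  have hcard : #(s ∪ {p, q}) = #s + 2 := by rw [card_union_of_disjoint hdisj, card_pair hpq]
  have := card_compl_add_card (s ∪ {p, q})
  omega

theorem degree_isolate_le_two [DecidableEq V] {p q v : V} (hp : p ∉ s) (hq : q ∉ s)
    (hdp : G.degree p ≤ #(G.neighborFinset p ∩ s) + 2)
    (hdq : G.degree q ≤ #(G.neighborFinset q ∩ s) + 2) (hv : v ∉ (s ∪ {p, q})ᶜ) :
    (isolate G s).degree v ≤ 2 := by
  have h₁ := degree_isolate_add_card_inter (G := G) hp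
  have h₂ := degree_isolate_add_card_inter (G := G) hq
  simp only [mem_compl, mem_union, mem_insert, mem_singleton, not_not] at hv
  obtain hv | rfl | rfl := hv
  · simp [degree_isolate_of_mem hv]
  · omega
  · omega

theorem isPlanar_isolate_of_sum_lt [DecidableEq V] {p q : V} (hV : Fintype.card V = #s + 7)
    (hp : p ∉ s) (hq : q ∉ s) (hpq : p ≠ q) (hdp : G.degree p ≤ #(G.neighborFinset p ∩ s) + 2)
    (hdq : G.degree q ≤ #(G.neighborFinset q ∩ s) + 2)
    (hlt : ∑ v, G.degree v + ∑ u ∈ s, #(G.neighborFinset u ∩ s) + #(G.neighborFinset p ∩ s) +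
      #(G.neighborFinset q ∩ s) < 20 + 2 * ∑ u ∈ s, G.degree u + G.degree p + G.degree q) :
    (isolate G s).IsPlanar := by
  refine isPlanar_of_sum_degree_lt (card_compl_union_pair hV hp hq hpq).le
    (fun v ↦ degree_isolate_le_two hp hq hdp hdq) ?_
  have hdisj : Disjoint s {p, q} := by simp [hp, hq]
  have hsum := sum_add_sum_compl (s ∪ {p, q}) fun v ↦ (isolate G s).degree v
  rw [sum_union hdisj, sum_pair hpq, sum_eq_zero fun v ↦ degree_isolate_of_mem] at hsum
  have := sum_degree_isolate_add (G := G) (s := s)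
  have := degree_isolate_add_card_inter (G := G) hp
  have := degree_isolate_add_card_inter (G := G) hq
  omega

theorem isPlanar_isolate_of_degree_le [DecidableEq V] {p q r : V} (hV : Fintype.card V = #s + 7)
    (hp : p ∉ s) (hq : q ∉ s) (hr : r ∉ s) (hpq : p ≠ q) (hpr : p ≠ r) (hqr : q ≠ r)
    (hdp : G.degree p ≤ #(G.neighborFinset p ∩ s) + 2)
    (hdq : G.degree q ≤ #(G.neighborFinset q ∩ s) + 2)
    (hdr : G.degree r ≤ #(G.neighborFinset r ∩ s) + 3) : (isolate G s).IsPlanar := by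
  have hcard := card_compl_union_pair hV hp hq hpq
  have hlow {k v} (hv : k + 3 ≤ (isolate G s).degree v) : v ∈ (s ∪ {p, q})ᶜ := by
    by_contra h
    have := degree_isolate_le_two hp hq hdp hdq h
    omega
  refine isPlanar_of_card_degree_le ((card_le_card fun v hv ↦ ?_).trans hcard.le) ?_
  · exact hlow (k := 0) (mem_filter.1 hv).2
  have hr' : r ∈ (s ∪ {p, q})ᶜ := by simp [hr, hpr.symm, hqr.symm]
  have hcard' : #((s ∪ {p, q})ᶜ.erase r) = 4 := by rw [card_erase_of_mem hr', hcard]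
  refine (card_le_card fun v hv ↦ ?_).trans hcard'.le
  refine mem_erase.2 ⟨?_, hlow (k := 1) (mem_filter.1 hv).2⟩
  rintro rfl
  have := degree_isolate_add_card_inter (G := G) hr
  have := (mem_filter.1 hv).2
  omega

end SevenVertices

section NineVertices

variable {V : Type*} [Fintype V] {G : SimpleGraph V} [DecidableRel G.Adj]
  {a b p q r : V}

theorem twoApex_of_sum_lt (hV : Fintype.card V = 9) (hsum : ∑ v, G.degree v = 40)
    (hne : [a, b, p, q].Nodup)
    (hdp : G.degree p ≤ (if G.Adj p a then 1 else 0) + (if G.Adj p b then 1 else 0) + 2)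
    (hdq : G.degree q ≤ (if G.Adj q a then 1 else 0) + (if G.Adj q b then 1 else 0) + 2)
    (hlt : 20 + 2 * (if G.Adj a b then 1 else 0) + (if G.Adj p a then 1 else 0) +
      (if G.Adj p b then 1 else 0) + (if G.Adj q a then 1 else 0) +
      (if G.Adj q b then 1 else 0) < 2 * G.degree a + 2 * G.degree b + G.degree p + G.degree q) :
    G.TwoApex := by
  classical
  simp only [List.nodup_cons, List.mem_cons, List.not_mem_nil, or_false, not_or] at hne
  obtain ⟨⟨hab, hap, haq⟩, ⟨hbp, hbq⟩, hpq, -⟩ := hne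
  refine twoApex_of_isPlanar_isolate (s := {a, b}) card_le_two <|
    isPlanar_isolate_of_sum_lt (p := p) (q := q) (by rw [card_pair hab, hV])
      (by simp [Ne.symm hap, Ne.symm hbp]) (by simp [Ne.symm haq, Ne.symm hbq]) hpq ?_ ?_ ?_
  · rwa [card_neighborFinset_inter, sum_pair hab]
  · rwa [card_neighborFinset_inter, sum_pair hab]
  · simp only [sum_pair hab, card_neighborFinset_inter, G.adj_comm b a, hsum,
      SimpleGraph.irrefl, if_false]
    omega

theorem twoApex_of_degree_le (hV : Fintype.card V = 9) (hne : [a, b, p, q, r].Nodup)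
    (hdp : G.degree p ≤ (if G.Adj p a then 1 else 0) + (if G.Adj p b then 1 else 0) + 2)
    (hdq : G.degree q ≤ (if G.Adj q a then 1 else 0) + (if G.Adj q b then 1 else 0) + 2)
    (hdr : G.degree r ≤ (if G.Adj r a then 1 else 0) + (if G.Adj r b then 1 else 0) + 3) :
    G.TwoApex := by
  classical
  simp only [List.nodup_cons, List.mem_cons, List.not_mem_nil, or_false, not_or] at hne
  obtain ⟨⟨hab, hap, haq, har⟩, ⟨hbp, hbq, hbr⟩, ⟨hpq, hpr⟩, hqr, -⟩ := hne
  refine twoApex_of_isPlanar_isolate (s := {a, b}) card_le_two <|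
    isPlanar_isolate_of_degree_le (p := p) (q := q) (r := r) (by rw [card_pair hab, hV])
      (by simp [Ne.symm hap, Ne.symm hbp]) (by simp [Ne.symm haq, Ne.symm hbq])
      (by simp [Ne.symm har, Ne.symm hbr]) hpq hpr hqr ?_ ?_ ?_ <;>
  rwa [card_neighborFinset_inter, sum_pair hab]

end NineVertices

section TwoRegularComplement

variable {V : Type*} [Fintype V] {G : SimpleGraph V} [DecidableRel G.Adj]
  {s A B : Finset V} {u : V}

theorem neighborFinset_eq_compl_insert [DecidableEq V]
    (hdegree : ∀ v, v ≠ u → G.degree v + 4 = Fintype.card V)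
    (hu : G.degree u = 0) (huA : u ∉ A) (hcard : #A = 3) (hA : G.IsIndepSet (A : Set V)) {v : V}
    (hv : v ∈ A) : G.neighborFinset v = (insert u A)ᶜ := by
  refine eq_of_subset_of_card_le (fun x hx ↦ ?_) ?_
  · rw [mem_neighborFinset] at hx
    rw [mem_compl, mem_insert, not_or]
    exact ⟨fun h ↦ ((G.degree_pos_iff_exists_adj u).2 ⟨v, h ▸ hx.symm⟩).ne' hu,
      fun h ↦ hA hv h hx.ne hx⟩
  · have := hdegree v (ne_of_mem_of_not_mem hv huA)
    rw [card_compl, card_insert_of_notMem huA, card_neighborFinset_eq_degree]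
    omega

-- In the complement of `G - u` two independent triples are disjoint triangular components, so a
-- vertex outside both is joined to all six of their vertices.
theorem isIndepSet_eq_of_degree_add_four (h₈ : 8 ≤ Fintype.card V) (h₉ : Fintype.card V ≤ 9)
    (hdegree : ∀ v, v ≠ u → G.degree v + 4 = Fintype.card V) (hu : G.degree u = 0) (huA : u ∉ A)
    (huB : u ∉ B) (hcardA : #A = 3) (hcardB : #B = 3) (hA : G.IsIndepSet (A : Set V))
    (hB : G.IsIndepSet (B : Set V)) : A = B := by
  classical
  have hNA {v} (hv : v ∈ A) := neighborFinset_eq_compl_insert hdegree hu huA hcardA hA hv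
  have hNB {v} (hv : v ∈ B) := neighborFinset_eq_compl_insert hdegree hu huB hcardB hB hv
  by_contra hne
  have hdisj : Disjoint A B := disjoint_left.2 fun v hvA hvB ↦ hne <| by
    rw [← erase_insert huA, ← erase_insert huB, compl_injective ((hNA hvA).symm.trans (hNB hvB))]
  have hcard : #(A ∪ B) = 6 := by rw [card_union_of_disjoint hdisj, hcardA, hcardB]
  obtain ⟨t, ht⟩ : ∃ t, t ∉ insert u (A ∪ B) := by
    by_contra! h
    have := card_insert_le u (A ∪ B)
    rw [eq_univ_of_forall h, card_univ] at this
    omega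
  rw [mem_insert, mem_union, not_or, not_or] at ht
  have hsub : A ∪ B ⊆ G.neighborFinset t := fun v hv ↦ by
    rw [mem_neighborFinset, adj_comm, ← mem_neighborFinset]
    obtain hv | hv := mem_union.1 hv
    · simp [hNA hv, ht]
    · simp [hNB hv, ht]
  have := card_le_card hsub
  rw [card_neighborFinset_eq_degree] at this
  have := hdegree t ht.1
  omega

theorem degree_isolate_of_mem_insert [DecidableEq V] (hu : G.degree u = 0) {v : V}
    (hv : v ∈ insert u s) : (isolate G s).degree v = 0 := by
  by_cases hvs : v ∈ s
  · exact degree_isolate_of_mem hvs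
  · have := degree_isolate_add_card_inter (G := G) hvs
    obtain rfl := (mem_insert.1 hv).resolve_right hvs
    omega

theorem three_le_degree_isolate [DecidableEq V] {v : V} (hv : G.degree v = #s + 3) (hvs : v ∉ s) :
    3 ≤ (isolate G s).degree v := by
  have := degree_isolate_add_card_inter (G := G) hvs
  have := card_le_card (inter_subset_right (s₁ := G.neighborFinset v) (s₂ := s))
  omega

theorem sum_degree_isolate_le_twenty [DecidableEq V] (hV : Fintype.card V = #s + 7)
    (hdegree : ∀ v, v ≠ u → G.degree v = #s + 3) (hu : G.degree u = 0) (hus : u ∉ s)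
    (hs : G.IsIndepSet (s : Set V)) : ∑ v, (isolate G s).degree v ≤ 20 := by
  have hsum : ∑ v, G.degree v = (#s + 6) * (#s + 3) := by
    rw [← add_sum_erase _ _ (mem_univ u), hu, zero_add,
      sum_congr rfl fun v hv ↦ hdegree v (ne_of_mem_erase hv), sum_const,
      card_erase_of_mem (mem_univ u), card_univ, hV, smul_eq_mul, Nat.add_sub_assoc (by norm_num)]
  have hsums : ∑ v ∈ s, G.degree v = #s * (#s + 3) := by
    rw [sum_congr rfl fun v hv ↦ hdegree v (ne_of_mem_of_not_mem hv hus), sum_const, smul_eq_mul]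
  have hinter : ∑ v ∈ s, #(G.neighborFinset v ∩ s) = 0 := sum_eq_zero fun v hv ↦ by
    refine card_eq_zero.2 (disjoint_iff_inter_eq_empty.1 (disjoint_left.2 fun x hx hxs ↦ ?_))
    rw [mem_neighborFinset] at hx
    exact hs hv hxs hx.ne hx
  have hisolate := sum_degree_isolate_add (G := G) (s := s)
  rw [hsum, hsums, hinter] at hisolate
  obtain hle | hle : #s ≤ 1 ∨ 2 ≤ #s := by omega
  · interval_cases #s <;> omega
  · nlinarith

theorem exists_isIndepSet_disjoint_of_not_isPlanar (hV : Fintype.card V = #s + 7)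
    (hdegree : ∀ v, v ≠ u → G.degree v = #s + 3) (hu : G.degree u = 0) (hus : u ∉ s)
    (hs : G.IsIndepSet (s : Set V)) (h : ¬ (isolate G s).IsPlanar) :
    ∃ A : Finset V, #A = 3 ∧ G.IsIndepSet (A : Set V) ∧ u ∉ A ∧ Disjoint A s := by
  classical
  have hzero {v} (hv : v ∈ insert u s) := degree_isolate_of_mem_insert hu hv
  have hthree {v} (hv : (isolate G s).degree v ≠ 0) : 3 ≤ (isolate G s).degree v := by
    have hmem := mt hzero hv
    rw [mem_insert, not_or] at hmem
    exact three_le_degree_isolate (hdegree v hmem.1) hmem.2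
  have hcard : #(insert u s)ᶜ = 6 := by
    rw [card_compl, card_insert_of_notMem hus, hV]
    omega
  have hsum : ∑ v, (if v ∈ (insert u s)ᶜ then 3 else 0) +
      ∑ v, (if 4 ≤ (isolate G s).degree v then 1 else 0) ≤ 20 := by
    refine le_trans ?_ (sum_degree_isolate_le_twenty hV hdegree hu hus hs)
    rw [← sum_add_distrib]
    refine sum_le_sum fun v _ ↦ ?_
    by_cases hv : v ∈ insert u s
    · rw [if_neg fun h ↦ mem_compl.1 h hv, hzero hv, if_neg (by norm_num)]
    · have := three_le_degree_isolate (hdegree v fun h ↦ hv (h ▸ mem_insert_self u s))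
        fun h ↦ hv (mem_insert_of_mem h)
      simp only [mem_compl, hv, not_false_eq_true, if_true]
      split_ifs <;> omega
  rw [← sum_filter, filter_univ_mem, sum_const, hcard, smul_eq_mul, ← card_filter] at hsum
  have h₃ : #{v | 3 ≤ (isolate G s).degree v} ≤ 6 := by
    refine (card_le_card fun v hv ↦ mem_compl.2 fun hmem ↦ ?_).trans hcard.le
    have := hzero hmem
    have := (mem_filter.1 hv).2
    omega
  obtain ⟨A, hcardA, hA, hpos⟩ := exists_isIndepSet_of_not_isPlanar h₃ (by omega)
    (fun v ↦ hthree) h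
  have hmem {v} (hv : v ∈ A) : v ≠ u ∧ v ∉ s := by
    have := mt hzero (hpos v hv)
    rwa [mem_insert, not_or] at this
  exact ⟨A, hcardA, fun x hx y hy hxy hadj ↦ hA hx hy hxy ⟨hadj, (hmem hx).2, (hmem hy).2⟩,
    fun hu ↦ (hmem hu).1 rfl, disjoint_left.2 fun v hv ↦ (hmem hv).2⟩

theorem exists_isPlanar_isolate_of_forall_degree_eq (hV : Fintype.card V = #s + 7) (h₁ : 1 ≤ #s)
    (h₂ : #s ≤ 2) (hdegree : ∀ v, v ≠ u → G.degree v = #s + 3) (hu : G.degree u = 0)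
    (hus : u ∉ s) (hs : G.IsIndepSet (s : Set V)) :
    ∃ t : Finset V, #t = #s ∧ (isolate G t).IsPlanar := by
  classical
  by_contra! h
  obtain ⟨A, hcardA, hA, huA, -⟩ :=
    exists_isIndepSet_disjoint_of_not_isPlanar hV hdegree hu hus hs (h s rfl)
  obtain ⟨t, htA, ht⟩ := exists_subset_card_eq (s := A) (n := #s) (by omega)
  obtain ⟨B, hcardB, hB, huB, hBt⟩ := exists_isIndepSet_disjoint_of_not_isPlanar (ht ▸ hV)
    (ht ▸ hdegree) hu (fun h ↦ huA (htA h)) (hA.mono (coe_subset.2 htA)) (h t ht)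
  rw [← isIndepSet_eq_of_degree_add_four (by omega) (by omega)
    (fun v hv ↦ by rw [hdegree v hv, hV]) hu huA huB hcardA hcardB hA hB] at hBt
  have hempty : t = ∅ := disjoint_self.1 (hBt.mono_left htA)
  rw [hempty, card_empty] at ht
  omega

end TwoRegularComplement

section Padding

variable {V : Type*} [Fintype V]

theorem exists_ge_ncard_edgeSet_eq (G : SimpleGraph V) {n : ℕ} (hG : G.edgeSet.ncard ≤ n)
    (hn : n ≤ (Fintype.card V).choose 2) : ∃ L ≥ G, L.edgeSet.ncard = n := by
  classical
  rw [← card_edgeFinset_top_eq_card_choose_two] at hn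
  rw [← coe_edgeFinset, Set.ncard_coe_finset] at hG
  obtain ⟨t, hGt, htop, ht⟩ :=
    exists_subsuperset_card_eq (edgeFinset_mono (le_top : G ≤ ⊤)) hG hn
  have hedges : (fromEdgeSet (t : Set (Sym2 V))).edgeSet = t := by
    rw [edgeSet_fromEdgeSet, sdiff_eq_left, Set.disjoint_left]
    exact fun e he ↦ not_isDiag_of_mem_edgeSet _ (mem_edgeFinset.1 (htop he))
  refine ⟨fromEdgeSet t, edgeSet_subset_edgeSet.1 ?_, by rw [hedges, Set.ncard_coe_finset, ht]⟩
  rwa [hedges, ← coe_edgeFinset, coe_subset]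

theorem sum_degree_eq_two_mul_ncard (G : SimpleGraph V) [DecidableRel G.Adj] :
    ∑ v, G.degree v = 2 * G.edgeSet.ncard := by
  classical
  rw [sum_degrees_eq_twice_card_edges, ← coe_edgeFinset, Set.ncard_coe_finset]

end Padding

section EightVertices

variable {V : Type*} [Fintype V] {G : SimpleGraph V} [DecidableRel G.Adj]
  {a p q : V}

theorem card_neighborFinset_inter_singleton [DecidableEq V] (v : V) :
    #(G.neighborFinset v ∩ {a}) = if G.Adj v a then 1 else 0 := by
  split_ifs with h
  · rw [inter_singleton_of_mem ((mem_neighborFinset _ _ _).2 h), card_singleton]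
  · rw [inter_singleton_of_notMem (mt (mem_neighborFinset _ _ _).1 h), card_empty]

theorem isPlanar_isolate_singleton_of_sum_lt (hV : Fintype.card V = 8)
    (hsum : ∑ v, G.degree v = 28) (hpa : p ≠ a) (hqa : q ≠ a) (hpq : p ≠ q)
    (hdp : G.degree p ≤ (if G.Adj p a then 1 else 0) + 2)
    (hdq : G.degree q ≤ (if G.Adj q a then 1 else 0) + 2)
    (hlt : 8 + (if G.Adj p a then 1 else 0) + (if G.Adj q a then 1 else 0) <
      2 * G.degree a + G.degree p + G.degree q) : (isolate G {a}).IsPlanar := by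
  classical
  refine isPlanar_isolate_of_sum_lt (p := p) (q := q) (by rw [card_singleton, hV]) (by simpa)
    (by simpa) hpq ?_ ?_ ?_
  · rwa [card_neighborFinset_inter_singleton]
  · rwa [card_neighborFinset_inter_singleton]
  · simp only [sum_singleton, card_neighborFinset_inter_singleton, hsum, SimpleGraph.irrefl,
      if_false]
    omega

theorem isPlanar_isolate_of_six_le_degree (hsum : ∑ v, G.degree v = 28) (ha : 6 ≤ G.degree a) :
    (isolate G {a}).IsPlanar := by
  classical
  have := sum_degree_isolate_add (G := G) (s := {a})
  simp only [sum_singleton, card_neighborFinset_inter_singleton, SimpleGraph.irrefl,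
    if_false] at this
  exact isPlanar_of_sum_degree_le (by omega)

theorem exists_degree_isolate_eq_of_degree_eq_five [DecidableEq V] (hV : Fintype.card V = 8)
    (hsum : ∑ v, G.degree v = 28) (ha : G.degree a = 5) (h : ¬ (isolate G {a}).IsPlanar) :
    ∃ u, u ≠ a ∧ (isolate G {a}).degree u = 0 ∧
      ∀ v, v ≠ a → v ≠ u → (isolate G {a}).degree v = 3 := by
  set S : Finset V := {v | 3 ≤ (isolate G {a}).degree v} with hS
  have hmem {v} : v ∈ S ↔ 3 ≤ (isolate G {a}).degree v := by simp [hS]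
  have hiso : ∑ v, (isolate G {a}).degree v = 18 := by
    have := sum_degree_isolate_add (G := G) (s := {a})
    simp only [sum_singleton, card_neighborFinset_inter_singleton, SimpleGraph.irrefl,
      if_false] at this
    omega
  have hsplit := sum_add_sum_compl S fun v ↦ (isolate G {a}).degree v
  have hlower : #S * 3 ≤ ∑ v ∈ S, (isolate G {a}).degree v :=
    card_nsmul_le_sum _ _ _ fun v hv ↦ hmem.1 hv
  have hcard : #S = 6 := by
    have h₄ := card_mul_le_sum_degree (G := isolate G {a}) (k := 4) (T := univ) (by simp)
    have h₃ : ¬ #S ≤ 5 := fun h₃ ↦ h (isPlanar_of_card_degree_le h₃ (by omega))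
    omega
  have haS : a ∉ S := by simp [hmem, degree_isolate_of_mem]
  obtain ⟨u, hu⟩ : ∃ u, (insert a S)ᶜ = {u} := by
    rw [← card_eq_one, card_compl, card_insert_of_notMem haS, hV, hcard]
  have huS : u ∉ insert a S := mem_compl.1 (hu ▸ mem_singleton_self u)
  rw [mem_insert, not_or] at huS
  refine ⟨u, huS.1, ?_, fun v hva hvu ↦ ?_⟩
  · have := single_le_sum (fun v _ ↦ Nat.zero_le ((isolate G {a}).degree v))
      (mem_compl.2 huS.2)
    omega
  · have hvS : v ∈ S := by_contra fun hv ↦ hvu <| mem_singleton.1 <| hu ▸ by simp [hva, hv]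
    refine ((sum_eq_sum_iff_of_le fun v hv ↦ hmem.1 hv).1 ?_ v hvS).symm
    rw [sum_const, smul_eq_mul]
    omega

-- With `u` isolated and the six other vertices cubic in `G - a`, some neighbour of `a` is adjacent
-- to a non-neighbour of `a`; deleting it instead of `a` works.
theorem exists_isPlanar_isolate_of_degree_eq_five (hV : Fintype.card V = 8)
    (hsum : ∑ v, G.degree v = 28) (ha : G.degree a = 5) : ∃ w, (isolate G {w}).IsPlanar := by
  classical
  by_contra! h
  obtain ⟨u, hua, hu, hthree⟩ := exists_degree_isolate_eq_of_degree_eq_five hV hsum ha (h a)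
  have hdegree {v} (hv : v ≠ a) := degree_isolate_add_card_inter (G := G) (notMem_singleton.2 hv)
  simp only [card_neighborFinset_inter_singleton] at hdegree
  obtain ⟨z, hz⟩ : ∃ z, z ∉ insert a (insert u (G.neighborFinset a)) := by
    by_contra! hall
    have h₁ := card_insert_le a (insert u (G.neighborFinset a))
    have h₂ := card_insert_le u (G.neighborFinset a)
    rw [eq_univ_of_forall hall, card_univ] at h₁
    rw [card_neighborFinset_eq_degree] at h₂
    omega
  simp only [mem_insert, mem_neighborFinset, not_or] at hz
  obtain ⟨hza, hzu, haz⟩ := hz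
  have hdz := hdegree hza
  rw [hthree z hza hzu, if_neg fun h ↦ haz h.symm] at hdz
  have hcompl : #({a, z} : Finset V)ᶜ = 6 := by rw [card_compl, card_pair (Ne.symm hza), hV]
  obtain ⟨w, hw⟩ := inter_nonempty_of_card_lt_card_add_card
    (s := {a, z}ᶜ) (t := G.neighborFinset a) (u := G.neighborFinset z)
    (fun v hv ↦ by grind [mem_compl, mem_neighborFinset, SimpleGraph.irrefl])
    (fun v hv ↦ by grind [mem_compl, mem_neighborFinset, SimpleGraph.irrefl, adj_comm])
    (by simp only [card_neighborFinset_eq_degree]; omega)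
  rw [mem_inter, mem_neighborFinset, mem_neighborFinset] at hw
  obtain ⟨haw, hzw⟩ := hw
  have huw : u ≠ w := by
    rintro rfl
    have : (isolate G {a}).Adj u z := ⟨hzw.symm, by simpa, by simpa⟩
    exact ((degree_pos_iff_exists_adj _ _).2 ⟨z, this⟩).ne' hu
  have hdw := hdegree haw.ne'
  have hdu := hdegree hua
  rw [hthree w haw.ne' huw.symm, if_pos haw.symm] at hdw
  refine h w (isPlanar_isolate_singleton_of_sum_lt hV hsum huw hzw.ne (Ne.symm hzu) ?_ ?_ ?_) <;>
    split_ifs at * <;> omega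

theorem exists_isPlanar_isolate_of_degree_eq_zero (hV : Fintype.card V = 8)
    (hsum : ∑ v, G.degree v = 28) (hle : ∀ v, G.degree v ≤ 4) (hp : G.degree p = 0) :
    ∃ a, (isolate G {a}).IsPlanar := by
  classical
  have hfour (v) (hv : v ≠ p) : G.degree v = 4 := by
    have := mul_card_le_sum_degree_add (d := 4) hle (by omega) {v, p}
    rw [card_pair hv, sum_pair hv] at this
    have := hle v
    omega
  have : Nontrivial V := Fintype.one_lt_card_iff_nontrivial.1 (by omega)
  obtain ⟨a, ha⟩ := exists_ne p
  obtain ⟨t, ht, hplanar⟩ := exists_isPlanar_isolate_of_forall_degree_eq (s := {a}) hV le_rfl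
    (by simp) hfour hp (by simpa using ha.symm) (by simp)
  obtain ⟨b, rfl⟩ := card_eq_one.1 ht
  exact ⟨b, hplanar⟩

theorem exists_isPlanar_isolate_of_degree_le_two (hV : Fintype.card V = 8)
    (hsum : ∑ v, G.degree v = 28) (hle : ∀ v, G.degree v ≤ 4) (hp₀ : G.degree p ≠ 0)
    (hp : G.degree p ≤ 2) : ∃ a, (isolate G {a}).IsPlanar := by
  classical
  have hdeficit := mul_card_le_sum_degree_add (d := 4) hle (by omega)
  obtain ⟨q, hqp, hq⟩ : ∃ q, q ≠ p ∧ G.degree q ≤ 3 := by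
    by_contra! h
    have := card_nsmul_le_sum (univ.erase p) (fun v ↦ G.degree v) 4
      fun v hv ↦ h v (ne_of_mem_erase hv)
    rw [card_erase_of_mem (mem_univ p), card_univ, hV, smul_eq_mul] at this
    have := add_sum_erase _ (fun v ↦ G.degree v) (mem_univ p)
    omega
  have hpq := hdeficit {q, p}
  rw [card_pair hqp, sum_pair hqp] at hpq
  obtain ⟨a, haq, hap⟩ : ∃ a ∈ G.neighborFinset q, a ≠ p :=
    exists_mem_ne (by rw [card_neighborFinset_eq_degree]; omega) p
  rw [mem_neighborFinset] at haq
  have hapq := hdeficit {a, q, p}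
  rw [sum_insert (by simp [hap, haq.ne']), card_insert_of_notMem (by simp [hap, haq.ne']),
    card_pair hqp, sum_pair hqp] at hapq
  refine ⟨a, isPlanar_isolate_singleton_of_sum_lt hV hsum hap.symm haq.ne hqp.symm ?_ ?_ ?_⟩ <;>
    split_ifs <;> omega

theorem exists_isPlanar_isolate_of_three_le_degree (hV : Fintype.card V = 8)
    (hsum : ∑ v, G.degree v = 28) (hle : ∀ v, G.degree v ≤ 4) (hge : ∀ v, 3 ≤ G.degree v) :
    ∃ a, (isolate G {a}).IsPlanar := by
  classical
  set W : Finset V := {v | G.degree v = 3} with hW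
  have hWcard : #W = 4 := by
    have : ∑ v, (G.degree v + if G.degree v = 3 then 1 else 0) = ∑ _v : V, 4 :=
      sum_congr rfl fun v _ ↦ by
        have := hle v
        have := hge v
        split_ifs <;> omega
    rw [sum_add_distrib, ← card_filter, ← hW, sum_const, card_univ, hV, smul_eq_mul] at this
    omega
  obtain ⟨a, ha⟩ : ∃ a, 2 ≤ #(G.neighborFinset a ∩ W) := by
    by_contra! h
    have := sum_le_card_nsmul univ (fun a ↦ #(G.neighborFinset a ∩ W)) 1 fun a _ ↦
      Nat.le_of_lt_succ (h a)
    rw [sum_card_neighborFinset_inter, sum_congr rfl fun v hv ↦ (mem_filter.1 hv).2, sum_const,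
      hWcard, card_univ, hV] at this
    norm_num at this
  obtain ⟨p, hp, q, hq, hpq⟩ := one_lt_card.1 ha
  simp only [hW, mem_inter, mem_neighborFinset, mem_filter, mem_univ, true_and] at hp hq
  have := hge a
  refine ⟨a, isPlanar_isolate_singleton_of_sum_lt hV hsum hp.1.ne' hq.1.ne' hpq ?_ ?_ ?_⟩ <;>
    simp only [hp.1.symm, hq.1.symm, if_true] <;> omega

theorem exists_isPlanar_induce_compl_singleton {G : SimpleGraph V} (hV : Fintype.card V = 8)
    (hE : G.edgeSet.ncard ≤ 14) : ∃ a, (G.induce ({a} : Set V)ᶜ).IsPlanar := by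
  classical
  obtain ⟨L, hL, hLE⟩ := exists_ge_ncard_edgeSet_eq G hE (by rw [hV]; decide)
  have hsum : ∑ v, L.degree v = 28 := by rw [sum_degree_eq_two_mul_ncard, hLE]
  obtain ⟨a, ha⟩ : ∃ a, (isolate L {a}).IsPlanar := by
    by_cases h₆ : ∃ a, 6 ≤ L.degree a
    · exact h₆.imp fun a ↦ isPlanar_isolate_of_six_le_degree hsum
    push Not at h₆
    by_cases h₅ : ∃ a, L.degree a = 5
    · exact h₅.elim fun a ↦ exists_isPlanar_isolate_of_degree_eq_five hV hsum
    push Not at h₅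
    have hle (v) : L.degree v ≤ 4 := by
      have := h₆ v
      have := h₅ v
      omega
    by_cases h₂ : ∃ p, L.degree p ≤ 2
    · obtain ⟨p, hp⟩ := h₂
      by_cases hp₀ : L.degree p = 0
      · exact exists_isPlanar_isolate_of_degree_eq_zero hV hsum hle hp₀
      · exact exists_isPlanar_isolate_of_degree_le_two hV hsum hle hp₀ hp
    push Not at h₂
    exact exists_isPlanar_isolate_of_three_le_degree hV hsum hle h₂
  have := isPlanar_induce_compl_of_isolate ha
  rw [coe_singleton] at this
  exact ⟨a, isPlanar_of_injective_hom (induceHom (.ofLE hL) fun _ h ↦ h)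
    (fun _ _ h ↦ Subtype.ext (congrArg Subtype.val h)) this⟩

end EightVertices

section DegreeSix

variable {V : Type*} [Fintype V] {G : SimpleGraph V} [DecidableRel G.Adj]
  {v : V}

theorem twoApex_of_six_le_degree (hV : Fintype.card V = 9) (hE : G.edgeSet.ncard ≤ 20)
    (hv : 6 ≤ G.degree v) : G.TwoApex := by
  classical
  have hcard : Fintype.card ({v}ᶜ : Set V) = 8 := by
    rw [Fintype.card_compl_set, hV, Fintype.card_unique]
  have hedges : (G.induce ({v} : Set V)ᶜ).edgeSet.ncard ≤ 14 := by
    have := card_edgeFinset_induce_compl_singleton G v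
    rw [← coe_edgeFinset, Set.ncard_coe_finset] at hE ⊢
    rw [card_edgeFinset_deleteIncidenceSet] at this
    omega
  obtain ⟨a, ha⟩ := exists_isPlanar_induce_compl_singleton hcard hedges
  have hmem (x : (({v, a.1} : Set V)ᶜ : Set V)) : x.1 ∈ ({v} : Set V)ᶜ := fun h ↦ x.2 (.inl h)
  refine ⟨{v, a.1}, (Set.ncard_insert_le _ _).trans (by simp), isPlanar_of_injective_hom
    (G' := (G.induce ({v} : Set V)ᶜ).induce ({a} : Set _)ᶜ)
    ⟨fun x ↦ ⟨⟨x, hmem x⟩, fun h ↦ x.2 (.inr (congrArg Subtype.val h))⟩, fun h ↦ h⟩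
    (fun x y h ↦ Subtype.ext (congrArg (fun z ↦ z.1.1) h)) ha⟩

end DegreeSix

section LowDegree

variable {V : Type*} [Fintype V] {G : SimpleGraph V} [DecidableRel G.Adj]
  {u w : V}

theorem mul_length_le_sum_degree_add {k d : ℕ} (hle : ∀ v, G.degree v ≤ k)
    (hsum : k * Fintype.card V ≤ ∑ v, G.degree v + d) {l : List V} (hl : l.Nodup) :
    k * l.length ≤ (l.map fun v ↦ G.degree v).sum + d := by
  classical
  have := mul_card_le_sum_degree_add hle hsum l.toFinset
  rwa [List.toFinset_card_of_nodup hl, List.sum_toFinset _ hl] at this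

theorem degree_le_card_neighborFinset_sdiff_add [DecidableEq V] :
    G.degree w ≤ #(G.neighborFinset w \ insert u (G.neighborFinset u)) + G.degree u := by
  have hinter : #(G.neighborFinset w ∩ insert u (G.neighborFinset u)) ≤ G.degree u := by
    by_cases hadj : G.Adj u w
    · have hsub : G.neighborFinset w ∩ insert u (G.neighborFinset u) ⊆
          insert u ((G.neighborFinset u).erase w) := fun x hx ↦ by
        simp only [mem_inter, mem_insert, mem_neighborFinset, mem_erase] at hx ⊢
        exact hx.2.imp_right fun h ↦ ⟨hx.1.ne', h⟩
      refine (card_le_card hsub).trans ((card_insert_le _ _).trans_eq ?_)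
      rw [card_erase_of_mem ((mem_neighborFinset _ _ _).2 hadj), card_neighborFinset_eq_degree]
      exact Nat.sub_add_cancel ((G.degree_pos_iff_exists_adj u).2 ⟨w, hadj⟩)
    · rw [inter_insert_of_notMem fun h ↦ hadj ((mem_neighborFinset _ _ _).1 h).symm]
      exact (card_le_card inter_subset_right).trans_eq (card_neighborFinset_eq_degree G u)
  have := card_inter_add_card_sdiff (G.neighborFinset w) (insert u (G.neighborFinset u))
  rw [card_neighborFinset_eq_degree] at this
  omega

theorem twoApex_of_forall_degree_eq_five (hV : Fintype.card V = 9)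
    (hfive : ∀ v, v ≠ u → G.degree v = 5) (hu : G.degree u = 0) : G.TwoApex := by
  classical
  have : Nontrivial V := Fintype.one_lt_card_iff_nontrivial.1 (by omega)
  obtain ⟨a, ha⟩ := exists_ne u
  obtain ⟨b, hb⟩ : ∃ b, b ∉ insert u (insert a (G.neighborFinset a)) := by
    by_contra! h
    have h₁ := card_insert_le u (insert a (G.neighborFinset a))
    have h₂ := card_insert_le a (G.neighborFinset a)
    rw [eq_univ_of_forall h, card_univ] at h₁
    rw [card_neighborFinset_eq_degree, hfive a ha] at h₂
    omega
  simp only [mem_insert, mem_neighborFinset, not_or] at hb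
  obtain ⟨hbu, hba, hab⟩ := hb
  have hcard : #{a, b} = 2 := card_pair (Ne.symm hba)
  obtain ⟨t, ht, hplanar⟩ := exists_isPlanar_isolate_of_forall_degree_eq (s := {a, b})
    (by rw [hV, hcard]) (by rw [hcard]; norm_num) hcard.le (by rwa [hcard]) hu
    (by simp [ha.symm, Ne.symm hbu])
    (by simpa [Set.pairwise_pair, IsIndepSet, G.adj_comm b a] using fun _ ↦ hab)
  exact twoApex_of_isPlanar_isolate (ht.trans_le hcard.le) hplanar

theorem twoApex_of_degree_eq_three_of_degree_eq_two (hV : Fintype.card V = 9)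
    (hsum : ∑ v, G.degree v = 40) (hle : ∀ v, G.degree v ≤ 5) (huw : u ≠ w) (hu : G.degree u = 2)
    (hw : G.degree w = 3) : G.TwoApex := by
  classical
  have hfive {x} (hxu : x ≠ u) (hxw : x ≠ w) : G.degree x = 5 := by
    have := mul_length_le_sum_degree_add (d := 5) hle (by omega) (l := [u, w, x])
      (by simp [huw, hxu.symm, hxw.symm])
    simp only [List.map_cons, List.map_nil, List.sum_cons, List.sum_nil, List.length_cons,
      List.length_nil] at this
    have := hle x
    omega
  have hcard := degree_le_card_neighborFinset_sdiff_add (G := G) (u := u) (w := w)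
  obtain ⟨a, ha⟩ : (G.neighborFinset w \ insert u (G.neighborFinset u)).Nonempty :=
    card_pos.1 (by omega)
  simp only [mem_sdiff, mem_insert, mem_neighborFinset, not_or] at ha
  obtain ⟨hwa, hau, hua⟩ := ha
  obtain ⟨b, hb⟩ : ∃ b, b ∉ G.neighborFinset u ∪ {a, u, w} := by
    by_contra! h
    have h₁ := card_union_le (G.neighborFinset u) {a, u, w}
    have h₂ := card_le_three (a := a) (b := u) (c := w)
    rw [eq_univ_of_forall h, card_univ, card_neighborFinset_eq_degree] at h₁
    omega
  simp only [mem_union, mem_insert, mem_singleton, mem_neighborFinset, not_or] at hb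
  obtain ⟨hub, hba, hbu, hbw⟩ := hb
  have hda := hfive hau hwa.ne'
  have hdb := hfive hbu hbw
  refine twoApex_of_sum_lt hV hsum (a := a) (b := b) (p := u) (q := w) ?_ ?_ ?_ ?_
  · grind [SimpleGraph.ne_of_adj]
  · omega
  · simp only [hwa, if_true]
    omega
  · simp only [hwa, hua, hub, if_true, if_false]
    split_ifs <;> omega

theorem exists_mem_degree_eq_five (hV : Fintype.card V = 9) (hsum : ∑ v, G.degree v = 40)
    (hle : ∀ v, G.degree v ≤ 5) (huw : u ≠ w) (hduw : G.degree u + G.degree w ≤ 6)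
    {t : Finset V} (ht : 2 ≤ #t) (hut : u ∉ t) (hwt : w ∉ t) : ∃ x ∈ t, G.degree x = 5 := by
  classical
  obtain ⟨x, hx, y, hy, hxy⟩ := one_lt_card.1 ht
  have := mul_length_le_sum_degree_add (d := 5) hle (by omega) (l := [u, w, x, y])
    (by grind)
  simp only [List.map_cons, List.map_nil, List.sum_cons, List.sum_nil, List.length_cons,
    List.length_nil] at this
  have := hle x
  have := hle y
  obtain h | h : G.degree x = 5 ∨ G.degree y = 5 := by omega
  exacts [⟨x, hx, h⟩, ⟨y, hy, h⟩]

theorem twoApex_of_degree_eq_four_of_degree_le_two (hV : Fintype.card V = 9)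
    (hsum : ∑ v, G.degree v = 40) (hle : ∀ v, G.degree v ≤ 5) (huw : u ≠ w) (hu : G.degree u ≤ 2)
    (hw : G.degree w = 4) : G.TwoApex := by
  classical
  have hfive {t} := exists_mem_degree_eq_five (t := t) hV hsum hle huw (by omega)
  have hdu : 1 ≤ G.degree u := by
    have := mul_length_le_sum_degree_add (d := 5) hle (by omega) (l := [u, w]) (by simpa)
    simp only [List.map_cons, List.map_nil, List.sum_cons, List.sum_nil, List.length_cons,
      List.length_nil] at this
    omega
  have hcard := degree_le_card_neighborFinset_sdiff_add (G := G) (u := u) (w := w)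
  obtain ⟨a, ha, hda⟩ := hfive (t := G.neighborFinset w \ insert u (G.neighborFinset u))
    (by omega) (by simp) (by simp)
  obtain ⟨b, hba, hbu, hwb, hdb, hub⟩ : ∃ b, b ≠ a ∧ b ≠ u ∧ G.Adj w b ∧ G.degree b = 5 ∧
      (G.Adj u b → G.degree u = 2) := by
    obtain hu | hu : G.degree u = 1 ∨ G.degree u = 2 := by omega
    · obtain ⟨b, hb, hdb⟩ := hfive
        (t := (G.neighborFinset w \ insert u (G.neighborFinset u)).erase a)
        (by rw [card_erase_of_mem ha]; omega) (by simp) (by simp)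
      simp only [mem_erase, mem_sdiff, mem_insert, mem_neighborFinset, not_or] at hb
      exact ⟨b, hb.1, hb.2.2.1, hb.2.1, hdb, fun h ↦ absurd h hb.2.2.2⟩
    · obtain ⟨b, hb, hdb⟩ := hfive (t := ((G.neighborFinset w).erase u).erase a)
        (by grind [pred_card_le_card_erase, card_neighborFinset_eq_degree]) (by simp) (by simp)
      simp only [mem_erase, mem_neighborFinset] at hb
      exact ⟨b, hb.1, hb.2.1, hb.2.2, hdb, fun _ ↦ hu⟩
  simp only [mem_sdiff, mem_insert, mem_neighborFinset, not_or] at ha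
  obtain ⟨hwa, hau, hua⟩ := ha
  refine twoApex_of_sum_lt hV hsum (a := a) (b := b) (p := u) (q := w) ?_ ?_ ?_ ?_
  · grind [SimpleGraph.ne_of_adj]
  · omega
  · simp only [hwa, hwb, if_true]
    omega
  · simp only [hwa, hwb, hua, if_true, if_false]
    split_ifs with hab hub' <;> grind

theorem twoApex_of_degree_le_two (hV : Fintype.card V = 9) (hsum : ∑ v, G.degree v = 40)
    (hle : ∀ v, G.degree v ≤ 5) (hu : G.degree u ≤ 2) : G.TwoApex := by
  classical
  by_cases hw : ∃ w, w ≠ u ∧ G.degree w ≤ 4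
  · obtain ⟨w, hwu, hw⟩ := hw
    have := mul_card_le_sum_degree_add (d := 5) hle (by omega) {w, u}
    rw [card_pair hwu, sum_pair hwu] at this
    obtain hw | hw : G.degree w = 3 ∨ G.degree w = 4 := by omega
    · exact twoApex_of_degree_eq_three_of_degree_eq_two hV hsum hle hwu.symm (by omega) hw
    · exact twoApex_of_degree_eq_four_of_degree_le_two hV hsum hle hwu.symm hu hw
  · push Not at hw
    have hfive (v) (hv : v ≠ u) : G.degree v = 5 := le_antisymm (hle v) (hw v hv)
    refine twoApex_of_forall_degree_eq_five hV hfive ?_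
    rw [← add_sum_erase _ _ (mem_univ u), sum_congr rfl fun v hv ↦ hfive v (ne_of_mem_erase hv),
      sum_const, card_erase_of_mem (mem_univ u), card_univ, hV, smul_eq_mul] at hsum
    omega

end LowDegree

section DegreeThree

variable {V : Type*} [Fintype V] {G : SimpleGraph V} [DecidableRel G.Adj]
  {a b u w w' : V}

theorem twoApex_of_degree_eq_three_of_degree_eq_three (hV : Fintype.card V = 9)
    (hsum : ∑ v, G.degree v = 40) (hle : ∀ v, G.degree v ≤ 5) (huw : u ≠ w) (hu : G.degree u = 3)
    (hw : G.degree w = 3) : G.TwoApex := by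
  classical
  have hfive {t} := exists_mem_degree_eq_five (t := t) hV hsum hle huw (by omega)
  obtain ⟨a, ha, hda⟩ := hfive (t := (G.neighborFinset u).erase w)
    (by grind [pred_card_le_card_erase, card_neighborFinset_eq_degree]) (by simp) (by simp)
  simp only [mem_erase, mem_neighborFinset] at ha
  obtain ⟨haw, hua⟩ := ha
  by_cases hwa : G.Adj w a
  · have hcard : 2 ≤ #(G.neighborFinset u ∪ {u, w})ᶜ := by
      have := card_compl_add_card (G.neighborFinset u ∪ {u, w})
      have := card_union_le (G.neighborFinset u) {u, w}
      grind [card_neighborFinset_eq_degree, card_pair]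
    obtain ⟨b, hb, hdb⟩ := hfive hcard (by simp) (by simp)
    simp only [mem_compl, mem_union, mem_insert, mem_singleton, mem_neighborFinset, not_or] at hb
    exact twoApex_of_sum_lt hV hsum (a := a) (b := b) (p := u) (q := w)
      (by grind [SimpleGraph.ne_of_adj]) (by grind) (by grind) (by grind)
  · obtain ⟨b, hb, hdb⟩ := hfive (t := (G.neighborFinset w).erase u)
      (by grind [pred_card_le_card_erase, card_neighborFinset_eq_degree]) (by simp) (by simp)
    simp only [mem_erase, mem_neighborFinset] at hb
    exact twoApex_of_sum_lt hV hsum (a := a) (b := b) (p := u) (q := w)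
      (by grind [SimpleGraph.ne_of_adj]) (by grind) (by grind) (by grind)

theorem twoApex_of_common_neighbor (hV : Fintype.card V = 9) (hsum : ∑ v, G.degree v = 40)
    (hge : ∀ v ≠ u, 4 ≤ G.degree v) (hu : G.degree u = 3) (hw : G.degree w = 4)
    (ha : G.degree a = 5) (hua : G.Adj u a) (hwa : G.Adj w a) : G.TwoApex := by
  classical
  have huw : u ≠ w := by grind
  have hcard : 1 < #(((G.neighborFinset w).erase u).erase a) := by
    grind [pred_card_le_card_erase, card_neighborFinset_eq_degree]
  by_contra hG
  have hdx {x} (hxu : x ≠ u) (hxa : x ≠ a) (hwx : G.Adj w x) :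
      G.Adj a x ∧ G.degree x ≤ 4 := by
    have := hge x hxu
    by_contra h
    exact hG <| twoApex_of_sum_lt hV hsum (a := a) (b := x) (p := u) (q := w)
      (by grind [SimpleGraph.ne_of_adj]) (by grind) (by grind) (by grind)
  obtain ⟨x, hx, y, hy, hxy⟩ := one_lt_card.1 hcard
  simp only [mem_erase, mem_neighborFinset] at hx hy
  obtain ⟨hax, -⟩ := hdx hx.2.1 hx.1 hx.2.2
  obtain ⟨hay, hdy⟩ := hdx hy.2.1 hy.1 hy.2.2
  exact hG <| twoApex_of_degree_le hV (a := a) (b := x) (p := u) (q := w) (r := y)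
    (by grind [SimpleGraph.ne_of_adj]) (by grind) (by grind) (by grind [SimpleGraph.adj_comm])

theorem twoApex_of_not_adj_of_adj (hV : Fintype.card V = 9) (hsum : ∑ v, G.degree v = 40)
    (hu : G.degree u = 3) (hw : G.degree w = 4) (hw' : G.degree w' = 4) (hb : G.degree b = 5)
    (hww' : G.Adj w w') (huw' : G.Adj u w') (hwb : G.Adj w b) (hbw' : ¬G.Adj b w') :
    G.TwoApex := by
  classical
  exact twoApex_of_sum_lt hV hsum (a := w') (b := b) (p := u) (q := w)
      (by grind [SimpleGraph.ne_of_adj]) (by grind) (by grind) (by grind [SimpleGraph.adj_comm])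

theorem twoApex_of_two_common_neighbors (hV : Fintype.card V = 9)
    (hsum : ∑ v, G.degree v = 40) (hw : G.degree w = 4) (hw' : G.degree w' = 4)
    (ha : G.degree a = 5) (hb : G.degree b = 5) (hww' : w ≠ w') (hab : a ≠ b)
    (hwa : G.Adj w a) (hwb : G.Adj w b) (hwa' : G.Adj w' a) (hwb' : G.Adj w' b) :
    G.TwoApex := by
  classical
  exact twoApex_of_sum_lt hV hsum (a := a) (b := b) (p := w) (q := w')
      (by grind [SimpleGraph.ne_of_adj]) (by grind) (by grind) (by grind [SimpleGraph.adj_comm])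

theorem twoApex_of_one_lt_card_inter [DecidableEq V] {t : Finset V} (hV : Fintype.card V = 9)
    (hsum : ∑ v, G.degree v = 40) (hw : G.degree w = 4) (hw' : G.degree w' = 4)
    (ht : ∀ b ∈ t, G.degree b = 5) (hww' : w ≠ w')
    (hcard : 1 < #(G.neighborFinset w ∩ t ∩ (G.neighborFinset w' ∩ t))) : G.TwoApex := by
  obtain ⟨b, hb, c, hc, hbc⟩ := one_lt_card.1 hcard
  simp only [mem_inter, mem_neighborFinset] at hb hc
  exact twoApex_of_two_common_neighbors hV hsum hw hw' (ht b hb.1.2) (ht c hc.1.2) hww' hbc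
    hb.1.1 hc.1.1 hb.2.1 hc.2.1

theorem exists_degree_eq_four (hV : Fintype.card V = 9) (hsum : ∑ v, G.degree v = 40)
    (hge : ∀ v ≠ u, 4 ≤ G.degree v) (hle : ∀ v, G.degree v ≤ 5) (hu : G.degree u = 3) :
    ∃ x y z, [u, x, y, z].Nodup ∧ G.degree x = 4 ∧ G.degree y = 4 ∧ G.degree z = 4 ∧
      ∀ v ∉ [u, x, y, z], G.degree v = 5 := by
  classical
  have hthree : ({v | G.degree v = 3} : Finset V) = {u} := by
    ext v
    grind
  have hcard := card_degree_eq_four_add (G := G) (by grind) hle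
  rw [hthree, card_singleton, hsum, hV] at hcard
  obtain ⟨x, y, z, hxy, hxz, hyz, hfour⟩ :=
    card_eq_three.1 (show #{v | G.degree v = 4} = 3 by omega)
  have hmem (v) : G.degree v = 4 ↔ v = x ∨ v = y ∨ v = z := by
    simpa using congrArg (v ∈ ·) hfour
  exact ⟨x, y, z, by grind⟩

theorem twoApex_of_not_subset_neighborFinset [DecidableEq V] {w'' : V} (hV : Fintype.card V = 9)
    (hsum : ∑ v, G.degree v = 40) (hu : G.degree u = 3) (hw : G.degree w = 4)
    (hw' : G.degree w' = 4) (hfive : ∀ v ∉ [u, w, w', w''], G.degree v = 5)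
    (hww' : G.Adj w w') (huw' : G.Adj u w')
    (hsub : ¬{u, w', w''} ⊆ G.neighborFinset w) : G.TwoApex := by
  by_contra hG
  have hmem {b} (hb : b ∈ G.neighborFinset w \ {u, w', w''}) :
      G.degree b = 5 ∧ G.Adj w b ∧ G.Adj w' b := by
    have hwb : G.Adj w b := by grind [mem_neighborFinset]
    have hdb : G.degree b = 5 := by grind [SimpleGraph.irrefl]
    refine ⟨hdb, hwb, ?_⟩
    by_contra hbw'
    exact hG (twoApex_of_not_adj_of_adj hV hsum hu hw hw' hdb hww' huw' hwb
      fun h ↦ hbw' h.symm)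
  have hone : #(G.neighborFinset w \ {u, w', w''}) ≤ 1 := by
    refine card_le_one.2 fun a ha b hb ↦ ?_
    by_contra hab
    obtain ⟨hda, hwa, hwa'⟩ := hmem ha
    obtain ⟨hdb, hwb, hwb'⟩ := hmem hb
    exact hG (twoApex_of_two_common_neighbors hV hsum hw hw' hda hdb hww'.ne hab hwa hwb hwa' hwb')
  have hcard := card_inter_add_card_sdiff (G.neighborFinset w) {u, w', w''}
  rw [card_neighborFinset_eq_degree, hw] at hcard
  have hthree : #{u, w', w''} ≤ 3 := card_le_three
  exact hsub (inter_eq_right.1 (eq_of_subset_of_card_le inter_subset_right (by omega)))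

theorem twoApex_of_adj_of_adj_of_adj {w'' : V} (hV : Fintype.card V = 9)
    (hsum : ∑ v, G.degree v = 40) (hne : [u, w, w', w''].Nodup) (hu : G.degree u = 3)
    (hw : G.degree w = 4) (hw' : G.degree w' = 4) (hw'' : G.degree w'' = 4)
    (hfive : ∀ v ∉ [u, w, w', w''], G.degree v = 5) (huw : G.Adj u w) (huw' : G.Adj u w')
    (huw'' : G.Adj u w'') (hww' : G.Adj w w') (hww'' : G.Adj w w'') : G.TwoApex := by
  classical
  by_contra hG
  have hNu : {w, w', w''} = G.neighborFinset u := by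
    refine eq_of_subset_of_card_le (by simp [insert_subset_iff, huw, huw', huw'']) ?_
    rw [card_neighborFinset_eq_degree, hu, card_eq_three.2 ⟨w, w', w'', by grind⟩]
  have hcard : #([u, w, w', w''].toFinset)ᶜ = 5 := by
    rw [card_compl, hV, List.toFinset_card_of_nodup hne]
    rfl
  have hwadj : [u, w, w', w''].toFinsetᶜ ⊆ G.neighborFinset w := by
    intro b hb
    by_contra hwb
    have hdb : G.degree b = 5 := hfive b (by simpa using hb)
    have hnot {x} (hx : G.degree x = 4) (hxw : G.Adj w x) : ¬G.Adj b x := fun h ↦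
      hG <| twoApex_of_not_adj_of_adj hV hsum hu hx hw hdb hxw.symm huw h.symm
        fun h ↦ hwb ((mem_neighborFinset _ _ _).2 h.symm)
    have hub : ¬G.Adj b u := fun h ↦ by
      have := (mem_neighborFinset _ _ _).2 h.symm
      grind
    have hNb : G.neighborFinset b ⊆ [u, w, w', w''].toFinsetᶜ.erase b := by
      intro x hx
      rw [mem_neighborFinset] at hx
      simp only [mem_erase, mem_compl, List.mem_toFinset, List.mem_cons, List.not_mem_nil, or_false]
      refine ⟨hx.ne', ?_⟩
      rintro (rfl | rfl | rfl | rfl)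
      exacts [hub hx, hwb ((mem_neighborFinset _ _ _).2 hx.symm), hnot hw' hww' hx,
        hnot hw'' hww'' hx]
    have := card_le_card hNb
    rw [card_erase_of_mem hb, hcard, card_neighborFinset_eq_degree, hdb] at this
    omega
  have := card_le_card hwadj
  rw [hcard, card_neighborFinset_eq_degree, hw] at this
  omega

theorem twoApex_of_adj_of_adj (hV : Fintype.card V = 9) (hsum : ∑ v, G.degree v = 40)
    (hge : ∀ v ≠ u, 4 ≤ G.degree v) (hle : ∀ v, G.degree v ≤ 5) (hu : G.degree u = 3)
    (hw : G.degree w = 4) (hw' : G.degree w' = 4) (hww' : G.Adj w w') (huw' : G.Adj u w') :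
    G.TwoApex := by
  classical
  by_contra hG
  obtain ⟨w'', hne, hw'', hfive⟩ : ∃ w'', [u, w, w', w''].Nodup ∧ G.degree w'' = 4 ∧
      ∀ v ∉ [u, w, w', w''], G.degree v = 5 := by
    obtain ⟨x, y, z, hne, hx, hy, hz, hfive⟩ := exists_degree_eq_four hV hsum hge hle hu
    have hmem {v} (hv : G.degree v = 4) : v = x ∨ v = y ∨ v = z := by grind
    have := hww'.ne
    have := huw'.ne
    obtain rfl | rfl | rfl := hmem hw <;> obtain rfl | rfl | rfl := hmem hw' <;> grind
  have hsub {p q r : V} (hperm : [u, p, q, r].Perm [u, w, w', w'']) (hp : G.degree p = 4)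
      (hq : G.degree q = 4) (hpq : G.Adj p q) (huq : G.Adj u q) :
      {u, q, r} ⊆ G.neighborFinset p := by
    by_contra h
    exact hG (twoApex_of_not_subset_neighborFinset hV hsum hu hp hq
      (fun v hv ↦ hfive v (hperm.mem_iff.not.1 hv)) hpq huq h)
  have hperm₁ : [u, w', w, w''].Perm [u, w, w', w''] := (List.Perm.swap _ _ _).cons u
  have hperm₂ : [u, w'', w', w].Perm [u, w, w', w''] := by grind
  have hw_sub := hsub (.refl _) hw hw' hww' huw'
  simp only [insert_subset_iff, singleton_subset_iff, mem_neighborFinset] at hw_sub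
  obtain ⟨hwu, -, hww''⟩ := hw_sub
  have hw'_sub := hsub hperm₁ hw' hw hww'.symm hwu.symm
  simp only [insert_subset_iff, singleton_subset_iff, mem_neighborFinset] at hw'_sub
  have hw''_sub := hsub hperm₂ hw'' hw' hw'_sub.2.2.symm huw'
  simp only [insert_subset_iff, singleton_subset_iff, mem_neighborFinset] at hw''_sub
  exact hG (twoApex_of_adj_of_adj_of_adj hV hsum hne hu hw hw' hw'' hfive hwu.symm huw'
    hw''_sub.1.symm hww' hww'')

theorem sum_card_neighborFinset_inter_le (hV : Fintype.card V = 9) (hsum : ∑ v, G.degree v = 40)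
    (hge : ∀ v ≠ u, 4 ≤ G.degree v) (hu : G.degree u = 3) {x y z : V} (hne : [x, y, z].Nodup)
    (hx : G.degree x = 4) (hy : G.degree y = 4) (hz : G.degree z = 4) (hG : ¬G.TwoApex)
    [DecidableEq V] {t : Finset V} (ht : ∀ b ∈ t, G.degree b = 5) :
    #(G.neighborFinset x ∩ t) + #(G.neighborFinset y ∩ t) + #(G.neighborFinset z ∩ t) +
      #(G.neighborFinset u ∩ t) ≤ #t + 3 := by
  have hdisj {w} (hw : G.degree w = 4) :
      Disjoint (G.neighborFinset w ∩ t) (G.neighborFinset u ∩ t) := by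
    refine disjoint_left.2 fun b hbw hbu ↦ ?_
    simp only [mem_inter, mem_neighborFinset] at hbw hbu
    exact hG (twoApex_of_common_neighbor hV hsum hge hu hw (ht b hbw.2) hbu.1 hbw.1)
  have hone {w w'} (hw : G.degree w = 4) (hw' : G.degree w' = 4) (hww' : w ≠ w') :
      #(G.neighborFinset w ∩ t ∩ (G.neighborFinset w' ∩ t)) ≤ 1 := by
    by_contra! h
    exact hG (twoApex_of_one_lt_card_inter hV hsum hw hw' ht hww' h)
  have hunion := card_union_of_disjoint <| disjoint_union_left.2
    ⟨disjoint_union_left.2 ⟨hdisj hx, hdisj hy⟩, hdisj hz⟩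
  have hunion_le : #((G.neighborFinset x ∩ t ∪ G.neighborFinset y ∩ t ∪
      G.neighborFinset z ∩ t) ∪ G.neighborFinset u ∩ t) ≤ #t :=
    card_le_card (by simp only [union_subset_iff, inter_subset_right, and_self])
  have := card_add_card_add_card_le (G.neighborFinset x ∩ t) (G.neighborFinset y ∩ t)
    (G.neighborFinset z ∩ t)
  have := hone hx hy (by grind)
  have := hone hx hz (by grind)
  have := hone hy hz (by grind)
  omega

-- The vertices of degree below five span at most three edges and have at most eight neighbours
-- counted with multiplicity among the others, but their degrees sum to fifteen.
theorem twoApex_of_degree_eq_three (hV : Fintype.card V = 9)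
    (hsum : ∑ v, G.degree v = 40) (hge : ∀ v ≠ u, 4 ≤ G.degree v) (hle : ∀ v, G.degree v ≤ 5)
    (hu : G.degree u = 3) : G.TwoApex := by
  classical
  by_contra hG
  obtain ⟨x, y, z, hne, hx, hy, hz, hfive⟩ := exists_degree_eq_four hV hsum hge hle hu
  have houtside := sum_card_neighborFinset_inter_le hV hsum hge hu (List.nodup_cons.1 hne).2
    hx hy hz hG (t := [u, x, y, z].toFinsetᶜ) fun b hb ↦ hfive b (by simpa using hb)
  rw [card_compl, hV, List.toFinset_card_of_nodup hne] at houtside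
  have hadj {p q} (hp : G.degree p = 4) (hq : G.degree q = 4) :
      (if G.Adj p q then 1 else 0) + (if G.Adj u q then 1 else 0) ≤ 1 := by
    have := fun h h' ↦ hG (twoApex_of_adj_of_adj hV hsum hge hle hu hp hq h h')
    split_ifs <;> grind
  have hsplit (v) := card_neighborFinset_inter_compl_add_sum (G := G) v hne
  have hu_split := hsplit u
  have hx_split := hsplit x
  have hy_split := hsplit y
  have hz_split := hsplit z
  have hxy := hadj hx hy
  have hxz := hadj hx hz
  have hyx := hadj hy hx
  have hyz := hadj hy hz
  have hzx := hadj hz hx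
  have hzy := hadj hz hy
  simp only [List.map_cons, List.map_nil, List.sum_cons, List.sum_nil, List.length_cons,
    List.length_nil, SimpleGraph.irrefl, if_false, G.adj_comm _ u, G.adj_comm y x, G.adj_comm z x,
    G.adj_comm z y] at houtside hu_split hx_split hy_split hz_split hxy hyx hxz hzx hyz hzy
  omega

end DegreeThree

section DegreeFourFive

variable {V : Type*} [Fintype V] {G : SimpleGraph V} [DecidableRel G.Adj]
  {a b c d e p q r x y : V}

theorem twoApex_of_adj_or_adj (hV : Fintype.card V = 9) (hp : G.degree p = 4) (hq : G.degree q = 4)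
    (hr : G.degree r = 4) (hpq : p ≠ q) (hab : a ≠ b) (hrpq : r ∉ [p, q, a, b]) (hpa : G.Adj p a)
    (hpb : G.Adj p b) (hqa : G.Adj q a) (hqb : G.Adj q b) (h : G.Adj r a ∨ G.Adj r b) :
    G.TwoApex := by
  classical
  exact twoApex_of_degree_le hV (a := a) (b := b) (p := p) (q := q) (r := r)
      (by grind [hpa.ne, hpb.ne, hqa.ne, hqb.ne]) (by grind) (by grind) (by grind)

theorem twoApex_of_not_adj (hV : Fintype.card V = 9) (hsum : ∑ v, G.degree v = 40)
    (hp : G.degree p = 4) (hq : G.degree q = 4) (ha : G.degree a = 4) (hb : G.degree b = 5)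
    (hpq : p ≠ q) (hab : ¬G.Adj a b) (hpa : G.Adj p a) (hpb : G.Adj p b) (hqa : G.Adj q a)
    (hqb : G.Adj q b) : G.TwoApex := by
  classical
  exact twoApex_of_sum_lt hV hsum (a := a) (b := b) (p := p) (q := q)
      (by grind [SimpleGraph.ne_of_adj]) (by grind) (by grind) (by grind)

theorem twoApex_of_two_triangles (hV : Fintype.card V = 9) (hsum : ∑ v, G.degree v = 40)
    (hne : [p, q, a, x, y, b, c, d, e].Nodup) (hp : G.degree p = 4) (hq : G.degree q = 4)
    (ha : G.degree a = 4) (hx : G.degree x = 4) (hy : G.degree y = 4) (hc : G.degree c = 5)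
    (hd : G.degree d = 5) (hpq : G.Adj p q) (hpa : G.Adj p a) (hqa : G.Adj q a)
    (hpb : G.Adj p b) (hqb : G.Adj q b) (hab : G.Adj a b) : G.TwoApex := by
  classical
  by_contra hG
  have hadj {v} (hv : v ∉ [p, q, a, b]) (hdv : G.degree v = 4) :
      ¬G.Adj v p ∧ ¬G.Adj v q ∧ ¬G.Adj v a ∧ ¬G.Adj v b := by
    refine ⟨fun h ↦ hG ?_, fun h ↦ hG ?_, fun h ↦ hG ?_, fun h ↦ hG ?_⟩
    · exact twoApex_of_adj_or_adj hV hq ha hdv hqa.ne hpb.ne (by grind) hpq.symm hqb hpa.symm hab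
        (.inl h)
    · exact twoApex_of_adj_or_adj hV hp ha hdv hpa.ne hqb.ne (by grind) hpq hpb hqa.symm hab
        (.inl h)
    · exact twoApex_of_adj_or_adj hV hp hq hdv hpq.ne hab.ne hv hpa hpb hqa hqb (.inl h)
    · exact twoApex_of_adj_or_adj hV hp hq hdv hpq.ne hab.ne hv hpa hpb hqa hqb (.inr h)
  have hx_sum := sum_map_adj_eq_degree (G := G) x hne hV
  have hy_sum := sum_map_adj_eq_degree (G := G) y hne hV
  simp only [List.map_cons, List.map_nil, List.sum_cons, List.sum_nil, SimpleGraph.irrefl,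
    hadj (v := x) (by grind) hx, hadj (v := y) (by grind) hy, if_false] at hx_sum hy_sum
  exact hG (twoApex_of_two_common_neighbors (w := x) (w' := y) (a := c) (b := d) hV hsum hx hy hc hd
    (by grind) (by grind) (by grind) (by grind) (by grind) (by grind))

theorem degree_isolate_isolate_add_card_lt [DecidableEq V] (hclique : G.IsClique (G.neighborSet r))
    {s : Finset V} (hs : s ⊆ G.neighborFinset r) {v : V} (hrv : G.Adj r v) (hvs : v ∉ s) :
    (isolate (isolate G s) {r}).degree v + #s < G.degree v := by
  have hrs : r ∉ s := fun h ↦ by simpa using hs h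
  have hvr : v ∉ ({r} : Finset V) := by simpa using hrv.ne'
  have hmem : r ∈ (isolate G s).neighborFinset v :=
    (mem_neighborFinset _ _ _).2 ⟨hrv.symm, hvs, hrs⟩
  have hsub : s ⊆ G.neighborFinset v := fun z hz ↦ by
    rw [mem_neighborFinset]
    exact hclique hrv (by simpa using hs hz) (ne_of_mem_of_not_mem hz hvs).symm
  have h₁ := degree_isolate_add_card_inter (G := isolate G s) hvr
  have h₂ := degree_isolate_add_card_inter (G := G) hvs
  rw [inter_singleton_of_mem hmem, card_singleton] at h₁
  rw [inter_eq_right.2 hsub] at h₂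
  omega

theorem isPlanar_isolate_pair_of_isClique (hV : Fintype.card V = 9) (hr : G.degree r = 4)
    (hclique : G.IsClique (G.neighborSet r)) (hle : ∀ z ∈ G.neighborFinset r, G.degree z ≤ 5)
    {s : Finset V} (hs : s ⊆ G.neighborFinset r) (hcard : #s = 2) : (isolate G s).IsPlanar := by
  classical
  have hrs : r ∉ s := fun h ↦ by simpa using hs h
  have hdr : (isolate G s).degree r = 2 := by
    rw [← card_neighborFinset_eq_degree, neighborFinset_isolate_of_notMem hrs,
      card_sdiff_of_subset hs, card_neighborFinset_eq_degree, hr, hcard]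
  refine isPlanar_of_isPlanar_isolate (v := r) (fun y hy z hz hyz ↦ ?_) hdr.le ?_
  · exact ⟨hclique hy.1 hz.1 hyz, hy.2.2, hz.2.2⟩
  have hlow {v} (hv : v ∈ insert r (G.neighborFinset r)) :
      (isolate (isolate G s) {r}).degree v ≤ 2 := by
    by_cases hvr : v ∈ ({r} : Finset V)
    · simp [degree_isolate_of_mem hvr]
    by_cases hvs : v ∈ s
    · have := degree_isolate_add_card_inter (G := isolate G s) hvr
      rw [degree_isolate_of_mem hvs] at this
      omega
    replace hv := mem_of_mem_insert_of_ne hv (by simpa using hvr)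
    have := degree_isolate_isolate_add_card_lt hclique hs ((mem_neighborFinset _ _ _).1 hv) hvs
    have := hle v hv
    omega
  have hbound {k} (hk : 3 ≤ k) : #{v | k ≤ (isolate (isolate G s) {r}).degree v} ≤ 4 := by
    have hfour : #(insert r (G.neighborFinset r))ᶜ = 4 := by
      rw [card_compl, card_insert_of_notMem (by simp), card_neighborFinset_eq_degree, hV, hr]
    refine (card_le_card fun v hv ↦ mem_compl.2 fun hv' ↦ ?_).trans hfour.le
    exact absurd (hlow hv') (not_le.2 (hk.trans (mem_filter.1 hv).2))
  exact isPlanar_of_card_degree_le ((hbound le_rfl).trans (by omega)) (hbound (by omega))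

theorem twoApex_of_isClique_neighborSet (hV : Fintype.card V = 9) (hr : G.degree r = 4)
    (hclique : G.IsClique (G.neighborSet r)) (hle : ∀ z ∈ G.neighborFinset r, G.degree z ≤ 5) :
    G.TwoApex := by
  classical
  obtain ⟨s, hs, hcard⟩ := exists_subset_card_eq (s := G.neighborFinset r) (n := 2)
    (by rw [card_neighborFinset_eq_degree, hr]; omega)
  exact twoApex_of_isPlanar_isolate hcard.le
    (isPlanar_isolate_pair_of_isClique hV hr hclique hle hs hcard)

theorem exists_fifth_degree_eq_four [DecidableEq V] (hV : Fintype.card V = 9)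
    (hsum : ∑ v, G.degree v = 40)
    (hfour : ∀ v, 4 ≤ G.degree v) (hle : ∀ v, G.degree v ≤ 5) {s : Finset V} (hs : #s = 4)
    (hdeg : ∀ v ∈ s, G.degree v = 4) :
    ∃ r ∉ s, G.degree r = 4 ∧ ∀ v ∉ insert r s, G.degree v = 5 := by
  have hcard := card_degree_eq_four hV hsum hfour hle
  have hsub : s ⊆ ({v | G.degree v = 4} : Finset V) := fun v hv ↦ by simpa using hdeg v hv
  rw [← card_sdiff_add_card_eq_card hsub] at hcard
  obtain ⟨r, hr⟩ := card_eq_one.1 (show #(({v | G.degree v = 4} : Finset V) \ s) = 1 by omega)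
  have hmem (v) : G.degree v = 4 ∧ v ∉ s ↔ v = r := by simpa using congrArg (v ∈ ·) hr
  refine ⟨r, ((hmem r).2 rfl).2, ((hmem r).2 rfl).1, fun v hv ↦ ?_⟩
  rw [mem_insert, not_or] at hv
  have hne : G.degree v ≠ 4 := fun h ↦ hv.1 ((hmem v).1 ⟨h, hv.2⟩)
  have := hfour v
  have := hle v
  omega

theorem twoApex_of_disjoint_neighborFinset [DecidableEq V] {s : Finset V} (hV : Fintype.card V = 9)
    (hsum : ∑ v, G.degree v = 40) (hs : #s = 4) (hdeg : ∀ v ∈ s, G.degree v = 4)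
    (hr : G.degree r = 4) (hrs : r ∉ s) (hfive : ∀ v ∉ insert r s, G.degree v = 5)
    (hdisj : Disjoint (G.neighborFinset r) s) : G.TwoApex := by
  by_contra hG
  have hcard : #(G.neighborFinset r) = 4 := by rw [card_neighborFinset_eq_degree, hr]
  have hNr : G.neighborFinset r = (insert r s)ᶜ := by
    refine eq_of_subset_of_card_le (fun v hv ↦ ?_) ?_
    · rw [mem_compl, mem_insert, not_or]
      exact ⟨((mem_neighborFinset _ _ _).1 hv).ne', disjoint_left.1 hdisj hv⟩
    · rw [card_compl, card_insert_of_notMem hrs, hV, hs, hcard]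
  have hfive_nbr {v} (hv : v ∈ G.neighborFinset r) : G.degree v = 5 :=
    hfive v (mem_compl.1 (hNr ▸ hv))
  have hcompl : (G.neighborFinset r ∪ s)ᶜ ⊆ {r} := by
    intro v
    simp only [hNr, mem_compl, mem_union, mem_insert, mem_singleton]
    tauto
  have hone {w} (hw : w ∈ s) : #(G.neighborFinset w ∩ G.neighborFinset r) ≤ 1 := by
    by_contra! h
    exact hG (twoApex_of_one_lt_card_inter hV hsum (hdeg w hw) hr (fun _ ↦ hfive_nbr)
      (ne_of_mem_of_not_mem hw hrs) (by rwa [inter_self, inter_assoc, inter_self]))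
  have hclique : G.IsClique (G.neighborFinset r) :=
    isClique_of_forall_card_inter_le_one (card_le_card hcompl) (hs.trans hcard.symm).le
      (fun z hz ↦ by rw [hcard, hfive_nbr hz]) fun w hw ↦ hone hw
  rw [coe_neighborFinset] at hclique
  exact hG (twoApex_of_isClique_neighborSet hV hr hclique fun z hz ↦ (hfive_nbr hz).le)

theorem twoApex_of_four_cycle (hV : Fintype.card V = 9) (hsum : ∑ v, G.degree v = 40)
    (hfour : ∀ v, 4 ≤ G.degree v) (hle : ∀ v, G.degree v ≤ 5) (hp : G.degree p = 4)
    (hq : G.degree q = 4) (ha : G.degree a = 4) (hb : G.degree b = 4) (hpq : p ≠ q) (hab : a ≠ b)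
    (hpa : G.Adj p a) (hpb : G.Adj p b) (hqa : G.Adj q a) (hqb : G.Adj q b) : G.TwoApex := by
  classical
  by_contra hG
  have hcard : #{p, q, a, b} = 4 :=
    card_eq_four.2 ⟨p, q, a, b, hpq, hpa.ne, hpb.ne, hqa.ne, hqb.ne, hab, rfl⟩
  have hdeg : ∀ v ∈ ({p, q, a, b} : Finset V), G.degree v = 4 := by simp [hp, hq, ha, hb]
  obtain ⟨r, hrs, hr, hfive⟩ := exists_fifth_degree_eq_four hV hsum hfour hle hcard hdeg
  refine hG (twoApex_of_disjoint_neighborFinset hV hsum hcard hdeg hr hrs hfive ?_)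
  simp only [mem_insert, mem_singleton, not_or] at hrs
  have hra : ¬(G.Adj r a ∨ G.Adj r b) := fun h ↦
    hG (twoApex_of_adj_or_adj hV hp hq hr hpq hab (by simp [hrs]) hpa hpb hqa hqb h)
  have hrp : ¬(G.Adj r p ∨ G.Adj r q) := fun h ↦
    hG (twoApex_of_adj_or_adj hV ha hb hr hab hpq (by simp [hrs]) hpa.symm hqa.symm hpb.symm
      hqb.symm h)
  simp only [disjoint_insert_right, disjoint_singleton_right, mem_neighborFinset]
  tauto

theorem twoApex_of_three_common_neighbors {v : V} (hV : Fintype.card V = 9)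
    (hsum : ∑ v, G.degree v = 40) (hfour : ∀ v, 4 ≤ G.degree v) (hle : ∀ v, G.degree v ≤ 5)
    (hp : G.degree p = 4) (hq : G.degree q = 4) (ha : G.degree a = 4) (hb : G.degree b = 5)
    (hpq : p ≠ q) (hav : a ≠ v) (hbv : b ≠ v) (hpa : G.Adj p a) (hpb : G.Adj p b)
    (hpv : G.Adj p v) (hqa : G.Adj q a) (hqb : G.Adj q b) (hqv : G.Adj q v) : G.TwoApex := by
  obtain hv | hv := (hfour v).eq_or_lt
  · exact twoApex_of_four_cycle hV hsum hfour hle hp hq ha hv.symm hpq hav hpa hpv hqa hqv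
  · exact twoApex_of_two_common_neighbors hV hsum hp hq hb (le_antisymm (hle v) hv) hpq hbv hpb hpv
      hqb hqv

theorem not_adj_and_forall_adj_add_adj_eq_one (hV : Fintype.card V = 9)
    (hsum : ∑ v, G.degree v = 40) (hfour : ∀ v, 4 ≤ G.degree v) (hle : ∀ v, G.degree v ≤ 5)
    (hne : [p, q, a, x, y, b, c, d, e].Nodup) (hp : G.degree p = 4) (hq : G.degree q = 4)
    (ha : G.degree a = 4) (hb : G.degree b = 5) (hc : G.degree c = 5) (hpq : ¬G.Adj p q)
    (hpa : G.Adj p a) (hqa : G.Adj q a) (hpb : G.Adj p b) (hqb : G.Adj q b) (hab : G.Adj a b)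
    (hac : G.Adj a c) (hG : ¬G.TwoApex) : ¬G.Adj p c ∧ ¬G.Adj q c ∧ ∀ v ∈ [x, y, d, e],
      (if G.Adj p v then 1 else 0) + (if G.Adj q v then 1 else 0) = 1 := by
  classical
  have hdist : p ≠ q ∧ b ≠ c ∧ (a ≠ x ∧ b ≠ x) ∧ (a ≠ y ∧ b ≠ y) ∧ (a ≠ d ∧ b ≠ d) ∧
      (a ≠ e ∧ b ≠ e) := by
    simp only [List.nodup_cons, List.mem_cons, List.not_mem_nil, or_false, not_or] at hne
    simp only [hne, ne_eq, not_false_iff, and_self, eq_comm (a := b) (b := x),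
      eq_comm (a := b) (b := y)]
  obtain ⟨hpq_ne, hbc, hx_ne, hy_ne, hd_ne, he_ne⟩ := hdist
  have hpc : ¬G.Adj p c := fun h ↦ hG <|
    twoApex_of_two_common_neighbors hV hsum ha hp hb hc hpa.ne' hbc hab hac hpb h
  have hqc : ¬G.Adj q c := fun h ↦ hG <|
    twoApex_of_two_common_neighbors hV hsum ha hq hb hc hqa.ne' hbc hab hac hqb h
  have hcommon {v} (hav : a ≠ v) (hbv : b ≠ v) :
      (if G.Adj p v then 1 else 0) + (if G.Adj q v then 1 else 0) ≤ 1 := by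
    have hnot (h : G.Adj p v) (h' : G.Adj q v) : False := hG <|
      twoApex_of_three_common_neighbors hV hsum hfour hle hp hq ha hb hpq_ne hav hbv hpa hpb h
        hqa hqb h'
    split_ifs with h h' <;> first | omega | exact (hnot h h').elim
  have hp_sum := sum_map_adj_eq_degree (G := G) p hne hV
  have hq_sum := sum_map_adj_eq_degree (G := G) q hne hV
  simp only [List.map_cons, List.map_nil, List.sum_cons, List.sum_nil, SimpleGraph.irrefl, if_false,
    G.adj_comm q p, hpq, hpa, hqa, hpb, hqb, hpc, hqc, hp, hq, if_true] at hp_sum hq_sum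
  have hx := hcommon hx_ne.1 hx_ne.2
  have hy := hcommon hy_ne.1 hy_ne.2
  have hd := hcommon hd_ne.1 hd_ne.2
  have he := hcommon he_ne.1 he_ne.2
  simp only [List.forall_mem_cons, List.not_mem_nil, false_implies, implies_true, and_true]
  exact ⟨hpc, hqc, by omega, by omega, by omega, by omega⟩

theorem not_adj_of_adj_add_adj_eq_one {v : V} (hV : Fintype.card V = 9)
    (hsum : ∑ v, G.degree v = 40) (hp : G.degree p = 4) (hq : G.degree q = 4)
    (ha : G.degree a = 4) (hc : G.degree c = 5) (hdv : G.degree v = 4) (hpq : p ≠ q)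
    (hv : v ∉ [p, q, a, b]) (hpa : G.Adj p a) (hqa : G.Adj q a) (hpb : G.Adj p b)
    (hqb : G.Adj q b) (hab : a ≠ b) (hac : G.Adj a c) (hpc : ¬G.Adj p c) (hqc : ¬G.Adj q c)
    (h : (if G.Adj p v then 1 else 0) + (if G.Adj q v then 1 else 0) = 1) (hG : ¬G.TwoApex) :
    ¬G.Adj v a ∧ ¬G.Adj v b ∧ ¬G.Adj v c := by
  rw [← and_assoc, ← not_or]
  refine ⟨fun h ↦ hG (twoApex_of_adj_or_adj hV hp hq hdv hpq hab hv hpa hpb hqa hqb h),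
    fun hvc ↦ hG ?_⟩
  have hav : a ≠ v := by
    rintro rfl
    simp at hv
  have hor : G.Adj p v ∨ G.Adj q v := by
    by_contra h'
    simp [not_or.1 h'] at h
  obtain hpv | hqv := hor
  · exact twoApex_of_not_adj hV hsum ha hdv hp hc hav hpc hpa.symm hac hpv.symm hvc
  · exact twoApex_of_not_adj hV hsum ha hdv hq hc hav hqc hqa.symm hac hqv.symm hvc

theorem twoApex_of_adj_of_not_adj (hV : Fintype.card V = 9) (hsum : ∑ v, G.degree v = 40)
    (hfour : ∀ v, 4 ≤ G.degree v) (hle : ∀ v, G.degree v ≤ 5)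
    (hne : [p, q, a, x, y, b, c, d, e].Nodup) (hp : G.degree p = 4) (hq : G.degree q = 4)
    (ha : G.degree a = 4) (hx : G.degree x = 4) (hy : G.degree y = 4) (hb : G.degree b = 5)
    (hc : G.degree c = 5) (hd : G.degree d = 5) (he : G.degree e = 5) (hpq : ¬G.Adj p q)
    (hpa : G.Adj p a) (hqa : G.Adj q a) (hpb : G.Adj p b) (hqb : G.Adj q b) (hab : G.Adj a b)
    (hac : G.Adj a c) : G.TwoApex := by
  classical
  by_contra hG
  obtain ⟨hxy, hde⟩ : x ≠ y ∧ d ≠ e := by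
    simp only [List.nodup_cons, List.mem_cons, List.not_mem_nil, or_false, not_or] at hne
    simp only [hne, ne_eq, not_false_iff, and_self]
  obtain ⟨hpc, hqc, hone⟩ := not_adj_and_forall_adj_add_adj_eq_one hV hsum hfour hle hne hp hq ha hb
    hc hpq hpa hqa hpb hqb hab hac hG
  simp only [List.forall_mem_cons, List.not_mem_nil, false_implies, implies_true, and_true] at hone
  obtain ⟨hx_one, hy_one, -, -⟩ := hone
  have hx_not := not_adj_of_adj_add_adj_eq_one hV hsum hp hq ha hc hx (by grind) (by grind) hpa hqa
    hpb hqb hab.ne hac hpc hqc hx_one hG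
  have hy_not := not_adj_of_adj_add_adj_eq_one hV hsum hp hq ha hc hy (by grind) (by grind) hpa hqa
    hpb hqb hab.ne hac hpc hqc hy_one hG
  have hx_sum := sum_map_adj_eq_degree (G := G) x hne hV
  have hy_sum := sum_map_adj_eq_degree (G := G) y hne hV
  simp only [List.map_cons, List.map_nil, List.sum_cons, List.sum_nil, SimpleGraph.irrefl, if_false,
    hx_not, hy_not, G.adj_comm _ p, G.adj_comm _ q, hx, hy] at hx_sum hy_sum
  have hx_adj : G.Adj x d ∧ G.Adj x e := by
    by_contra h
    split_ifs at hx_sum hx_one <;> first | omega | simp_all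
  have hy_adj : G.Adj y d ∧ G.Adj y e := by
    by_contra h
    split_ifs at hy_sum hy_one <;> first | omega | simp_all
  exact hG (twoApex_of_two_common_neighbors hV hsum hx hy hd he hxy hde hx_adj.1 hx_adj.2
    hy_adj.1 hy_adj.2)

theorem exists_nodup_degree_eq_four_and_five (hV : Fintype.card V = 9)
    (hsum : ∑ v, G.degree v = 40) (hfour : ∀ v, 4 ≤ G.degree v) (hle : ∀ v, G.degree v ≤ 5)
    (hne : [p, q, a].Nodup) (hp : G.degree p = 4) (hq : G.degree q = 4) (ha : G.degree a = 4)
    (hb : G.degree b = 5) :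
    ∃ x y c d e, [p, q, a, x, y, b, c, d, e].Nodup ∧ G.degree x = 4 ∧ G.degree y = 4 ∧
      G.degree c = 5 ∧ G.degree d = 5 ∧ G.degree e = 5 := by
  classical
  have hcard := card_degree_eq_four hV hsum hfour hle
  have hpqa : #{p, q, a} = 3 := card_eq_three.2 ⟨p, q, a, by simpa [and_assoc] using hne⟩
  have hsub : {p, q, a} ⊆ ({v | G.degree v = 4} : Finset V) := by
    simp only [insert_subset_iff, singleton_subset_iff, mem_filter_univ, hp, hq, ha, and_self]
  rw [← card_sdiff_add_card_eq_card hsub, hpqa] at hcard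
  obtain ⟨x, y, hxy, hxy_eq⟩ :=
    card_eq_two.1 (show #(({v | G.degree v = 4} : Finset V) \ {p, q, a}) = 2 by omega)
  have hfive := card_degree_eq_five hV hsum hfour hle
  rw [← card_erase_add_one (a := b) (by simpa using hb)] at hfive
  obtain ⟨c, d, e, hcd, hce, hde, hcde⟩ := card_eq_three.1 (Nat.succ_injective hfive)
  have hx (v) : (G.degree v = 4 ∧ ¬(v = p ∨ v = q ∨ v = a)) ↔ v = x ∨ v = y := by
    simpa using congrArg (v ∈ ·) hxy_eq
  have hc (v) : (v ≠ b ∧ G.degree v = 5) ↔ v = c ∨ v = d ∨ v = e := by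
    simpa using congrArg (v ∈ ·) hcde
  have hx_mem := (hx x).2 (.inl rfl)
  have hy_mem := (hx y).2 (.inr rfl)
  have hc_mem := (hc c).2 (.inl rfl)
  have hd_mem := (hc d).2 (.inr (.inl rfl))
  have he_mem := (hc e).2 (.inr (.inr rfl))
  have hdisj : [p, q, a, x, y].Disjoint [b, c, d, e] := fun v hv hv' ↦ by
    have hv_four : ∀ v ∈ [p, q, a, x, y], G.degree v = 4 := by simp [*]
    have hv_five : ∀ v ∈ [b, c, d, e], G.degree v = 5 := by simp [*]
    have := hv_four v hv
    have := hv_five v hv'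
    omega
  exact ⟨x, y, c, d, e, List.nodup_append'.2 ⟨by grind, by grind, hdisj⟩, hx_mem.1, hy_mem.1,
    hc_mem.2, hd_mem.2, he_mem.2⟩

theorem twoApex_of_degree_eq_four_of_degree_eq_five (hV : Fintype.card V = 9)
    (hsum : ∑ v, G.degree v = 40) (hfour : ∀ v, 4 ≤ G.degree v) (hle : ∀ v, G.degree v ≤ 5)
    (hp : G.degree p = 4) (hq : G.degree q = 4) (ha : G.degree a = 4) (hb : G.degree b = 5)
    (hpq : p ≠ q) (hpa : G.Adj p a) (hpb : G.Adj p b) (hqa : G.Adj q a) (hqb : G.Adj q b) :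
    G.TwoApex := by
  classical
  by_contra hG
  have hab : G.Adj a b := by
    by_contra hab
    exact hG (twoApex_of_not_adj hV hsum hp hq ha hb hpq hab hpa hpb hqa hqb)
  obtain ⟨x, y, c, d, e, hne, hx, hy, hc, hd, he⟩ := exists_nodup_degree_eq_four_and_five hV hsum
    hfour hle (by simp [hpq, hpa.ne, hqa.ne]) hp hq ha hb
  by_cases hpq_adj : G.Adj p q
  · exact hG (twoApex_of_two_triangles hV hsum hne hp hq ha hx hy hc hd hpq_adj hpa hqa hpb hqb hab)
  have hmem : x ∉ [p, q, a, b] ∧ y ∉ [p, q, a, b] := by grind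
  have hax : ¬G.Adj a x := fun h ↦
    hG (twoApex_of_adj_or_adj hV hp hq hx hpq hab.ne hmem.1 hpa hpb hqa hqb (.inl h.symm))
  have hay : ¬G.Adj a y := fun h ↦
    hG (twoApex_of_adj_or_adj hV hp hq hy hpq hab.ne hmem.2 hpa hpb hqa hqb (.inl h.symm))
  have ha_sum := sum_map_adj_eq_degree (G := G) a hne hV
  simp only [List.map_cons, List.map_nil, List.sum_cons, List.sum_nil, SimpleGraph.irrefl, if_false,
    G.adj_comm a p, G.adj_comm a q, hpa, hqa, hab, hax, hay, ha, if_true] at ha_sum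
  obtain hac | had | hae : G.Adj a c ∨ G.Adj a d ∨ G.Adj a e := by
    by_contra h
    rw [not_or, not_or] at h
    simp [h] at ha_sum
  · exact hG (twoApex_of_adj_of_not_adj hV hsum hfour hle hne hp hq ha hx hy hb hc hd he hpq_adj hpa
      hqa hpb hqb hab hac)
  · have hne' := ((List.Perm.swap d c [e]).append_left [p, q, a, x, y, b]).nodup hne
    exact hG (twoApex_of_adj_of_not_adj hV hsum hfour hle hne' hp hq ha hx hy hb hd hc he hpq_adj
      hpa hqa hpb hqb hab had)
  · have hne' := ((List.perm_append_comm (l₁ := [c, d]) (l₂ := [e])).append_left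
      [p, q, a, x, y, b]).nodup hne
    exact hG (twoApex_of_adj_of_not_adj hV hsum hfour hle hne' hp hq ha hx hy hb he hc hd hpq_adj
      hpa hqa hpb hqb hab hae)

theorem twoApex_of_forall_four_le_degree (hV : Fintype.card V = 9) (hsum : ∑ v, G.degree v = 40)
    (hfour : ∀ v, 4 ≤ G.degree v) (hle : ∀ v, G.degree v ≤ 5) : G.TwoApex := by
  classical
  obtain ⟨p, hp, q, hq, hpq, hcommon⟩ := exists_one_lt_card_inter (G := G)
    (s := {v | G.degree v = 4}) <| by
      rw [sum_congr rfl (g := fun _ ↦ 4) fun v hv ↦ (mem_filter.1 hv).2, sum_const, hV,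
        offDiag_card, card_degree_eq_four hV hsum hfour hle]
      norm_num
  obtain ⟨a, ha, b, hb, hab⟩ := one_lt_card.1 hcommon
  simp only [mem_inter, mem_neighborFinset, mem_filter_univ] at hp hq ha hb
  have hdeg (v) : G.degree v = 4 ∨ G.degree v = 5 := by
    have := hfour v
    have := hle v
    omega
  obtain hda | hda := hdeg a <;> obtain hdb | hdb := hdeg b
  · exact twoApex_of_four_cycle hV hsum hfour hle hp hq hda hdb hpq hab ha.1 hb.1 ha.2 hb.2
  · exact twoApex_of_degree_eq_four_of_degree_eq_five hV hsum hfour hle hp hq hda hdb hpq ha.1 hb.1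
      ha.2 hb.2
  · exact twoApex_of_degree_eq_four_of_degree_eq_five hV hsum hfour hle hp hq hdb hda hpq hb.1 ha.1
      hb.2 ha.2
  · exact twoApex_of_two_common_neighbors hV hsum hp hq hda hdb hpq hab ha.1 hb.1 ha.2 hb.2

end DegreeFourFive

/-- Every finite simple graph with exactly 9 vertices and at most 20 edges is 2-apex. -/
theorem stmt2 {V : Type*} [Fintype V] (G : SimpleGraph V)
    (hV : Fintype.card V = 9) (hE : G.edgeSet.ncard ≤ 20) : G.TwoApex := by
  classical
  obtain ⟨L, hGL, hL⟩ := exists_ge_ncard_edgeSet_eq G hE (by rw [hV]; decide)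
  refine twoApex_of_le hGL ?_
  have hsum := sum_degree_eq_two_mul_ncard L
  rw [hL] at hsum
  by_cases! hle : ∃ v, 6 ≤ L.degree v
  · obtain ⟨v, hv⟩ := hle
    exact twoApex_of_six_le_degree hV hL.le hv
  replace hle (v) : L.degree v ≤ 5 := Nat.le_of_lt_succ (hle v)
  by_cases! htwo : ∃ u, L.degree u ≤ 2
  · obtain ⟨u, hu⟩ := htwo
    exact twoApex_of_degree_le_two hV hsum hle hu
  by_cases! hfour : ∀ v, 4 ≤ L.degree v
  · exact twoApex_of_forall_four_le_degree hV hsum hfour hle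
  obtain ⟨u, hu⟩ := hfour
  replace hu : L.degree u = 3 := by grind
  by_cases hw : ∃ w ≠ u, L.degree w = 3
  · obtain ⟨w, hwu, hw⟩ := hw
    exact twoApex_of_degree_eq_three_of_degree_eq_three hV hsum hle hwu hw hu
  · exact twoApex_of_degree_eq_three hV hsum (by grind) hle hu
end

section
/- Every finite simple graph with exactly 12 vertices and at most 20 edges is 2-apex. -/
/-!
Minors isomorphic to `K₅` or `K₃,₃` survive the smoothing of vertices of degree at most two. So
let the weight of a graph be the sum of its vertex degrees that are at least `3`; we show by
induction on `k` that a graph of weight at most `16 + 12 * k` can be made planar by deleting at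
most `k` vertices. A graph with `20` edges has weight at most `40`, which is the bound for `k = 2`.

For `k = 0` a count of branch sets suffices. In the induction step, deletion of a vertex of degree
at least `6` from a smoothed graph reduces the weight by at least `12`. If there is none, all
degrees are `0`, `3`, `4` or `5`, which leaves finitely many graphs. They are enumerated by
distinguishing one vertex at a time, where the other vertices are known only through their degrees
and their adjacencies to the distinguished ones; often this is enough to see that the deletion of
a distinguished vertex leaves small weight after smoothing. In a fully known graph a `K₃,₃` minor
is excluded by means of a triangle: since `K₃,₃` is triangle-free, the minor persists after removal
of a suitable edge of the triangle.
-/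

namespace SmallApex

variable {V V' W : Type*}

/-! ### Minors and smoothing -/

/-- The sets `f w` are the branch sets of a copy of `F` as a minor of `G`. -/
structure IsModel (F : SimpleGraph W) (G : SimpleGraph V) (f : W → Set V) : Prop where
  nonempty : ∀ w, (f w).Nonempty
  connected : ∀ w, (G.induce (f w)).Connected
  disjoint : Pairwise fun w₁ w₂ => Disjoint (f w₁) (f w₂)
  exists_adj : ∀ ⦃w₁ w₂⦄, F.Adj w₁ w₂ → ∃ v₁ ∈ f w₁, ∃ v₂ ∈ f w₂, G.Adj v₁ v₂

theorem isMinor_iff_exists_isModel {F : SimpleGraph W} {G : SimpleGraph V} :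
    F.IsMinor G ↔ ∃ f, IsModel F G f :=
  ⟨fun ⟨f, h₁, h₂, h₃, h₄⟩ => ⟨f, h₁, h₂, h₃, h₄⟩, fun ⟨f, h₁, h₂, h₃, h₄⟩ => ⟨f, h₁, h₂, h₃, h₄⟩⟩

theorem connected_of_forall_adj_reachable {G : SimpleGraph V} {G' : SimpleGraph V'} {ψ : V → V'}
    (hψ : Function.Surjective ψ) (h : ∀ x y, G.Adj x y → G'.Reachable (ψ x) (ψ y))
    (hG : G.Connected) : G'.Connected := by
  have reachable_map {x y : V} (hxy : G.Reachable x y) : G'.Reachable (ψ x) (ψ y) := by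
    obtain ⟨p⟩ := hxy
    induction p with
    | nil => exact .rfl
    | cons hadj _ ih => exact (h _ _ hadj).trans ih
  have := hG.nonempty.map ψ
  refine .mk fun x' y' => ?_
  obtain ⟨x, rfl⟩ := hψ x'
  obtain ⟨y, rfl⟩ := hψ y'
  exact reachable_map (hG.preconnected x y)

theorem exists_adj_of_connected_induce {G : SimpleGraph V} {s : Set V}
    (hs : (G.induce s).Connected) {v : V} (hv : v ∈ s) (hne : s ≠ {v}) : ∃ u ∈ s, G.Adj v u := by
  obtain ⟨y, hy, hyv⟩ : ∃ y ∈ s, y ≠ v := by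
    by_contra! h
    exact hne (Set.eq_singleton_iff_unique_mem.2 ⟨hv, h⟩)
  have : Nontrivial s := ⟨⟨y, hy⟩, ⟨v, hv⟩, fun h => hyv (congrArg Subtype.val h)⟩
  obtain ⟨u, hu⟩ := hs.preconnected.exists_adj_of_nontrivial ⟨v, hv⟩
  exact ⟨u, u.2, hu⟩

namespace IsModel

variable {F : SimpleGraph W} {G : SimpleGraph V} {f : W → Set V}

theorem eq_of_mem (hf : IsModel F G f) {w w' : W} {x : V} (hx : x ∈ f w) (hx' : x ∈ f w') :
    w = w' := by
  by_contra h
  exact Set.disjoint_left.1 (hf.disjoint h) hx hx'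

theorem image (hf : IsModel F G f) {G' : SimpleGraph V'} (ψ : V → V')
    (hadj : ∀ w w', w = w' ∨ F.Adj w w' → ∀ x ∈ f w, ∀ y ∈ f w', G.Adj x y →
      ψ x = ψ y ∨ G'.Adj (ψ x) (ψ y))
    (hdisj : Pairwise fun w w' => Disjoint (ψ '' f w) (ψ '' f w')) :
    IsModel F G' fun w => ψ '' f w where
  nonempty w := (hf.nonempty w).image ψ
  connected w := by
    refine connected_of_forall_adj_reachable (ψ := fun x : f w => ⟨ψ x, x, x.2, rfl⟩)
      ?_ ?_ (hf.connected w)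
    · rintro ⟨_, x, hx, rfl⟩
      exact ⟨⟨x, hx⟩, rfl⟩
    · intro x y hxy
      rcases hadj w w (.inl rfl) x x.2 y y.2 hxy with h | h
      · exact Subtype.ext (a1 := ⟨ψ x, _⟩) (a2 := ⟨ψ y, _⟩) h ▸ .rfl
      · exact SimpleGraph.Adj.reachable h
  disjoint := hdisj
  exists_adj w w' hw := by
    obtain ⟨x, hx, y, hy, hxy⟩ := hf.exists_adj hw
    refine ⟨ψ x, ⟨x, hx, rfl⟩, ψ y, ⟨y, hy, rfl⟩, ?_⟩
    refine (hadj w w' (.inr hw) x hx y hy hxy).resolve_left fun h => ?_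
    exact Set.disjoint_left.1 (hdisj hw.ne) ⟨x, hx, rfl⟩ ⟨y, hy, h.symm⟩

theorem of_forall_adj (hf : IsModel F G f) {G' : SimpleGraph V}
    (hadj : ∀ w w', w = w' ∨ F.Adj w w' → ∀ x ∈ f w, ∀ y ∈ f w', G.Adj x y → G'.Adj x y) :
    IsModel F G' f where
  nonempty := hf.nonempty
  connected w := (hf.connected w).mono fun x y => hadj w w (.inl rfl) x x.2 y y.2
  disjoint := hf.disjoint
  exists_adj w w' hw := by
    obtain ⟨x, hx, y, hy, hxy⟩ := hf.exists_adj hw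
    exact ⟨x, hx, y, hy, hadj w w' (.inr hw) x hx y hy hxy⟩

theorem subset_support (hf : IsModel F G f) {w : W} (hw : ∃ w', F.Adj w w') :
    f w ⊆ G.support := by
  intro x hx
  by_cases hs : f w = {x}
  · obtain ⟨w', hw'⟩ := hw
    obtain ⟨y, hy, z, -, hyz⟩ := hf.exists_adj hw'
    obtain rfl : y = x := by simpa only [hs, Set.mem_singleton_iff] using hy
    exact ⟨z, hyz⟩
  · obtain ⟨y, -, hxy⟩ := exists_adj_of_connected_induce (hf.connected w) hx hs
    exact ⟨y, hxy⟩

end IsModel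

/-- Every vertex of `F` has at least three neighbours. This is the property of `K₅` and `K₃,₃`
that lets their minors survive the smoothing of vertices of degree at most two. -/
def HasThreeNeighbors (F : SimpleGraph W) : Prop := ∀ w a b, ∃ w', F.Adj w w' ∧ w' ≠ a ∧ w' ≠ b

theorem HasThreeNeighbors.exists_adj {F : SimpleGraph W} (hF : HasThreeNeighbors F) (w : W) :
    ∃ w', F.Adj w w' :=
  (hF w w w).imp fun _ h => h.1

theorem hasThreeNeighbors_top : HasThreeNeighbors (⊤ : SimpleGraph (Fin 5)) := by
  simp only [HasThreeNeighbors, SimpleGraph.top_adj]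
  decide

theorem hasThreeNeighbors_completeBipartiteGraph :
    HasThreeNeighbors (completeBipartiteGraph (Fin 3) (Fin 3)) := by
  simp only [HasThreeNeighbors, completeBipartiteGraph_adj]
  decide

theorem isMinor_of_injOn {F : SimpleGraph W} (hF : HasThreeNeighbors F) {G : SimpleGraph V}
    {G' : SimpleGraph V'} {ψ : V → V'} (hψ : Set.InjOn ψ G.support)
    (hadj : ∀ x y, G.Adj x y → G'.Adj (ψ x) (ψ y)) (h : F.IsMinor G) : F.IsMinor G' := by
  obtain ⟨f, hf⟩ := isMinor_iff_exists_isModel.1 h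
  have hsub (w : W) : f w ⊆ G.support := hf.subset_support (hF.exists_adj w)
  exact isMinor_iff_exists_isModel.2 ⟨_, hf.image ψ (fun _ _ _ x _ y _ hxy => .inr (hadj x y hxy))
    fun w w' hw => Set.disjoint_image_image fun x hx y hy h =>
      (hf.disjoint hw).ne_of_mem hx hy (hψ (hsub w hx) (hsub w' hy) h)⟩

theorem isPlanar_of_injOn {G : SimpleGraph V} {G' : SimpleGraph V'} {ψ : V → V'}
    (hψ : Set.InjOn ψ G.support) (hadj : ∀ x y, G.Adj x y → G'.Adj (ψ x) (ψ y))
    (h : G'.IsPlanar) : G.IsPlanar :=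
  ⟨fun h₅ => h.1 (isMinor_of_injOn hasThreeNeighbors_top hψ hadj h₅),
    fun h₃₃ => h.2 (isMinor_of_injOn hasThreeNeighbors_completeBipartiteGraph hψ hadj h₃₃)⟩

theorem isMinor_mono {F : SimpleGraph W} {G G' : SimpleGraph V} (hle : G ≤ G')
    (h : F.IsMinor G) : F.IsMinor G' := by
  obtain ⟨f, hf⟩ := isMinor_iff_exists_isModel.1 h
  exact isMinor_iff_exists_isModel.2 ⟨f, hf.of_forall_adj fun _ _ _ _ _ _ _ hxy => hle hxy⟩

theorem isPlanar_anti {G G' : SimpleGraph V} (hle : G ≤ G') (h : G'.IsPlanar) : G.IsPlanar :=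
  ⟨fun h₅ => h.1 (isMinor_mono hle h₅), fun h₃₃ => h.2 (isMinor_mono hle h₃₃)⟩

/-- The graph obtained from `G` by joining all neighbours of `v` to each other and isolating `v`.
When `v` has degree at most two this suppresses `v`. -/
def smooth (G : SimpleGraph V) (v : V) : SimpleGraph V where
  Adj x y := x ≠ v ∧ y ≠ v ∧ x ≠ y ∧ (G.Adj x y ∨ G.Adj v x ∧ G.Adj v y)
  symm := ⟨fun _ _ h => ⟨h.2.1, h.1, h.2.2.1.symm, h.2.2.2.imp .symm .symm⟩⟩
  loopless := ⟨fun _ h => h.2.2.1 rfl⟩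

theorem IsModel.ne_singleton {F : SimpleGraph W} {G : SimpleGraph V} {f : W → Set V}
    (hF : HasThreeNeighbors F) (hf : IsModel F G f) {v a b : V}
    (hv : ∀ z, G.Adj v z → z = a ∨ z = b) (w : W) : f w ≠ {v} := by
  intro hw
  have branch_unique (z : V) : ∃ u, ∀ w', z ∈ f w' → w' = u := by
    by_cases hz : ∃ u, z ∈ f u
    · obtain ⟨u, hu⟩ := hz
      exact ⟨u, fun w' hw' => hf.eq_of_mem hw' hu⟩
    · exact ⟨w, fun w' hw' => absurd ⟨w', hw'⟩ hz⟩
  obtain ⟨wa, ha⟩ := branch_unique a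
  obtain ⟨wb, hb⟩ := branch_unique b
  obtain ⟨w', hadj, hwa, hwb⟩ := hF w wa wb
  obtain ⟨p, hp, q, hq, hpq⟩ := hf.exists_adj hadj
  obtain rfl : p = v := by simpa only [hw, Set.mem_singleton_iff] using hp
  rcases hv q hpq with rfl | rfl
  · exact hwa (ha w' hq)
  · exact hwb (hb w' hq)

theorem smooth_adj_update {G : SimpleGraph V} [DecidableEq V] {v u x y : V} (hu : G.Adj v u)
    (hxy : G.Adj x y) : Function.update id v u x = Function.update id v u y ∨
      (smooth G v).Adj (Function.update id v u x) (Function.update id v u y) := by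
  rcases eq_or_ne x v with rfl | hx
  · rw [Function.update_self, Function.update_of_ne hxy.ne', id]
    exact or_iff_not_imp_left.2 fun h => ⟨hu.ne', hxy.ne', h, .inr ⟨hu, hxy⟩⟩
  rcases eq_or_ne y v with rfl | hy
  · rw [Function.update_self, Function.update_of_ne hx, id]
    exact or_iff_not_imp_left.2 fun h => ⟨hx, hu.ne', h, .inr ⟨hxy.symm, hu⟩⟩
  · rw [Function.update_of_ne hx, Function.update_of_ne hy]
    exact .inr ⟨hx, hy, hxy.ne, .inl hxy⟩

theorem isMinor_smooth {F : SimpleGraph W} (hF : HasThreeNeighbors F) {G : SimpleGraph V}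
    {v a b : V} (hv : ∀ z, G.Adj v z → z = a ∨ z = b) (h : F.IsMinor G) :
    F.IsMinor (smooth G v) := by
  classical
  obtain ⟨f, hf⟩ := isMinor_iff_exists_isModel.1 h
  refine isMinor_iff_exists_isModel.2 ?_
  by_cases hmem : ∃ w, v ∈ f w
  · obtain ⟨w, hw⟩ := hmem
    obtain ⟨u, hu, hvu⟩ :=
      exists_adj_of_connected_induce (hf.connected w) hw (hf.ne_singleton hF hv w)
    have image_subset (w' : W) : Function.update id v u '' f w' ⊆ f w' := by
      rintro _ ⟨x, hx, rfl⟩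
      rcases eq_or_ne x v with rfl | hxv
      · rwa [Function.update_self, ← hf.eq_of_mem hw hx]
      · rwa [Function.update_of_ne hxv]
    exact ⟨_, hf.image (Function.update id v u) (fun _ _ _ _ _ _ _ => smooth_adj_update hvu)
      fun w₁ w₂ h => (hf.disjoint h).mono (image_subset w₁) (image_subset w₂)⟩
  · push Not at hmem
    exact ⟨f, hf.of_forall_adj fun w w' _ x hx y hy hxy =>
      ⟨ne_of_mem_of_not_mem hx (hmem w), ne_of_mem_of_not_mem hy (hmem w'), hxy.ne, .inl hxy⟩⟩

theorem isPlanar_of_smooth {G : SimpleGraph V} {v a b : V}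
    (hv : ∀ z, G.Adj v z → z = a ∨ z = b) (h : (smooth G v).IsPlanar) : G.IsPlanar :=
  ⟨fun h₅ => h.1 (isMinor_smooth hasThreeNeighbors_top hv h₅),
    fun h₃₃ => h.2 (isMinor_smooth hasThreeNeighbors_completeBipartiteGraph hv h₃₃)⟩

namespace IsModel

variable {F : SimpleGraph W} {G : SimpleGraph V} {f : W → Set V}

theorem deleteEdges_of_forall_adj_ne (hf : IsModel F G f) {x y : V}
    (hxy : ∀ w w', w = w' ∨ F.Adj w w' → x ∈ f w → y ∉ f w') :
    IsModel F (G.deleteEdges {s(x, y)}) f := by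
  refine hf.of_forall_adj fun w w' hw p hp q hq hpq =>
    SimpleGraph.deleteEdges_adj.2 ⟨hpq, fun h => ?_⟩
  rcases Sym2.eq_iff.1 h with ⟨rfl, rfl⟩ | ⟨rfl, rfl⟩
  · exact hxy w w' hw hp hq
  · exact hxy w' w (hw.imp Eq.symm .symm) hq hp

theorem deleteEdges_of_mem_of_mem (hf : IsModel F G f) {w : W} {a b c : V} (ha : a ∈ f w)
    (hb : b ∈ f w) (hab : G.Adj a b) (hac : G.Adj a c) (hbc : G.Adj b c) :
    IsModel F (G.deleteEdges {s(a, c)}) f := by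
  have hab' : (G.deleteEdges {s(a, c)}).Adj a b := by
    simp [hab, hbc.ne, hac.ne]
  have hbc' : (G.deleteEdges {s(a, c)}).Adj b c := by
    simp [hbc, hab.ne', hbc.ne]
  have adj_or {x y : V} (hxy : G.Adj x y) :
      (G.deleteEdges {s(a, c)}).Adj x y ∨ x = a ∧ y = c ∨ x = c ∧ y = a := by
    simp only [SimpleGraph.deleteEdges_adj, hxy, Set.mem_singleton_iff, Sym2.eq_iff, true_and]
    exact (em _).symm
  refine ⟨hf.nonempty, fun u => ?_, hf.disjoint, fun w₁ w₂ hw => ?_⟩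
  · refine connected_of_forall_adj_reachable (ψ := id) Function.surjective_id
      (fun x y hxy => ?_) (hf.connected u)
    have path (hau : a ∈ f u) (hcu : c ∈ f u) :
        ((G.deleteEdges {s(a, c)}).induce (f u)).Reachable ⟨a, hau⟩ ⟨c, hcu⟩ :=
      have hbu : b ∈ f u := hf.eq_of_mem ha hau ▸ hb
      have h₁ : ((G.deleteEdges {s(a, c)}).induce (f u)).Adj ⟨a, hau⟩ ⟨b, hbu⟩ := hab'
      have h₂ : ((G.deleteEdges {s(a, c)}).induce (f u)).Adj ⟨b, hbu⟩ ⟨c, hcu⟩ := hbc'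
      h₁.reachable.trans h₂.reachable
    obtain ⟨x, hx⟩ := x
    obtain ⟨y, hy⟩ := y
    rcases adj_or hxy with h | ⟨rfl, rfl⟩ | ⟨rfl, rfl⟩
    · exact SimpleGraph.Adj.reachable h
    · exact path hx hy
    · exact (path hy hx).symm
  · obtain ⟨x, hx, y, hy, hxy⟩ := hf.exists_adj hw
    rcases adj_or hxy with h | ⟨rfl, rfl⟩ | ⟨rfl, rfl⟩
    · exact ⟨x, hx, y, hy, h⟩
    · exact ⟨b, hf.eq_of_mem ha hx ▸ hb, y, hy, hbc'⟩
    · exact ⟨x, hx, b, hf.eq_of_mem ha hy ▸ hb, hbc'.symm⟩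

end IsModel

theorem isMinor_deleteEdges_of_triangle {F : SimpleGraph W} (hF : F.CliqueFree 3)
    {G : SimpleGraph V} {a b c : V} (hab : G.Adj a b) (hac : G.Adj a c) (hbc : G.Adj b c)
    (h : F.IsMinor G) :
    F.IsMinor (G.deleteEdges {s(a, b)}) ∨ F.IsMinor (G.deleteEdges {s(a, c)}) ∨
      F.IsMinor (G.deleteEdges {s(b, c)}) := by
  obtain ⟨f, hf⟩ := isMinor_iff_exists_isModel.1 h
  simp only [isMinor_iff_exists_isModel]
  by_contra! ⟨hnab, hnac, hnbc⟩
  have separate {x y z : V} (hxy : G.Adj x y) (hxz : G.Adj x z) (hyz : G.Adj y z)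
      (hn : ∀ g, ¬ IsModel F (G.deleteEdges {s(x, z)}) g) {w : W} (hx : x ∈ f w) : y ∉ f w :=
    fun hy => hn f (hf.deleteEdges_of_mem_of_mem hx hy hxy hxz hyz)
  have used {x y : V} (hn : ∀ g, ¬ IsModel F (G.deleteEdges {s(x, y)}) g) :
      ∃ w w', (w = w' ∨ F.Adj w w') ∧ x ∈ f w ∧ y ∈ f w' := by
    by_contra! h
    exact hn f (hf.deleteEdges_of_forall_adj_ne h)
  obtain ⟨wa, wb, hwab, ha, hb⟩ := used hnab
  obtain ⟨wa', wc, hwac, ha', hc⟩ := used hnac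
  obtain ⟨wb', wc', hwbc, hb', hc'⟩ := used hnbc
  obtain rfl := hf.eq_of_mem ha ha'
  obtain rfl := hf.eq_of_mem hb hb'
  obtain rfl := hf.eq_of_mem hc hc'
  have hab' : F.Adj wa wb := hwab.resolve_left fun h =>
    separate hab hac hbc hnac ha (h ▸ hb)
  have hac' : F.Adj wa wc := hwac.resolve_left fun h =>
    separate hac hab hbc.symm hnab ha (h ▸ hc)
  have hbc' : F.Adj wb wc := hwbc.resolve_left fun h =>
    separate hbc hab.symm hac.symm (by rwa [Sym2.eq_swap]) hb (h ▸ hc)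
  classical
  exact hF {wa, wb, wc} (SimpleGraph.is3Clique_triple_iff.2 ⟨hab', hac', hbc'⟩)

/-! ### Apex graphs -/

/-- The degree of a vertex as a natural number, in a form that needs no decidability instances.
A vertex with infinitely many neighbours gets the value `0`. -/
noncomputable def deg (G : SimpleGraph V) (v : V) : ℕ := (G.neighborSet v).ncard

theorem deg_eq_zero_iff {G : SimpleGraph V} [Finite V] {v : V} :
    deg G v = 0 ↔ ∀ x, ¬ G.Adj v x := by
  rw [deg, Set.ncard_eq_zero, Set.eq_empty_iff_forall_notMem]
  rfl

theorem mem_support_iff_deg_ne_zero {G : SimpleGraph V} [Finite V] {v : V} :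
    v ∈ G.support ↔ deg G v ≠ 0 := by
  rw [Ne, deg_eq_zero_iff, SimpleGraph.mem_support]
  push Not
  rfl

theorem exists_forall_adj_eq_or_eq {G : SimpleGraph V} [Finite V] {v : V} (h : deg G v ≤ 2) :
    ∃ a b, ∀ z, G.Adj v z → z = a ∨ z = b := by
  rcases (G.neighborSet v).eq_empty_or_nonempty with h₀ | ⟨a, ha⟩
  · exact ⟨v, v, fun z hz => (Set.eq_empty_iff_forall_notMem.1 h₀ z hz).elim⟩
  have hle : (G.neighborSet v \ {a}).ncard ≤ 1 := by
    have := Set.ncard_sdiff_singleton_add_one ha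
    unfold deg at h
    omega
  have : Nonempty V := ⟨v⟩
  obtain ⟨b, hb⟩ := (Set.ncard_le_one_iff_subset_singleton).1 hle
  exact ⟨a, b, fun z hz => or_iff_not_imp_left.2 fun hza => hb ⟨hz, hza⟩⟩

theorem deg_smooth_le {G : SimpleGraph V} [Finite V] {v a b : V}
    (hv : ∀ z, G.Adj v z → z = a ∨ z = b) (u : V) : deg (smooth G v) u ≤ deg G u := by
  by_cases huv : G.Adj v u
  · obtain ⟨w, hw⟩ : ∃ w, ∀ z, G.Adj v z → z = u ∨ z = w := by
      rcases hv u huv with rfl | rfl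
      · exact ⟨b, hv⟩
      · exact ⟨a, fun z hz => (hv z hz).symm⟩
    have hsub : (smooth G v).neighborSet u ⊆ insert w (G.neighborSet u \ {v}) := by
      rintro z ⟨-, hzv, huz, h | h⟩
      · exact .inr ⟨h, hzv⟩
      · exact .inl ((hw z h.2).resolve_left huz.symm)
    calc deg (smooth G v) u ≤ (insert w (G.neighborSet u \ {v})).ncard := Set.ncard_le_ncard hsub
      _ ≤ (G.neighborSet u \ {v}).ncard + 1 := Set.ncard_insert_le _ _
      _ = deg G u := Set.ncard_sdiff_singleton_add_one huv.symm
  · exact Set.ncard_le_ncard fun z ⟨_, _, _, h⟩ => h.resolve_right fun h => huv h.1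

theorem support_smooth_ssubset {G : SimpleGraph V} {v : V} (hv : v ∈ G.support) :
    (smooth G v).support ⊂ G.support := by
  refine (Set.ssubset_iff_of_subset ?_).2 ⟨v, hv, fun ⟨_, h⟩ => h.1 rfl⟩
  rintro x ⟨y, -, -, -, h | ⟨h, -⟩⟩
  · exact ⟨y, h⟩
  · exact ⟨v, h.symm⟩

/-- Deleting at most `k` vertices makes `G` planar. The vertices are deleted one at a time and
remain as isolated vertices, so that the vertex type does not change. -/
inductive IsApex : ℕ → SimpleGraph V → Prop
  | planar {k : ℕ} {G : SimpleGraph V} : G.IsPlanar → IsApex k G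
  | delete {k : ℕ} {G : SimpleGraph V} (v : V) : IsApex k (G.deleteIncidenceSet v) →
      IsApex (k + 1) G

theorem deleteIncidenceSet_mono {G G' : SimpleGraph V} (h : G ≤ G') (v : V) :
    G.deleteIncidenceSet v ≤ G'.deleteIncidenceSet v := by
  intro x y hxy
  rw [SimpleGraph.deleteIncidenceSet_adj] at hxy ⊢
  exact hxy.imp_left (@h x y)

namespace IsApex

theorem isPlanar {G : SimpleGraph V} (h : IsApex 0 G) : G.IsPlanar := by
  cases h with
  | planar h => exact h

theorem anti {k : ℕ} {G G' : SimpleGraph V} (hle : G ≤ G') (h : IsApex k G') : IsApex k G := by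
  induction h generalizing G with
  | planar h => exact .planar (isPlanar_anti hle h)
  | delete v _ ih => exact .delete v (ih (deleteIncidenceSet_mono hle v))

theorem of_smooth {k : ℕ} {G : SimpleGraph V} {v a b : V} (hv : ∀ z, G.Adj v z → z = a ∨ z = b)
    (h : IsApex k (smooth G v)) : IsApex k G := by
  generalize hH : smooth G v = H at h
  induction h generalizing G with
  | planar h => exact .planar (isPlanar_of_smooth hv (hH ▸ h))
  | @delete k H w h ih =>
    subst hH
    refine .delete w ?_
    obtain rfl | hwv := eq_or_ne w v
    · refine h.anti fun x y hxy => ?_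
      rw [SimpleGraph.deleteIncidenceSet_adj] at hxy ⊢
      exact ⟨⟨hxy.2.1, hxy.2.2, hxy.1.ne, .inl hxy.1⟩, hxy.2⟩
    · refine ih (fun z hz => hv z (SimpleGraph.deleteIncidenceSet_le _ _ hz)) ?_
      ext x y
      simp only [smooth, SimpleGraph.deleteIncidenceSet_adj]
      have := hwv.symm
      tauto

theorem exists_finset {k : ℕ} {G : SimpleGraph V} (h : IsApex k G) :
    ∃ s : Finset V, s.card ≤ k ∧ (G.induce (s : Set V)ᶜ).IsPlanar := by
  classical
  induction h with
  | @planar k G h =>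
    exact ⟨∅, k.zero_le, isPlanar_of_injOn Subtype.val_injective.injOn (fun _ _ => id) h⟩
  | @delete k G v _ ih =>
    obtain ⟨s, hs, hplanar⟩ := ih
    have not_mem {x : V} (hx : x ∉ insert v s) : x ≠ v ∧ x ∉ s := by
      simpa only [Finset.mem_insert, not_or] using hx
    refine ⟨insert v s, (Finset.card_insert_le _ _).trans (Nat.add_le_add_right hs 1), ?_⟩
    refine isPlanar_of_injOn (ψ := fun x => ⟨x, (not_mem x.2).2⟩) ?_ ?_ hplanar
    · exact fun x _ y _ hxy => Subtype.ext (Subtype.mk.inj hxy)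
    · exact fun x y hxy => SimpleGraph.deleteIncidenceSet_adj.2
        ⟨hxy, (not_mem x.2).1, (not_mem y.2).1⟩

theorem twoApex {G : SimpleGraph V} (h : IsApex 2 G) : G.TwoApex := by
  obtain ⟨s, hs, hplanar⟩ := h.exists_finset
  exact ⟨s, by rwa [Set.ncard_coe_finset], hplanar⟩

end IsApex

theorem exists_smoothed [Finite V] (G : SimpleGraph V) : ∃ G' : SimpleGraph V,
    (∀ x, deg G' x ≤ deg G x) ∧ (∀ x, deg G' x = 0 ∨ 3 ≤ deg G' x) ∧
      ∀ k, IsApex k G' → IsApex k G := by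
  induction hs : G.support using WellFoundedLT.induction generalizing G with
  | ind s ih =>
    subst hs
    by_cases h : ∃ v, deg G v ≠ 0 ∧ deg G v ≤ 2
    · obtain ⟨v, hv₀, hv₂⟩ := h
      obtain ⟨a, b, hab⟩ := exists_forall_adj_eq_or_eq hv₂
      obtain ⟨G', hle, hdeg, happ⟩ := ih _
        (support_smooth_ssubset (mem_support_iff_deg_ne_zero.2 hv₀)) (smooth G v) rfl
      exact ⟨G', fun x => (hle x).trans (deg_smooth_le hab x), hdeg,
        fun k hk => .of_smooth hab (happ k hk)⟩
    · push Not at h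
      exact ⟨G, fun _ => le_rfl, fun x => or_iff_not_imp_left.2 (h x), fun _ => id⟩

namespace IsModel

variable {F : SimpleGraph W} {G : SimpleGraph V} {f : W → Set V}

theorem card_mul_le_sum [Fintype W] (hf : IsModel F G f) {T : Finset V} {φ : V → ℕ} {m : ℕ}
    (h : ∀ w, ∃ S ⊆ T, (S : Set V) ⊆ f w ∧ m ≤ ∑ x ∈ S, φ x) :
    Fintype.card W * m ≤ ∑ x ∈ T, φ x := by
  classical
  choose S hST hSf hS using h
  have hdisj : ((Finset.univ : Finset W) : Set W).PairwiseDisjoint S := fun w _ w' _ hw =>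
    Finset.disjoint_coe.1 ((hf.disjoint hw).mono (hSf w) (hSf w'))
  calc Fintype.card W * m ≤ ∑ w, ∑ x ∈ S w, φ x :=
        Finset.card_nsmul_le_sum _ _ m fun w _ => hS w
    _ = ∑ x ∈ Finset.univ.biUnion S, φ x := (Finset.sum_biUnion hdisj).symm
    _ ≤ ∑ x ∈ T, φ x :=
        Finset.sum_le_sum_of_subset (Finset.biUnion_subset.2 fun w _ => hST w)

theorem deg_le_of_eq_singleton (hf : IsModel F G f) {w : W} {x : V} (hw : f w = {x})
    (hx : (G.neighborSet x).Finite) : deg F w ≤ deg G x := by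
  have exists_adj (w' : W) (h : F.Adj w w') : ∃ y ∈ f w', G.Adj x y := by
    obtain ⟨p, hp, y, hy, hpy⟩ := hf.exists_adj h
    obtain rfl : p = x := by simpa only [hw, Set.mem_singleton_iff] using hp
    exact ⟨y, hy, hpy⟩
  have : Nonempty V := ⟨x⟩
  choose! g hg hadj using exists_adj
  exact Set.ncard_le_ncard_of_injOn g hadj
    (fun w₁ h₁ w₂ h₂ h => hf.eq_of_mem (hg w₁ h₁) (h ▸ hg w₂ h₂)) hx

end IsModel

theorem card_le_of_isMinor [Fintype W] {F : SimpleGraph W} {G : SimpleGraph V}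
    (hF : HasThreeNeighbors F) {T : Finset V} (hT : G.support ⊆ T) (h : F.IsMinor G) :
    Fintype.card W ≤ T.card := by
  obtain ⟨f, hf⟩ := isMinor_iff_exists_isModel.1 h
  rw [← mul_one (Fintype.card W), Finset.card_eq_sum_ones]
  refine hf.card_mul_le_sum fun w => ?_
  obtain ⟨x, hx⟩ := hf.nonempty w
  exact ⟨{x}, Finset.singleton_subset_iff.2 (hT (hf.subset_support (hF.exists_adj w) hx)),
    by simpa only [Finset.coe_singleton, Set.singleton_subset_iff] using hx, by simp⟩

theorem ten_le_of_isMinor {G : SimpleGraph V} {T : Finset V} (hT : G.support ⊆ T)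
    (h : (⊤ : SimpleGraph (Fin 5)).IsMinor G) :
    10 ≤ T.card + (T.filter fun x => 4 ≤ deg G x).card := by
  classical
  obtain ⟨f, hf⟩ := isMinor_iff_exists_isModel.1 h
  rw [Finset.card_filter, Finset.card_eq_sum_ones, ← Finset.sum_add_distrib]
  refine hf.card_mul_le_sum (m := 2) fun w => ?_
  have hfT : f w ⊆ T := (hf.subset_support (hasThreeNeighbors_top.exists_adj w)).trans hT
  obtain ⟨x, hx⟩ := hf.nonempty w
  by_cases hw : f w = {x}
  · have hfin : (G.neighborSet x).Finite :=
      T.finite_toSet.subset fun y hy => hT ⟨x, SimpleGraph.Adj.symm hy⟩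
    have hdeg : 4 ≤ deg G x := by
      refine le_trans (Eq.le ?_) (hf.deg_le_of_eq_singleton hw hfin)
      rw [deg, SimpleGraph.neighborSet_top, Set.ncard_compl, Set.ncard_singleton, Nat.card_fin]
    exact ⟨{x}, Finset.singleton_subset_iff.2 (hfT hx), by simp [hw], by simp [hdeg]⟩
  · obtain ⟨y, hy, hxy⟩ := exists_adj_of_connected_induce (hf.connected w) hx hw
    refine ⟨{x, y}, Finset.insert_subset (hfT hx) (Finset.singleton_subset_iff.2 (hfT hy)),
      by simp [Set.insert_subset_iff, hx, hy], ?_⟩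
    rw [Finset.sum_pair hxy.ne]
    omega

theorem isPlanar_of_card_le {G : SimpleGraph V} {T : Finset V} (hT : G.support ⊆ T)
    (h₅ : T.card ≤ 5) (h₄ : (T.filter fun x => 4 ≤ deg G x).card ≤ 4) : G.IsPlanar := by
  refine ⟨fun h => ?_, fun h => ?_⟩
  · have := ten_le_of_isMinor hT h
    omega
  · have : 6 ≤ T.card := card_le_of_isMinor hasThreeNeighbors_completeBipartiteGraph hT h
    omega

theorem isPlanar_of_card_deg_le [Fintype V] {G : SimpleGraph V}
    (h₃ : (Finset.univ.filter fun x => 3 ≤ deg G x).card ≤ 5)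
    (h₄ : (Finset.univ.filter fun x => 4 ≤ deg G x).card ≤ 4) : G.IsPlanar := by
  obtain ⟨G', hle, hdeg, happ⟩ := exists_smoothed G
  suffices G'.IsPlanar from (happ 0 (.planar this)).isPlanar
  refine isPlanar_of_card_le (T := Finset.univ.filter fun x => 3 ≤ deg G x) (fun x hx => ?_) h₃ ?_
  · have := (hdeg x).resolve_left (mem_support_iff_deg_ne_zero.1 hx)
    simpa using this.trans (hle x)
  · refine (Finset.card_le_card fun x hx => ?_).trans h₄
    simp only [Finset.mem_filter, Finset.mem_univ, true_and] at hx ⊢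
    exact hx.2.trans (hle x)

/-! ### Computations with edge lists -/

/-- A finite graph on `ℕ` for kernel computation, given by its edges in either orientation. -/
abbrev EdgeList := List (ℕ × ℕ)

namespace EdgeList

/-- The simple graph described by an edge list. -/
def graph (E : EdgeList) : SimpleGraph ℕ := .fromRel fun i j => (i, j) ∈ E

/-- The neighbours of a vertex, in the order of the edge list. -/
def nbrs (E : EdgeList) (v : ℕ) : List ℕ :=
  E.filterMap fun e => if e.1 = v then some e.2 else if e.2 = v then some e.1 else none

/-- The non-isolated vertices, without repetition. -/
def verts (E : EdgeList) : List ℕ := (E.flatMap fun e => [e.1, e.2]).dedup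

/-- Isolates the vertex `v`. -/
def deleteVertex (E : EdgeList) (v : ℕ) : EdgeList := E.filter fun e => e.1 ≠ v ∧ e.2 ≠ v

/-- Removes the edge between `x` and `y` in both orientations. -/
def deleteEdge (E : EdgeList) (x y : ℕ) : EdgeList := E.filter fun e => e ≠ (x, y) ∧ e ≠ (y, x)

/-- Suppresses a vertex `v` of degree at most two. -/
def smooth (E : EdgeList) (v : ℕ) : EdgeList :=
  match E.nbrs v with
  | [a, b] => if b ∈ E.nbrs a then E.deleteVertex v else (a, b) :: E.deleteVertex v
  | _ => E.deleteVertex v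

/-- Suppresses vertices of degree at most two, one after the other, at most `n` times. -/
def smoothAll : ℕ → EdgeList → EdgeList
  | 0, E => E
  | n + 1, E => match E.verts.find? fun v => (E.nbrs v).length ≤ 2 with
    | none => E
    | some v => smoothAll n (E.smooth v)

variable {E : EdgeList} {v x y : ℕ}

theorem mem_nbrs : y ∈ E.nbrs x ↔ (x, y) ∈ E ∨ (y, x) ∈ E := by
  simp only [nbrs, List.mem_filterMap, Prod.exists]
  constructor
  · rintro ⟨a, b, hab, h⟩
    split_ifs at h <;> simp_all
  · rintro (h | h)
    · exact ⟨x, y, h, by simp⟩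
    · exact ⟨y, x, h, by split_ifs <;> simp_all⟩

theorem graph_adj : E.graph.Adj x y ↔ x ≠ y ∧ y ∈ E.nbrs x := by
  rw [graph, SimpleGraph.fromRel_adj, mem_nbrs]

theorem support_graph_subset : E.graph.support ⊆ (E.verts.toFinset : Set ℕ) := by
  rintro x ⟨y, hxy⟩
  simp only [verts, Finset.mem_coe, List.mem_toFinset, List.mem_dedup, List.mem_flatMap]
  rcases mem_nbrs.1 (graph_adj.1 hxy).2 with h | h
  · exact ⟨_, h, by simp⟩
  · exact ⟨_, h, by simp⟩

theorem card_toFinset_verts : E.verts.toFinset.card = E.verts.length :=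
  List.toFinset_card_of_nodup (List.nodup_dedup _)

theorem deg_graph_le : deg E.graph v ≤ (E.nbrs v).length := by
  have hsub : E.graph.neighborSet v ⊆ ((E.nbrs v).toFinset : Set ℕ) := fun z hz =>
    List.mem_toFinset.2 (graph_adj.1 hz).2
  calc deg E.graph v ≤ ((E.nbrs v).toFinset : Set ℕ).ncard :=
        Set.ncard_le_ncard hsub (Finset.finite_toSet _)
    _ = (E.nbrs v).toFinset.card := Set.ncard_coe_finset _
    _ ≤ (E.nbrs v).length := List.toFinset_card_le _

theorem graph_deleteEdges_le : E.graph.deleteEdges {s(x, y)} ≤ (E.deleteEdge x y).graph := by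
  intro a b h
  rw [SimpleGraph.deleteEdges_adj, graph_adj, Set.mem_singleton_iff, Sym2.eq_iff] at h
  rw [graph_adj]
  simp only [mem_nbrs, deleteEdge, List.mem_filter, decide_eq_true_eq, Prod.mk.injEq, ne_eq] at h ⊢
  tauto

theorem eq_pair_or_eq_pair_of_length_le_two {l : List ℕ} (hl : l.length ≤ 2) {a b : ℕ}
    (ha : a ∈ l) (hb : b ∈ l) (hab : a ≠ b) : l = [a, b] ∨ l = [b, a] := by
  match l, hl with
  | [], _ => exact absurd ha List.not_mem_nil
  | [_], _ => exact absurd ((List.mem_singleton.1 ha).trans (List.mem_singleton.1 hb).symm) hab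
  | [_, _], _ => grind

theorem deleteVertex_subset_smooth : E.deleteVertex v ⊆ E.smooth v := by
  unfold smooth
  split
  · split_ifs
    · exact List.Subset.refl _
    · exact List.subset_cons_self _ _
  · exact List.Subset.refl _

theorem mem_smooth_of_nbrs_eq {a b : ℕ} (h : E.nbrs v = [a, b]) (ha : a ≠ v) (hb : b ≠ v) :
    (a, b) ∈ E.smooth v ∨ (b, a) ∈ E.smooth v := by
  simp only [smooth, h]
  split_ifs with hab
  · simpa [deleteVertex, ha, hb] using mem_nbrs.1 hab
  · exact .inl List.mem_cons_self

theorem smooth_graph_le (hv : (E.nbrs v).length ≤ 2) :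
    SmallApex.smooth E.graph v ≤ (E.smooth v).graph := by
  rintro a b ⟨ha, hb, hab, h | ⟨hva, hvb⟩⟩
  · refine graph_adj.2 ⟨hab, mem_nbrs.2 ?_⟩
    refine (mem_nbrs.1 (graph_adj.1 h).2).imp ?_ ?_ <;>
      exact fun h => deleteVertex_subset_smooth (by simp [deleteVertex, h, ha, hb])
  · refine graph_adj.2 ⟨hab, mem_nbrs.2 ?_⟩
    rcases eq_pair_or_eq_pair_of_length_le_two hv (graph_adj.1 hva).2 (graph_adj.1 hvb).2 hab
      with h | h
    · exact mem_smooth_of_nbrs_eq h ha hb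
    · exact (mem_smooth_of_nbrs_eq h hb ha).symm

theorem isMinor_smoothAll {F : SimpleGraph W} (hF : HasThreeNeighbors F) (n : ℕ)
    (h : F.IsMinor E.graph) : F.IsMinor (smoothAll n E).graph := by
  induction n generalizing E with
  | zero => exact h
  | succ n ih =>
    unfold smoothAll
    split
    · exact h
    · rename_i v hfind
      have hv : (E.nbrs v).length ≤ 2 := by simpa using List.find?_some hfind
      obtain ⟨a, b, hab⟩ : ∃ a b, ∀ z ∈ E.nbrs v, z = a ∨ z = b := by
        match E.nbrs v, hv with
        | [], _ => exact ⟨0, 0, by simp⟩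
        | [a], _ => exact ⟨a, a, by simp⟩
        | [a, b], _ => exact ⟨a, b, by simp⟩
      exact ih (isMinor_mono (smooth_graph_le hv)
        (isMinor_smooth hF (fun z hz => hab z (graph_adj.1 hz).2) h))

/-- The test that excludes a `K₅` minor: its five branch sets are disjoint, and each contains two
non-isolated vertices or a vertex of degree at least four. -/
def checkNoK5 (E : EdgeList) : Bool :=
  E.verts.length + (E.verts.filter fun v => 4 ≤ (E.nbrs v).length).length ≤ 9

/-- The test whether suppressing vertices of degree at most two leaves at most five vertices. -/
def checkSmall (E : EdgeList) : Bool := (smoothAll E.length E).verts.length ≤ 5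

/-- The test that excludes a `K₃,₃` minor: there are too few vertices, or there is a triangle of
which any edge can be removed to leave too few vertices after smoothing. -/
def checkNoK33 (E : EdgeList) : Bool :=
  E.verts.length ≤ 5 || E.any fun (a, b) => (E.nbrs a).any fun c =>
    (a ≠ b ∧ a ≠ c ∧ b ≠ c ∧ c ∈ E.nbrs b) && (E.deleteEdge a b).checkSmall &&
      (E.deleteEdge a c).checkSmall && (E.deleteEdge b c).checkSmall

/-- A sufficient test for planarity. -/
def checkPlanar (E : EdgeList) : Bool :=
  let E' := smoothAll E.length E
  E'.checkNoK5 && E'.checkNoK33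

theorem not_isMinor_of_checkNoK5 (h : E.checkNoK5) :
    ¬ (⊤ : SimpleGraph (Fin 5)).IsMinor E.graph := by
  intro hmin
  have h₁ := ten_le_of_isMinor support_graph_subset hmin
  have h₂ : (E.verts.toFinset.filter fun x => 4 ≤ deg E.graph x).card ≤
      (E.verts.filter fun v => 4 ≤ (E.nbrs v).length).length := by
    refine le_trans (Finset.card_le_card fun x hx => ?_) (List.toFinset_card_le _)
    simp only [Finset.mem_filter, List.mem_toFinset, List.mem_filter, decide_eq_true_eq] at hx ⊢
    exact ⟨hx.1, hx.2.trans deg_graph_le⟩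
  rw [card_toFinset_verts] at h₁
  simp only [checkNoK5, decide_eq_true_eq] at h
  omega

theorem not_isMinor_of_length_verts_le (h : E.verts.length ≤ 5) :
    ¬ (completeBipartiteGraph (Fin 3) (Fin 3)).IsMinor E.graph := by
  intro hmin
  have : 6 ≤ E.verts.toFinset.card :=
    card_le_of_isMinor hasThreeNeighbors_completeBipartiteGraph support_graph_subset hmin
  rw [card_toFinset_verts] at this
  omega

theorem not_isMinor_of_checkSmall (h : E.checkSmall) :
    ¬ (completeBipartiteGraph (Fin 3) (Fin 3)).IsMinor E.graph := fun hmin =>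
  not_isMinor_of_length_verts_le (of_decide_eq_true h)
    (isMinor_smoothAll hasThreeNeighbors_completeBipartiteGraph _ hmin)

theorem not_isMinor_of_checkNoK33 (h : E.checkNoK33) :
    ¬ (completeBipartiteGraph (Fin 3) (Fin 3)).IsMinor E.graph := by
  simp only [checkNoK33, Bool.or_eq_true, decide_eq_true_eq, List.any_eq_true, Bool.and_eq_true,
    Prod.exists] at h
  rcases h with h | ⟨a, b, hab, c, hac, ⟨⟨⟨nab, nac, nbc, hbc⟩, h₁⟩, h₂⟩, h₃⟩
  · exact not_isMinor_of_length_verts_le h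
  have hF : (completeBipartiteGraph (Fin 3) (Fin 3)).CliqueFree 3 :=
    (SimpleGraph.CompleteBipartiteGraph.bicoloring (Fin 3) (Fin 3)).colorable.cliqueFree (by decide)
  intro hmin
  rcases isMinor_deleteEdges_of_triangle hF (graph_adj.2 ⟨nab, mem_nbrs.2 (.inl hab)⟩)
      (graph_adj.2 ⟨nac, hac⟩) (graph_adj.2 ⟨nbc, hbc⟩) hmin with hmin | hmin | hmin
  · exact not_isMinor_of_checkSmall h₁ (isMinor_mono graph_deleteEdges_le hmin)
  · exact not_isMinor_of_checkSmall h₂ (isMinor_mono graph_deleteEdges_le hmin)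
  · exact not_isMinor_of_checkSmall h₃ (isMinor_mono graph_deleteEdges_le hmin)

theorem isPlanar_of_checkPlanar (h : E.checkPlanar) : E.graph.IsPlanar := by
  simp only [checkPlanar, Bool.and_eq_true] at h
  exact ⟨fun h₅ => not_isMinor_of_checkNoK5 h.1 (isMinor_smoothAll hasThreeNeighbors_top _ h₅),
    fun h₃₃ => not_isMinor_of_checkNoK33 h.2
      (isMinor_smoothAll hasThreeNeighbors_completeBipartiteGraph _ h₃₃)⟩

/-- The edge list of the graph on `0, 1, …` in which `i` and `j` with `i < j` are adjacent when
entry `i` of row `j` is `true`. -/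
def ofRows (rows : List (List Bool)) : EdgeList :=
  rows.zipIdx.flatMap fun (row, j) =>
    row.zipIdx.filterMap fun (b, i) => if b ∧ i < j then some (i, j) else none

theorem mem_ofRows {rows : List (List Bool)} {i j : ℕ} {row : List Bool} (hj : rows[j]? = some row)
    (hi : row[i]? = some true) (hij : i < j) : (i, j) ∈ ofRows rows :=
  List.mem_flatMap.2 ⟨(row, j), List.mem_zipIdx_iff_getElem?.2 hj,
    List.mem_filterMap.2 ⟨(true, i), List.mem_zipIdx_iff_getElem?.2 hi, by simp [hij]⟩⟩

theorem isPlanar_of_ofRows {G : SimpleGraph V} {vs : List V}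
    (hvs : ∀ x ∈ G.support, x ∈ vs) {rows : List (List Bool)}
    (hrows : ∀ i j (hi : i < vs.length) (hj : j < vs.length), G.Adj vs[i] vs[j] →
      ∃ row, rows[j]? = some row ∧ row[i]? = some true)
    (h : (ofRows rows).graph.IsPlanar) : G.IsPlanar := by
  classical
  refine isPlanar_of_injOn (ψ := vs.idxOf) (fun x hx y _ => ?_) (fun x y hxy => ?_) h
  · exact (List.idxOf_inj (hvs x hx)).1
  · have hi : vs.idxOf x < vs.length := List.idxOf_lt_length_of_mem (hvs x ⟨y, hxy⟩)
    have hj : vs.idxOf y < vs.length := List.idxOf_lt_length_of_mem (hvs y ⟨x, hxy.symm⟩)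
    have hne : vs.idxOf x ≠ vs.idxOf y := fun h => hxy.ne ((List.idxOf_inj (hvs x ⟨y, hxy⟩)).1 h)
    rw [graph_adj, mem_nbrs]
    refine ⟨hne, (Nat.lt_or_gt_of_ne hne).imp (fun hlt => ?_) (fun hlt => ?_)⟩
    · obtain ⟨row, h₁, h₂⟩ := hrows _ _ hi hj (by simpa)
      exact mem_ofRows h₁ h₂ hlt
    · obtain ⟨row, h₁, h₂⟩ := hrows _ _ hj hi (by simpa using hxy.symm)
      exact mem_ofRows h₁ h₂ hlt

end EdgeList

/-! ### Cells -/

section Degree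

variable {G : SimpleGraph V} {x : V}

open Classical in
theorem deg_eq_countP {l : List V} (hl : l.Nodup) (h : ∀ y, G.Adj x y → y ∈ l) :
    deg G x = l.countP (G.Adj x) := by
  have hset : G.neighborSet x = ((l.filter (G.Adj x)).toFinset : Set V) := by
    ext y
    simpa using h y
  rw [deg, hset, Set.ncard_coe_finset, List.toFinset_card_of_nodup (hl.filter _),
    List.countP_eq_length_filter]

open Classical in
theorem deg_deleteIncidenceSet {v : V} (hx : x ≠ v) :
    deg (G.deleteIncidenceSet v) x = deg G x - (decide (G.Adj v x)).toNat := by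
  have hset : (G.deleteIncidenceSet v).neighborSet x = G.neighborSet x \ {v} := by
    ext y
    simp [SimpleGraph.deleteIncidenceSet_adj, hx]
  rw [deg, hset]
  by_cases h : G.Adj v x
  · simp [Set.ncard_sdiff_singleton_of_mem (s := G.neighborSet x) h.symm, h, deg]
  · have hv : v ∉ G.neighborSet x := fun h' => h (SimpleGraph.Adj.symm h')
    simp [Set.sdiff_singleton_eq_self hv, h, deg]

variable [Finite V]

open Classical in
theorem countP_le_deg {l : List V} (hl : l.Nodup) : l.countP (G.Adj x) ≤ deg G x := by
  rw [List.countP_eq_length_filter, ← List.toFinset_card_of_nodup (hl.filter _),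
    ← Set.ncard_coe_finset]
  exact Set.ncard_le_ncard fun y hy => by simpa using (List.mem_filter.1 (List.mem_toFinset.1 hy)).2

theorem deg_deleteIncidenceSet_self (v : V) : deg (G.deleteIncidenceSet v) v = 0 :=
  deg_eq_zero_iff.2 fun _ h => (SimpleGraph.deleteIncidenceSet_adj.1 h).2.1 rfl

end Degree

/-- A class of `size` vertices of degree `deg` that have the same adjacencies, listed in `row`, to
a list of distinguished vertices. -/
structure Cell where
  size : ℕ
  deg : ℕ
  row : List Bool

namespace Cell

/-- A part of `n` vertices of a cell, with one more distinguished vertex put in front, to which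
these vertices are adjacent or not according to `b`. -/
def push (c : Cell) (n : ℕ) (b : Bool) : Cell := ⟨n, c.deg, b :: c.row⟩

/-- The cell after deletion of the distinguished vertex with index `i`. -/
def forget (i : ℕ) (c : Cell) : Cell :=
  ⟨c.size, c.deg - (c.row.getD i false).toNat, c.row.eraseIdx i⟩

/-- The ways to choose `r` neighbours of a new distinguished vertex in a list of cells. Each cell
is divided into the non-neighbours and the neighbours; its vertices may be chosen only if their
degree is not yet exhausted by the earlier distinguished vertices. -/
def splits : List Cell → ℕ → List (List Cell)
  | [], r => if r = 0 then [[]] else []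
  | c :: cs, r =>
    (List.range (min (if c.row.count true < c.deg then c.size else 0) r + 1)).flatMap fun k =>
      (splits cs (r - k)).map fun l => c.push (c.size - k) false :: c.push k true :: l

end Cell

open Classical in
/-- The vertices in `C` form a cell `c` relative to the distinguished vertices `vs`. -/
structure Describes (G : SimpleGraph V) (vs C : List V) (c : Cell) : Prop where
  length_eq : C.length = c.size
  deg_eq : ∀ x ∈ C, deg G x = c.deg
  row_eq : ∀ x ∈ C, vs.map (fun v => decide (G.Adj v x)) = c.row

namespace Describes

variable {G : SimpleGraph V} {vs : List V}

open Classical in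
theorem push {C : List V} {c : Cell} (h : Describes G vs C c) {x : V} {D : List V} (hD : D ⊆ C)
    {b : Bool} (hb : ∀ y ∈ D, decide (G.Adj x y) = b) {n : ℕ} (hn : D.length = n) :
    Describes G (x :: vs) D (c.push n b) where
  length_eq := hn
  deg_eq y hy := h.deg_eq y (hD hy)
  row_eq y hy := by rw [List.map_cons, hb y hy, h.row_eq y (hD hy), Cell.push]

theorem tail {C : List V} {c : Cell} {x : V} (h : Describes G vs (x :: C) c) :
    Describes G vs C ⟨c.size - 1, c.deg, c.row⟩ where
  length_eq := Nat.eq_sub_of_add_eq h.length_eq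
  deg_eq y hy := h.deg_eq y (List.mem_cons_of_mem _ hy)
  row_eq y hy := h.row_eq y (List.mem_cons_of_mem _ hy)

open Classical in
theorem forget [Finite V] {C : List V} {c : Cell} (h : Describes G vs C c) (hvs : vs.Nodup) {i : ℕ}
    (hi : i < vs.length) (hC : vs[i] ∉ C) :
    Describes (G.deleteIncidenceSet vs[i]) (vs.eraseIdx i) C (c.forget i) where
  length_eq := h.length_eq
  deg_eq x hx := by
    rw [deg_deleteIncidenceSet (ne_of_mem_of_not_mem hx hC), h.deg_eq x hx, Cell.forget,
      ← h.row_eq x hx]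
    simp [List.getD_eq_getElem?_getD, hi]
  row_eq x hx := by
    rw [Cell.forget, ← h.row_eq x hx, List.eraseIdx_map]
    refine List.map_congr_left fun v hv => decide_eq_decide.2 ?_
    have hne : v ≠ vs[i] := by
      rintro rfl
      rw [← hvs.erase_getElem i hi] at hv
      exact hvs.not_mem_erase hv
    simp [SimpleGraph.deleteIncidenceSet_adj, hne, ne_of_mem_of_not_mem hx hC]

theorem forall₂_forget [Finite V] {Cs : List (List V)} {cs : List Cell} (hvs : vs.Nodup) {i : ℕ}
    (hi : i < vs.length) (hCs : ∀ C ∈ Cs, vs[i] ∉ C) (h : List.Forall₂ (Describes G vs) Cs cs) :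
    List.Forall₂ (Describes (G.deleteIncidenceSet vs[i]) (vs.eraseIdx i)) Cs
      (cs.map (Cell.forget i)) := by
  rw [List.forall₂_map_right_iff]
  exact ((List.forall₂_and_left _ _).2 ⟨hCs, h⟩).imp fun _ _ h => h.2.forget hvs hi h.1

theorem sum_map_size_mul {Cs : List (List V)} {cs : List Cell}
    (h : List.Forall₂ (Describes G vs) Cs cs) (g : ℕ → ℕ) :
    (cs.map fun c => c.size * g c.deg).sum =
      (Cs.flatten.map fun x => g (deg G x)).sum := by
  induction h with
  | nil => rfl
  | @cons C c _ _ h _ ih =>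
    have hC : C.map (fun x => g (deg G x)) = List.replicate c.size (g c.deg) := by
      rw [List.eq_replicate_iff, List.length_map, h.length_eq]
      exact ⟨rfl, by simpa using fun x hx => congrArg g (h.deg_eq x hx)⟩
    rw [List.map_cons, List.sum_cons, List.flatten_cons, List.map_append, List.sum_append, ih, hC,
      List.sum_replicate, smul_eq_mul]

open Classical in
theorem forall₂_zipWith_push {ws : List V} {cs : List Cell} (x : V)
    (h : List.Forall₂ (Describes G vs) (ws.map ([·])) cs) :
    List.Forall₂ (Describes G (x :: vs)) (ws.map ([·]))
      (List.zipWith (fun c b => c.push 1 b) cs (ws.map fun v => decide (G.Adj v x))) := by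
  induction ws generalizing cs with
  | nil => cases h; exact .nil
  | cons w ws ih =>
    obtain _ | ⟨hw, h⟩ := h
    exact .cons (hw.push (List.Subset.refl _)
      (fun y hy => by rw [List.mem_singleton.1 hy, G.adj_comm]) rfl) (ih h)

theorem forall₂_filter {Cs : List (List V)} {cs : List Cell}
    (h : List.Forall₂ (Describes G vs) Cs cs) :
    List.Forall₂ (Describes G vs) (Cs.filter (!·.isEmpty)) (cs.filter (·.size != 0)) := by
  refine List.rel_filter (fun C c hc => ?_) h
  simp [← hc.length_eq]

open Classical in
theorem row_count_lt_deg [Finite V] {C : List V} {c : Cell} (h : Describes G vs C c) {x y : V}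
    (hvs : (x :: vs).Nodup) (hy : y ∈ C) (hxy : G.Adj x y) : c.row.count true < c.deg := by
  have := countP_le_deg (G := G) (x := y) hvs
  rw [List.countP_cons_of_pos (by simpa using hxy.symm), h.deg_eq y hy] at this
  rw [← h.row_eq y hy, List.count_eq_countP, List.countP_map]
  refine Nat.lt_of_succ_le (le_trans (Nat.succ_le_succ (Eq.le ?_)) this)
  exact List.countP_congr fun v _ => by simp [G.adj_comm]

open Classical in
theorem exists_mem_splits [Finite V] {x : V} (hvs : (x :: vs).Nodup) {Cs : List (List V)}
    {cs : List Cell} (h : List.Forall₂ (Describes G vs) Cs cs) :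
    ∃ l ∈ Cell.splits cs (Cs.flatten.countP (G.Adj x)), List.Forall₂ (Describes G (x :: vs))
      (Cs.flatMap fun C => [C.filter (¬ G.Adj x ·), C.filter (G.Adj x ·)]) l := by
  induction h with
  | nil => exact ⟨[], by simp [Cell.splits], .nil⟩
  | @cons C c Cs cs h _ ih =>
    obtain ⟨l, hl, hdesc⟩ := ih
    have hk : C.countP (G.Adj x) ≤ if c.row.count true < c.deg then c.size else 0 := by
      split_ifs with hlt
      · exact h.length_eq ▸ List.countP_le_length
      · exact (List.countP_eq_zero.2 fun y hy hxy =>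
          hlt (h.row_count_lt_deg hvs hy (of_decide_eq_true hxy))).le
    have hcompl : (C.filter (¬ G.Adj x ·)).length = c.size - C.countP (G.Adj x) := by
      have := List.length_eq_countP_add_countP (l := C) (G.Adj x ·)
      simp only [decide_eq_true_eq, List.countP_eq_length_filter, h.length_eq] at this ⊢
      omega
    refine ⟨c.push (c.size - C.countP (G.Adj x)) false :: c.push (C.countP (G.Adj x)) true :: l,
      ?_, .cons ?_ (.cons ?_ hdesc)⟩
    · simp only [Cell.splits, List.flatten_cons, List.countP_append, List.mem_flatMap,
        List.mem_range, List.mem_map]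
      exact ⟨_, Nat.lt_succ_of_le (le_min hk (Nat.le_add_right _ _)), l,
        by rwa [Nat.add_sub_cancel_left], rfl⟩
    · exact h.push (List.filter_sublist.subset) (by simp) hcompl
    · exact h.push (List.filter_sublist.subset) (by simp) List.countP_eq_length_filter.symm

end Describes

/-! ### The enumeration -/

theorem flatten_flatMap_filter_perm (p : V → Prop) [DecidablePred p] (Cs : List (List V)) :
    (Cs.flatMap fun C => [C.filter (¬ p ·), C.filter (p ·)]).flatten.Perm Cs.flatten := by
  induction Cs with
  | nil => rfl
  | cons C Cs ih =>
    have hC : (C.filter (¬ p ·) ++ C.filter (p ·)).Perm C :=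
      List.perm_append_comm.trans (by simpa using List.filter_append_perm (p ·) C)
    simpa using (hC.append ih)

/-- What is known about a graph in the course of the enumeration of all graphs with given degrees:
the distinguished vertices so far form the cells `exposed` of size one, and the other vertices
form the cells `hidden`. -/
structure State where
  exposed : List Cell
  hidden : List Cell

namespace State

variable {G : SimpleGraph V}

/-- The state in which `a`, `b` and `c` vertices have degrees `5`, `4` and `3`, and no vertex is
distinguished. -/
def root (a b c : ℕ) : State :=
  ⟨[], [⟨a, 5, []⟩, ⟨b, 4, []⟩, ⟨c, 3, []⟩].filter (·.size != 0)⟩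

/-- The states obtained by distinguishing one vertex of the first hidden cell `c`, one for each
choice of its neighbours in the hidden cells. -/
def children (ex : List Cell) (c : Cell) (cs : List Cell) : List State :=
  (Cell.splits (⟨c.size - 1, c.deg, c.row⟩ :: cs) (c.deg - c.row.count true)).map fun l =>
    ⟨c.push 1 false :: ex.zipWith (fun a b => a.push 1 b) c.row, l.filter (·.size != 0)⟩

/-- Every graph that realizes the state `s` also realizes a descendant of `s`, of depth less than
`n`, that passes `test`. -/
def search (test : State → Bool) : ℕ → State → Bool
  | 0, _ => false
  | n + 1, s => test s || match s.hidden with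
    | [] => false
    | c :: cs => (children s.exposed c cs).all (search test n)

/-- The state after deletion of the distinguished vertex with index `i`. -/
def delete (i : ℕ) (s : State) : State :=
  ⟨(s.exposed.eraseIdx i).map (Cell.forget i), s.hidden.map (Cell.forget i)⟩

/-- The sum of the values of `g` at all vertex degrees. -/
def total (g : ℕ → ℕ) (s : State) : ℕ :=
  ((s.exposed ++ s.hidden).map fun c => c.size * g c.deg).sum

/-- The vertices `vs`, in this order, and the classes `Cs` of further vertices of `G` are as the
state `s` describes them. -/
structure Realizes (G : SimpleGraph V) (s : State) (vs : List V) (Cs : List (List V)) :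
    Prop where
  nodup : (vs ++ Cs.flatten).Nodup
  mem_of_mem_support : ∀ x ∈ G.support, x ∈ vs ++ Cs.flatten
  ne_nil : ∀ C ∈ Cs, C ≠ []
  exposed : List.Forall₂ (Describes G vs) (vs.map ([·])) s.exposed
  hidden : List.Forall₂ (Describes G vs) Cs s.hidden

namespace Realizes

variable {s : State} {vs : List V} {Cs : List (List V)}

theorem length_exposed (h : Realizes G s vs Cs) : s.exposed.length = vs.length := by
  rw [← h.exposed.length_eq, List.length_map]

theorem total_eq [Fintype V] (h : Realizes G s vs Cs) {g : ℕ → ℕ} (hg : g 0 = 0) :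
    s.total g = ∑ x, g (deg G x) := by
  classical
  have hflatten : (vs.map ([·]) ++ Cs).flatten = vs ++ Cs.flatten := by
    rw [List.flatten_append, ← List.flatMap_def, List.flatMap_singleton']
  rw [total, Describes.sum_map_size_mul (List.rel_append h.exposed h.hidden), hflatten,
    ← List.sum_toFinset _ h.nodup]
  refine Finset.sum_subset (Finset.subset_univ _) fun x _ hx => ?_
  have hdeg : deg G x = 0 := by
    by_contra h₀
    exact hx (List.mem_toFinset.2 (h.mem_of_mem_support x (mem_support_iff_deg_ne_zero.2 h₀)))
  rw [hdeg, hg]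

theorem delete [Finite V] (h : Realizes G s vs Cs) {i : ℕ} (hi : i < vs.length) :
    Realizes (G.deleteIncidenceSet vs[i]) (s.delete i) (vs.eraseIdx i) Cs := by
  classical
  have hvs : vs.Nodup := h.nodup.of_append_left
  have herase : vs.eraseIdx i = vs.erase vs[i] := (hvs.erase_getElem i hi).symm
  refine ⟨h.nodup.sublist ((List.eraseIdx_sublist _ _).append_right _), ?_, h.ne_nil, ?_, ?_⟩
  · rintro x ⟨y, hxy⟩
    obtain ⟨hadj, hne, -⟩ := SimpleGraph.deleteIncidenceSet_adj.1 hxy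
    rw [List.mem_append, herase, List.mem_erase_of_ne hne, ← List.mem_append]
    exact h.mem_of_mem_support x ⟨y, hadj⟩
  · refine Describes.forall₂_forget hvs hi (fun C hC => ?_) ?_
    · obtain ⟨v, hv, rfl⟩ := List.mem_map.1 hC
      intro hmem
      rw [List.mem_singleton.1 hmem] at herase
      rw [herase] at hv
      exact hvs.not_mem_erase hv
    · rw [← List.eraseIdx_map, List.eraseIdx_eq_take_drop_succ, List.eraseIdx_eq_take_drop_succ]
      exact List.rel_append (List.forall₂_take _ h.exposed) (List.forall₂_drop _ h.exposed)
  · refine Describes.forall₂_forget hvs hi (fun C hC hmem => ?_) h.hidden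
    exact List.disjoint_of_nodup_append h.nodup (List.getElem_mem hi)
      (List.mem_flatten.2 ⟨C, hC, hmem⟩)

open Classical in
theorem deg_sub_count_eq {x : V} {C : List V} {Cs : List (List V)} {vs : List V} {s : State}
    {c : Cell} (h : Realizes G s vs ((x :: C) :: Cs)) (hc : Describes G vs (x :: C) c) :
    c.deg - c.row.count true = (C :: Cs).flatten.countP (G.Adj x) := by
  have hrow : c.row.count true = vs.countP (G.Adj x) := by
    rw [← hc.row_eq x List.mem_cons_self, List.count_eq_countP, List.countP_map]
    exact List.countP_congr fun v _ => by simp [G.adj_comm]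
  have hdeg := deg_eq_countP h.nodup fun y hy => h.mem_of_mem_support y ⟨x, hy.symm⟩
  rw [hc.deg_eq x List.mem_cons_self, List.countP_append, List.flatten_cons, List.cons_append,
    List.countP_cons_of_neg (by simp)] at hdeg
  rw [hrow, hdeg, Nat.add_sub_cancel_left, List.flatten_cons]

theorem exists_mem_children [Finite V] {ex cs : List Cell} {c : Cell} {vs : List V}
    {Cs : List (List V)} (h : Realizes G ⟨ex, c :: cs⟩ vs Cs) :
    ∃ s ∈ children ex c cs, ∃ vs Cs, Realizes G s vs Cs := by
  classical
  obtain ⟨C, Cs, hC, hCs, rfl⟩ := List.forall₂_cons_right_iff.1 h.hidden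
  obtain ⟨x, C, rfl⟩ := List.exists_cons_of_ne_nil (h.ne_nil C List.mem_cons_self)
  set Ds := ((C :: Cs).flatMap fun C => [C.filter (¬ G.Adj x ·), C.filter (G.Adj x ·)]).filter
    (!·.isEmpty) with hDs
  have hperm : ((x :: vs) ++ Ds.flatten).Perm (vs ++ ((x :: C) :: Cs).flatten) := by
    rw [hDs, List.flatten_filter_not_isEmpty, List.cons_append]
    exact (((flatten_flatMap_filter_perm _ _).append_left vs).cons x).trans
      List.perm_middle.symm
  have hnodup : ((x :: vs) ++ Ds.flatten).Nodup := hperm.nodup_iff.2 h.nodup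
  obtain ⟨l, hl, hdesc⟩ := Describes.exists_mem_splits hnodup.of_append_left
    (.cons hC.tail hCs)
  rw [← h.deg_sub_count_eq hC] at hl
  refine ⟨_, List.mem_map_of_mem hl, x :: vs, Ds, hnodup,
    fun y hy => hperm.mem_iff.2 (h.mem_of_mem_support y hy), ?_, ?_,
    Describes.forall₂_filter hdesc⟩
  · simp [hDs]
  · refine .cons (hC.push (by simp) (by simp) rfl) ?_
    rw [← hC.row_eq x List.mem_cons_self]
    exact Describes.forall₂_zipWith_push x h.exposed

theorem of_search [Finite V] {test : State → Bool} {P : Prop}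
    (htest : ∀ s vs Cs, Realizes G s vs Cs → test s = true → P) {n : ℕ} {s : State} {vs : List V}
    {Cs : List (List V)} (h : Realizes G s vs Cs) (hs : search test n s = true) : P := by
  induction n generalizing s vs Cs with
  | zero => cases hs
  | succ n ih =>
    obtain ⟨ex, _ | ⟨c, cs⟩⟩ := s
    · exact htest _ _ _ h (by simpa [search] using hs)
    · rw [search, Bool.or_eq_true, List.all_eq_true] at hs
      rcases hs with hs | hs
      · exact htest _ _ _ h hs
      · obtain ⟨s', hs', vs', Cs', h'⟩ := h.exists_mem_children
        exact ih h' (hs s' hs')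

end Realizes

end State

/-! ### Weight and the induction -/

section Weight

variable [Fintype V] {G : SimpleGraph V}

/-- The sum of the vertex degrees that are at least `3`; only these vertices survive smoothing. -/
noncomputable def weight (G : SimpleGraph V) : ℕ := ∑ x, if 3 ≤ deg G x then deg G x else 0

theorem weight_le_sum_deg (G : SimpleGraph V) : weight G ≤ ∑ x, deg G x :=
  Finset.sum_le_sum fun x _ => by split_ifs <;> omega

theorem weight_le_weight {G' : SimpleGraph V} (h : ∀ x, deg G' x ≤ deg G x) :
    weight G' ≤ weight G := by
  refine Finset.sum_le_sum fun x _ => ?_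
  have := h x
  split_ifs <;> omega

theorem sum_deg_eq_two_mul_ncard_edgeSet (G : SimpleGraph V) :
    ∑ x, deg G x = 2 * G.edgeSet.ncard := by
  classical
  rw [← SimpleGraph.coe_edgeFinset, Set.ncard_coe_finset, ← G.sum_degrees_eq_twice_card_edges]
  exact Finset.sum_congr rfl fun x _ => Set.ncard_eq_toFinset_card' _

theorem mul_card_filter_le_weight (G : SimpleGraph V) {d : ℕ} (hd : 3 ≤ d) :
    d * (Finset.univ.filter fun x => d ≤ deg G x).card ≤ weight G := by
  rw [mul_comm, Finset.card_filter, Finset.sum_mul]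
  refine Finset.sum_le_sum fun x _ => ?_
  split_ifs <;> omega

theorem isPlanar_of_weight_le (h : weight G ≤ 16) : G.IsPlanar := by
  have h₃ := mul_card_filter_le_weight G (d := 3) le_rfl
  have h₄ := mul_card_filter_le_weight G (d := 4) (by omega)
  exact isPlanar_of_card_deg_le (by omega) (by omega)

theorem weight_deleteIncidenceSet_le (hG : ∀ x, deg G x = 0 ∨ 3 ≤ deg G x) {v : V}
    (hv : 3 ≤ deg G v) : weight (G.deleteIncidenceSet v) + 2 * deg G v ≤ weight G := by
  classical
  have hadj : ∑ x, (if G.Adj v x then 1 else 0) = deg G v := by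
    rw [← Finset.card_filter, deg, Set.ncard_eq_toFinset_card']
    congr 1
    ext x
    simp
  have hself : ∑ x, (if x = v then deg G v else 0) = deg G v := by simp
  calc weight (G.deleteIncidenceSet v) + 2 * deg G v
      = ∑ x, ((if 3 ≤ deg (G.deleteIncidenceSet v) x then deg (G.deleteIncidenceSet v) x else 0) +
          ((if G.Adj v x then 1 else 0) + if x = v then deg G v else 0)) := by
        rw [Finset.sum_add_distrib, Finset.sum_add_distrib, hadj, hself, two_mul, weight]
    _ ≤ weight G := Finset.sum_le_sum fun x _ => ?_
  obtain rfl | hx := eq_or_ne x v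
  · simp [deg_deleteIncidenceSet_self, hv]
  · rw [deg_deleteIncidenceSet hx, if_neg hx]
    by_cases h : G.Adj v x
    · have := (hG x).resolve_left fun h₀ => deg_eq_zero_iff.1 h₀ v h.symm
      simp only [h, decide_true, Bool.toNat_true, if_true, if_pos this]
      split_ifs <;> omega
    · simp [h]

end Weight

namespace State

/-- A sufficient condition for planarity of the graphs that realize the state. -/
def checkPlanar (s : State) : Bool :=
  s.total (fun d => if 3 ≤ d then 1 else 0) ≤ 5 && s.total (fun d => if 4 ≤ d then 1 else 0) ≤ 4 ||
    s.hidden.isEmpty && (EdgeList.ofRows (s.exposed.map Cell.row)).checkPlanar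

/-- A sufficient condition for `IsApex k`, provided that for `j ≤ k` every graph of weight at most
`16 + 12 * j` satisfies `IsApex j`. -/
def checkApex : ℕ → State → Bool
  | 0, s => s.checkPlanar
  | k + 1, s => s.total (fun d => if 3 ≤ d then d else 0) ≤ 16 + 12 * (k + 1) ||
      (List.range s.exposed.length).any fun i => checkApex k (s.delete i)

/-- Deletion of some distinguished vertex leaves a state that passes `checkApex k`. Only the vertex
distinguished last is tried as long as there are hidden vertices. -/
def checkDelete (k : ℕ) (s : State) : Bool :=
  ((List.range s.exposed.length).take (if s.hidden.isEmpty then s.exposed.length else 1)).any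
    fun i => checkApex k (s.delete i)

/-- The search succeeds for all degree sequences with entries `3`, `4` and `5` and with sum from
`17` to `16 + 12 * (k + 1)`. -/
def checkRoots (k : ℕ) : Bool :=
  let m := 16 + 12 * (k + 1)
  (List.range (m / 5 + 1)).all fun a => (List.range ((m - 5 * a) / 4 + 1)).all fun b =>
    (List.range ((m - 5 * a - 4 * b) / 3 + 1)).all fun c =>
      5 * a + 4 * b + 3 * c ≤ 16 || search (checkDelete k) (a + b + c + 1) (root a b c)

theorem checkRoots_zero : checkRoots 0 = true := by decide +kernel

theorem checkRoots_one : checkRoots 1 = true := by decide +kernel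

theorem search_of_checkRoots {k a b c : ℕ} (h : checkRoots k = true)
    (hlt : 16 < 5 * a + 4 * b + 3 * c) (hle : 5 * a + 4 * b + 3 * c ≤ 16 + 12 * (k + 1)) :
    search (checkDelete k) (a + b + c + 1) (root a b c) = true := by
  simp only [checkRoots, List.all_eq_true, List.mem_range, Bool.or_eq_true, decide_eq_true_eq] at h
  exact (h a (by omega) b (by omega) c (by omega)).resolve_left hlt.not_ge

theorem total_root (a b c : ℕ) (g : ℕ → ℕ) :
    (root a b c).total g = a * g 5 + b * g 4 + c * g 3 := by
  obtain rfl | ha := eq_or_ne a 0 <;> obtain rfl | hb := eq_or_ne b 0 <;>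
    obtain rfl | hc := eq_or_ne c 0 <;> simp [root, total, add_assoc, *]

namespace Realizes

variable {G : SimpleGraph V} {s : State} {vs : List V} {Cs : List (List V)}

theorem isPlanar_ofRows (h : Realizes G s vs [])
    (hs : (EdgeList.ofRows (s.exposed.map Cell.row)).graph.IsPlanar) : G.IsPlanar := by
  refine EdgeList.isPlanar_of_ofRows (vs := vs)
    (fun x hx => by simpa using h.mem_of_mem_support x hx) (fun i j hi hj hadj => ?_) hs
  have hj' : j < s.exposed.length := h.length_exposed ▸ hj
  have hdesc := (List.forall₂_iff_get.1 h.exposed).2 j (by simpa using hj) hj'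
  refine ⟨_, by rw [List.getElem?_map, List.getElem?_eq_getElem hj']; rfl, ?_⟩
  have hrow := hdesc.row_eq vs[j] (by simp)
  rw [List.get_eq_getElem] at hrow
  rw [← hrow]
  simp [hi, hadj]

theorem isPlanar_of_checkPlanar [Finite V] (h : Realizes G s vs Cs)
    (hs : s.checkPlanar = true) : G.IsPlanar := by
  have := Fintype.ofFinite V
  simp only [checkPlanar, Bool.or_eq_true, Bool.and_eq_true, decide_eq_true_eq] at hs
  rcases hs with ⟨h₃, h₄⟩ | ⟨hnil, hrows⟩
  · rw [h.total_eq (by simp), ← Finset.card_filter] at h₃ h₄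
    exact isPlanar_of_card_deg_le h₃ h₄
  · have hCs := h.hidden
    rw [List.isEmpty_iff.1 hnil, List.forall₂_nil_right_iff] at hCs
    subst hCs
    exact h.isPlanar_ofRows (EdgeList.isPlanar_of_checkPlanar hrows)

theorem isApex_of_checkApex [Fintype V] {k : ℕ}
    (hP : ∀ j ≤ k, ∀ G : SimpleGraph V, weight G ≤ 16 + 12 * j → IsApex j G)
    (h : Realizes G s vs Cs) (hs : s.checkApex k = true) : IsApex k G := by
  induction k generalizing G s vs with
  | zero => exact .planar (h.isPlanar_of_checkPlanar hs)
  | succ k ih =>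
    simp only [checkApex, Bool.or_eq_true, decide_eq_true_eq, List.any_eq_true,
      List.mem_range] at hs
    rcases hs with hs | ⟨i, hi, hs⟩
    · rw [h.total_eq (by simp)] at hs
      exact hP _ le_rfl G hs
    · exact .delete _ (ih (fun j hj => hP j (Nat.le_succ_of_le hj))
        (h.delete (h.length_exposed ▸ hi)) hs)

theorem isApex_succ_of_checkDelete [Fintype V] {k : ℕ}
    (hP : ∀ j ≤ k, ∀ G : SimpleGraph V, weight G ≤ 16 + 12 * j → IsApex j G)
    (h : Realizes G s vs Cs) (hs : s.checkDelete k = true) : IsApex (k + 1) G := by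
  obtain ⟨i, hi, hs⟩ := List.any_eq_true.1 hs
  have hi' := List.mem_range.1 (List.mem_of_mem_take hi)
  exact .delete _ ((h.delete (h.length_exposed ▸ hi')).isApex_of_checkApex hP hs)

end Realizes

theorem exists_realizes_root [Finite V] {G : SimpleGraph V}
    (hG : ∀ x, deg G x = 0 ∨ 3 ≤ deg G x) (hG₅ : ∀ x, deg G x ≤ 5) :
    ∃ a b c, ∃ vs Cs, Realizes G (root a b c) vs Cs := by
  classical
  have := Fintype.ofFinite V
  let L (d : ℕ) : List V := (Finset.univ.filter fun x => deg G x = d).toList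
  have mem_L {d : ℕ} {x : V} : x ∈ L d ↔ deg G x = d := by simp [L]
  have nodup_L (d : ℕ) : (L d).Nodup := Finset.nodup_toList _
  have disjoint_L {d e : ℕ} (h : d ≠ e) : (L d).Disjoint (L e) := fun x hd he =>
    h ((mem_L.1 hd).symm.trans (mem_L.1 he))
  have describes_L (d : ℕ) : Describes G [] (L d) ⟨(L d).length, d, []⟩ :=
    ⟨rfl, fun _ => mem_L.1, fun _ _ => rfl⟩
  have hflatten : ([L 5, L 4, L 3].filter (!·.isEmpty)).flatten = L 5 ++ L 4 ++ L 3 := by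
    simp [List.flatten_filter_not_isEmpty]
  refine ⟨(L 5).length, (L 4).length, (L 3).length, [], [L 5, L 4, L 3].filter (!·.isEmpty),
    ?_, fun x hx => ?_, by simp, .nil, Describes.forall₂_filter
      (.cons (describes_L 5) (.cons (describes_L 4) (.cons (describes_L 3) .nil)))⟩
  · rw [List.nil_append, hflatten]
    exact ((nodup_L 5).append (nodup_L 4) (disjoint_L (by decide))).append (nodup_L 3)
      (List.disjoint_append_left.2 ⟨disjoint_L (by decide), disjoint_L (by decide)⟩)
  · rw [List.nil_append, hflatten, List.mem_append, List.mem_append, mem_L, mem_L, mem_L]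
    have := (hG x).resolve_left (mem_support_iff_deg_ne_zero.1 hx)
    have := hG₅ x
    omega

end State

variable [Fintype V]

theorem isApex_succ_of_deg_le {G : SimpleGraph V} {k : ℕ} (hroots : State.checkRoots k = true)
    (hP : ∀ j ≤ k, ∀ G : SimpleGraph V, weight G ≤ 16 + 12 * j → IsApex j G)
    (hG : ∀ x, deg G x = 0 ∨ 3 ≤ deg G x) (hG₅ : ∀ x, deg G x ≤ 5)
    (hw : weight G ≤ 16 + 12 * (k + 1)) : IsApex (k + 1) G := by
  by_cases hw₁₆ : weight G ≤ 16
  · exact .planar (isPlanar_of_weight_le hw₁₆)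
  obtain ⟨a, b, c, vs, Cs, h⟩ := State.exists_realizes_root hG hG₅
  have hweight : a * 5 + b * 4 + c * 3 = weight G :=
    (State.total_root a b c fun d => if 3 ≤ d then d else 0).symm.trans (h.total_eq (by simp))
  exact h.of_search (fun _ _ _ h hs => h.isApex_succ_of_checkDelete hP hs)
    (State.search_of_checkRoots hroots (by omega) (by omega))

theorem isApex_of_weight_le {k : ℕ} (hroots : ∀ j < k, State.checkRoots j = true)
    (G : SimpleGraph V) (hw : weight G ≤ 16 + 12 * k) : IsApex k G := by
  induction k using Nat.strong_induction_on generalizing G with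
  | _ k ih =>
    obtain _ | k := k
    · exact .planar (isPlanar_of_weight_le hw)
    have hP : ∀ j ≤ k, ∀ G : SimpleGraph V, weight G ≤ 16 + 12 * j → IsApex j G := fun j hj =>
      ih j (Nat.lt_succ_of_le hj) fun i hi => hroots i (by omega)
    obtain ⟨G', hle, hdeg, happ⟩ := exists_smoothed G
    have hw' : weight G' ≤ 16 + 12 * (k + 1) := (weight_le_weight hle).trans hw
    refine happ _ ?_
    by_cases h : ∃ v, 6 ≤ deg G' v
    · obtain ⟨v, hv⟩ := h
      have := weight_deleteIncidenceSet_le hdeg (v := v) (by omega)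
      exact .delete v (hP k le_rfl _ (by omega))
    · push Not at h
      exact isApex_succ_of_deg_le (hroots k (Nat.lt_succ_self k)) hP hdeg
        (fun x => Nat.le_of_lt_succ (h x)) hw'

theorem isApex_two_of_weight_le (G : SimpleGraph V) (hw : weight G ≤ 40) : IsApex 2 G := by
  refine isApex_of_weight_le (fun j hj => ?_) G hw
  interval_cases j
  exacts [State.checkRoots_zero, State.checkRoots_one]

end SmallApex

theorem stmt5_general {V : Type*} [Finite V] (G : SimpleGraph V) (hE : G.edgeSet.ncard ≤ 20) :
    G.TwoApex := by
  have := Fintype.ofFinite V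
  refine (SmallApex.isApex_two_of_weight_le G ?_).twoApex
  have := SmallApex.sum_deg_eq_two_mul_ncard_edgeSet G
  have := SmallApex.weight_le_sum_deg G
  omega

/-- Every finite simple graph with exactly 12 vertices and at most 20 edges is 2-apex. -/
theorem stmt5 {V : Type*} [Fintype V] (G : SimpleGraph V)
    (hV : Fintype.card V = 12) (hE : G.edgeSet.ncard ≤ 20) : G.TwoApex :=
  stmt5_general G hE
end
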